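/- Let k be a field of characteristic zero, and let B' = ⟨B ∪ H⟩ be the subgroup of the group of k-algebra automorphisms of k[x1,x2,x3] generated by B and H. Then B' satisfies the strong Tits alternative: every subgroup of B' either contains a nonabelian free subgroup or contains a solvable subgroup of finite index. -/

import Mathlib

open MvPolynomial

/-- A group contains a nonabelian free subgroup if it has a subgroup isomorphic to the
free group on two generators. -/
def ContainsNonabelianFree (G : Type*) [Group G] : Prop :=
  ∃ K : Subgroup G, Nonempty (↥K ≃* FreeGroup (Fin 2))

/-- A group is virtually solvable if it contains a solvable subgroup of finite index. -/
def IsVirtuallySolvable (G : Type*) [Group G] : Prop :=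
  ∃ K : Subgroup G, K.FiniteIndex ∧ IsSolvable ↥K

/-- A group satisfies the strong Tits alternative if every subgroup contains a nonabelian
free subgroup or is virtually solvable. -/
def StrongTitsAlternative (G : Type*) [Group G] : Prop :=
  ∀ H : Subgroup G, ContainsNonabelianFree ↥H ∨ IsVirtuallySolvable ↥H

/-- Membership in the subgroup `B`: automorphisms of the form
`(a x₁ + P(x₂,x₃), b x₂ + c x₃ + d, b' x₂ + c' x₃ + d')` with `a ≠ 0`, `bc' - b'c ≠ 0`. -/
def IsB (k : Type*) [Field k]
    (f : MvPolynomial (Fin 3) k ≃ₐ[k] MvPolynomial (Fin 3) k) : Prop :=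
  ∃ (a b c d b' c' d' : k) (P : MvPolynomial (Fin 3) k),
    a ≠ 0 ∧ b * c' - b' * c ≠ 0 ∧ P ∈ supported k ({1, 2} : Set (Fin 3)) ∧
    f (X 0) = C a * X 0 + P ∧
    f (X 1) = C b * X 1 + C c * X 2 + C d ∧
    f (X 2) = C b' * X 1 + C c' * X 2 + C d'

/-- Membership in the subgroup `H`: automorphisms of the form
`(a x₁ + P₁(x₂,x₃), b x₂ + P₂(x₃), c x₃ + d)` with `a, b, c ≠ 0`. -/
def IsH (k : Type*) [Field k]
    (f : MvPolynomial (Fin 3) k ≃ₐ[k] MvPolynomial (Fin 3) k) : Prop :=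
  ∃ (a b c d : k) (P₁ P₂ : MvPolynomial (Fin 3) k),
    a ≠ 0 ∧ b ≠ 0 ∧ c ≠ 0 ∧
    P₁ ∈ supported k ({1, 2} : Set (Fin 3)) ∧ P₂ ∈ supported k ({2} : Set (Fin 3)) ∧
    f (X 0) = C a * X 0 + P₁ ∧
    f (X 1) = C b * X 1 + P₂ ∧
    f (X 2) = C c * X 2 + C d

/-- The subgroup `B' = ⟨B ∪ H⟩`. -/
noncomputable def Bprime (k : Type*) [Field k] :
    Subgroup (MvPolynomial (Fin 3) k ≃ₐ[k] MvPolynomial (Fin 3) k) :=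
  Subgroup.closure {f | IsB k f ∨ IsH k f}

theorem containsNonabelianFree_iff {G : Type*} [Group G] :
    ContainsNonabelianFree G ↔ ∃ f : FreeGroup (Fin 2) →* G, Function.Injective f := by
  constructor
  · rintro ⟨K, ⟨e⟩⟩
    exact ⟨K.subtype.comp e.symm.toMonoidHom, K.subtype_injective.comp e.symm.injective⟩
  · rintro ⟨f, hf⟩
    exact ⟨f.range, ⟨(MonoidHom.ofInjective hf).symm⟩⟩

theorem ContainsNonabelianFree.of_injective {G G' : Type*} [Group G] [Group G'] (f : G →* G')
    (hf : Function.Injective f) (h : ContainsNonabelianFree G) : ContainsNonabelianFree G' := by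
  obtain ⟨u, hu⟩ := containsNonabelianFree_iff.1 h
  exact containsNonabelianFree_iff.2 ⟨f.comp u, hf.comp hu⟩

theorem ContainsNonabelianFree.of_surjective {G Q : Type*} [Group G] [Group Q] (f : G →* Q)
    (hf : Function.Surjective f) (h : ContainsNonabelianFree Q) : ContainsNonabelianFree G := by
  obtain ⟨u, hu⟩ := containsNonabelianFree_iff.1 h
  choose s hs using hf
  refine containsNonabelianFree_iff.2 ⟨FreeGroup.lift fun i => s (u (FreeGroup.of i)), ?_⟩
  have : f.comp (FreeGroup.lift fun i => s (u (FreeGroup.of i))) = u := by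
    ext i
    simp [hs]
  have h2 : Function.Injective (f ∘ (FreeGroup.lift fun i => s (u (FreeGroup.of i)))) := by
    rw [← MonoidHom.coe_comp, this]; exact hu
  exact h2.of_comp

theorem IsVirtuallySolvable.of_isSolvable {G : Type*} [Group G] (h : Group.IsSolvable G) :
    IsVirtuallySolvable G :=
  ⟨⊤, inferInstance, (inferInstance : Group.IsSolvable _)⟩

theorem IsVirtuallySolvable.of_finite {G : Type*} [Group G] [Finite G] :
    IsVirtuallySolvable G :=
  ⟨⊥, inferInstance, (inferInstance : Group.IsSolvable _)⟩

theorem IsVirtuallySolvable.of_surjective {G Q : Type*} [Group G] [Group Q] (f : G →* Q)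
    (hf : Function.Surjective f) (h : IsVirtuallySolvable G) : IsVirtuallySolvable Q := by
  obtain ⟨K, hK, hs⟩ := h
  have : Group.IsSolvable K := hs
  refine ⟨K.map f, ?_, ?_⟩
  · refine ⟨fun h0 => hK.index_ne_zero ?_⟩
    have := Subgroup.index_map_dvd K hf
    rw [h0] at this
    exact Nat.eq_zero_of_zero_dvd this
  · exact Group.isSolvable_of_surjective (f.subgroupMap_surjective K)

theorem IsVirtuallySolvable.of_isSolvable_ker {G Q : Type*} [Group G] [Group Q] (f : G →* Q)
    (hf : Group.IsSolvable f.ker) (h : IsVirtuallySolvable Q) : IsVirtuallySolvable G := by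
  obtain ⟨K, hK, hs⟩ := h
  have : Group.IsSolvable K := hs
  refine ⟨K.comap f, ⟨?_⟩, ?_⟩
  · rw [Subgroup.index_comap]
    exact fun h => hK.index_ne_zero (Subgroup.index_eq_zero_of_relIndex_eq_zero h)
  refine Group.isSolvable_of_ker_le_range (G' := f.ker) (G'' := K)
    ((f.ker.subtype).codRestrict (K.comap f) fun x => ?_) (f.subgroupComap K) ?_
  · have := x.2
    rw [MonoidHom.mem_ker] at this
    simp [Subgroup.mem_comap, this]
  · rintro ⟨x, hx⟩ h1
    have h1 : f x = 1 := congrArg Subtype.val (MonoidHom.mem_ker.1 h1)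
    exact ⟨⟨x, h1⟩, rfl⟩

theorem StrongTitsAlternative.of_isSolvable_ker {G Q : Type*} [Group G] [Group Q] (f : G →* Q)
    (hf : Group.IsSolvable f.ker) (h : StrongTitsAlternative Q) : StrongTitsAlternative G := by
  intro H
  rcases h (H.map f) with h | h
  · exact Or.inl (h.of_surjective (f.subgroupMap H) (f.subgroupMap_surjective H))
  · refine Or.inr (h.of_isSolvable_ker (f.subgroupMap H) ?_)
    have : ∀ x : (f.subgroupMap H).ker, (x : H).1 ∈ f.ker := fun x =>
      congrArg Subtype.val (MonoidHom.mem_ker.1 x.2)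
    refine Group.isSolvable_of_isSolvable_injective
      (f := ((H.subtype.comp (f.subgroupMap H).ker.subtype).codRestrict f.ker this)) ?_
    intro x y hxy
    exact Subtype.ext (Subtype.ext (congrArg (fun z : f.ker => (z : G)) hxy))

/-- The alternative passes to a quotient by a normal subgroup of exponent two. -/
theorem StrongTitsAlternative.of_surjective {G Q : Type*} [Group G] [Group Q] (f : G →* Q)
    (hf : Function.Surjective f) (hk : ∀ x ∈ f.ker, x ^ 2 = 1) (h : StrongTitsAlternative G) :
    StrongTitsAlternative Q := by
  intro H
  have hs : Function.Surjective (f.subgroupComap H) := by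
    rintro ⟨y, hy⟩
    obtain ⟨x, rfl⟩ := hf y
    exact ⟨⟨x, hy⟩, rfl⟩
  rcases h (H.comap f) with h | h
  · left
    obtain ⟨u, hu⟩ := containsNonabelianFree_iff.1 h
    refine containsNonabelianFree_iff.2 ⟨(f.subgroupComap H).comp u, ?_⟩
    rw [injective_iff_map_eq_one]
    intro w hw
    have h1 : (u w : G) ∈ f.ker := congrArg Subtype.val hw
    have h2 : u (w ^ 2) = 1 := by
      rw [map_pow]
      exact Subtype.ext (hk _ h1)
    have h3 : w ^ 2 = 1 := hu (h2.trans (map_one u).symm)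
    exact (pow_eq_one_iff_left two_ne_zero).1 h3
  · exact Or.inr (h.of_surjective _ hs)

theorem StrongTitsAlternative.of_injective {G Q : Type*} [Group G] [Group Q] (f : G →* Q)
    (hf : Function.Injective f) (h : StrongTitsAlternative Q) : StrongTitsAlternative G := by
  refine h.of_isSolvable_ker f ?_
  rw [(MonoidHom.ker_eq_bot_iff f).2 hf]
  infer_instance

/-- The derived series of a subgroup, as subgroups of the ambient group. -/
def derivedSub {G : Type*} [Group G] (H : Subgroup G) : ℕ → Subgroup G
  | 0 => H
  | n + 1 => ⁅derivedSub H n, derivedSub H n⁆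

section derivedSub

variable {G : Type*} [Group G]

theorem derivedSub_mono {H K : Subgroup G} (h : H ≤ K) (n : ℕ) :
    derivedSub H n ≤ derivedSub K n := by
  induction n with
  | zero => exact h
  | succ n ih => exact Subgroup.commutator_mono ih ih

theorem map_derivedSub {G' : Type*} [Group G'] (f : G →* G') (H : Subgroup G) (n : ℕ) :
    (derivedSub H n).map f = derivedSub (H.map f) n := by
  induction n with
  | zero => rfl
  | succ n ih => simp only [derivedSub, Subgroup.map_commutator, ih]

theorem derivedSub_add (H : Subgroup G) (m n : ℕ) :
    derivedSub H (m + n) = derivedSub (derivedSub H m) n := by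
  induction n with
  | zero => rfl
  | succ n ih => rw [← add_assoc]; simp only [derivedSub, ih]

theorem map_derivedSeries_subtype (H : Subgroup G) (n : ℕ) :
    (derivedSeries H n).map H.subtype = derivedSub H n := by
  induction n with
  | zero => simp [derivedSub, ← MonoidHom.range_eq_map]
  | succ n ih => simp only [derivedSub, derivedSeries_succ, Subgroup.map_commutator, ih]

theorem isSolvable_iff_derivedSub {H : Subgroup G} :
    Group.IsSolvable H ↔ ∃ n, derivedSub H n = ⊥ := by
  rw [Group.isSolvable_def]
  refine exists_congr fun n => ?_
  rw [← map_derivedSeries_subtype, Subgroup.map_eq_bot_iff_of_injective _ H.subtype_injective]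

theorem exists_finite_mem_derivedSub {H : Subgroup G} {n : ℕ} {x : G} (hx : x ∈ derivedSub H n) :
    ∃ S : Set G, S.Finite ∧ S ⊆ H ∧ x ∈ derivedSub (Subgroup.closure S) n := by
  induction n generalizing x with
  | zero =>
    exact ⟨{x}, Set.finite_singleton x, by simpa [derivedSub] using hx,
      Subgroup.subset_closure rfl⟩
  | succ n ih =>
    have mono : ∀ {S T : Set G}, S ⊆ T → ∀ m,
        derivedSub (Subgroup.closure S) m ≤ derivedSub (Subgroup.closure T) m :=
      fun h m => derivedSub_mono (Subgroup.closure_mono h) m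
    simp only [derivedSub] at hx
    rw [Subgroup.commutator_def] at hx
    induction hx using Subgroup.closure_induction with
    | mem x hx =>
      obtain ⟨a, ha, b, hb, rfl⟩ := hx
      obtain ⟨S, hS, hSH, haS⟩ := ih ha
      obtain ⟨T, hT, hTH, hbT⟩ := ih hb
      exact ⟨S ∪ T, hS.union hT, Set.union_subset hSH hTH, Subgroup.commutator_mem_commutator
        (mono Set.subset_union_left n haS) (mono Set.subset_union_right n hbT)⟩
    | one => exact ⟨∅, Set.finite_empty, Set.empty_subset _, one_mem _⟩
    | mul x y _ _ hx hy =>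
      obtain ⟨S, hS, hSH, haS⟩ := hx
      obtain ⟨T, hT, hTH, hbT⟩ := hy
      exact ⟨S ∪ T, hS.union hT, Set.union_subset hSH hTH, mul_mem
        (mono Set.subset_union_left _ haS) (mono Set.subset_union_right _ hbT)⟩
    | inv x _ hx =>
      obtain ⟨S, hS, hSH, haS⟩ := hx
      exact ⟨S, hS, hSH, inv_mem haS⟩

theorem derivedSub_eq_bot_of_finite {H : Subgroup G} {n : ℕ}
    (h : ∀ S : Set G, S.Finite → S ⊆ H → derivedSub (Subgroup.closure S) n = ⊥) :
    derivedSub H n = ⊥ := by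
  rw [eq_bot_iff]
  intro x hx
  obtain ⟨S, hS, hSH, hxS⟩ := exists_finite_mem_derivedSub hx
  rwa [h S hS hSH] at hxS

theorem isSolvable_of_commutator_le {H K : Subgroup G} (h : ⁅H, H⁆ ≤ K) (hK : Group.IsSolvable K) :
    Group.IsSolvable H := by
  obtain ⟨n, hn⟩ := isSolvable_iff_derivedSub.1 hK
  refine isSolvable_iff_derivedSub.2 ⟨1 + n, ?_⟩
  rw [derivedSub_add, eq_bot_iff, ← hn]
  exact derivedSub_mono h n

theorem isSolvable_of_le {H K : Subgroup G} (h : H ≤ K) (hK : Group.IsSolvable K) :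
    Group.IsSolvable H :=
  Group.isSolvable_of_isSolvable_injective (Subgroup.inclusion_injective h)

end derivedSub

section Pair

variable {G Ω : Type*} [Group G] [MulAction G Ω] {Γ : Subgroup G} {r : Ω → Ω → Prop}

theorem fixes_of_moves_pair (hsymm : ∀ {x y}, r x y → r y x)
    (htrans : ∀ {x y z}, r x y → r y z → r x z)
    (hinv : ∀ (h : G) {x y}, r x y → r (h • x) (h • y))
    {p q : Ω} {g : G} (hg : g ∈ Γ) (hgp : r (g • p) p) (hgq : r (g • q) q)
    (hfix : ∀ h ∈ Γ, ∀ x, (x = p ∨ x = q) → r (g • h • x) (h • x) →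
      r (h • x) p ∨ r (h • x) q)
    (hmeet : ∀ h ∈ Γ, ∃ s t, (s = p ∨ s = q) ∧ (t = p ∨ t = q) ∧ r (h • s) t)
    {u : G} (hu : u ∈ Γ) {x y : Ω} (hxy : (x = p ∧ y = q) ∨ (x = q ∧ y = p))
    (hx : r (u • x) p) (hyp : ¬ r (u • y) p) (hyq : ¬ r (u • y) q) :
    ∀ h ∈ Γ, r (h • p) p := by
  have hinv' : ∀ (h : G) {x y}, r (h⁻¹ • x) y → r x (h • y) := fun h x y hr => by
    simpa using hinv h hr
  have hyy : y = p ∨ y = q := by rcases hxy with h | h <;> simp [h.2]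
  have key : ∀ h ∈ Γ, r (h • p) p ∨ r (h • q) p := by
    intro h hh
    by_contra hcon
    rw [not_or] at hcon
    have hcon' : ∀ t, t = p ∨ t = q → ¬ r (h • t) p := by
      rintro t (rfl | rfl)
      exacts [hcon.1, hcon.2]
    have meet : ∀ v ∈ Γ, r (v • x) p → ∃ t, (t = p ∨ t = q) ∧ r (v • y) (h • t) := by
      intro v hv hvx
      obtain ⟨s, t, hs, ht, hst⟩ := hmeet (h⁻¹ * v) (mul_mem (inv_mem hh) hv)
      rw [mul_smul] at hst
      have hst := hinv' h hst
      have : s = x ∨ s = y := by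
        rcases hxy with ⟨rfl, rfl⟩ | ⟨rfl, rfl⟩ <;> tauto
      rcases this with rfl | rfl
      · exact absurd (htrans (hsymm hst) hvx) (hcon' t ht)
      · exact ⟨t, ht, hst⟩
    obtain ⟨t₁, ht₁, h₁⟩ := meet u hu hx
    obtain ⟨t₂, ht₂, h₂⟩ := meet (g * u) (mul_mem hg hu)
      (by rw [mul_smul]; exact htrans (hinv g hx) hgp)
    obtain ⟨s, t, hs, ht, hst⟩ := hmeet h hh
    have hsq : r (h • s) q := by
      rcases ht with rfl | rfl
      · exact absurd hst (hcon' s hs)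
      · exact hst
    have n₁ : t₁ ≠ s := by
      rintro rfl
      exact hyq (htrans h₁ hsq)
    have n₂ : t₂ ≠ s := by
      rintro rfl
      have h3 : r (g • u • y) (g • q) := by
        rw [← mul_smul]
        exact htrans (htrans h₂ hsq) (hsymm hgq)
      exact hyq (by simpa using hinv g⁻¹ h3)
    have h12 : t₁ = t₂ := by
      rcases ht₁ with rfl | rfl <;> rcases ht₂ with rfl | rfl <;> rcases hs with rfl | rfl <;>
        first | rfl | exact absurd rfl n₁ | exact absurd rfl n₂
    subst h12
    rw [mul_smul] at h₂
    rcases hfix u hu y hyy (htrans h₂ (hsymm h₁)) with h | h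
    exacts [hyp h, hyq h]
  have key' : ∀ h ∈ Γ, r (h • p) p ∨ r (h • p) q := by
    intro h hh
    rcases key h⁻¹ (inv_mem hh) with h1 | h1
    exacts [Or.inl (hsymm (hinv' h h1)), Or.inr (hsymm (hinv' h h1))]
  rcases hxy with ⟨rfl, rfl⟩ | ⟨rfl, rfl⟩
  · intro v hv
    by_contra hvp
    have h1 := (key' v hv).resolve_left hvp
    have h2 := hinv u h1
    rw [← mul_smul] at h2
    rcases key' _ (mul_mem hu hv) with h3 | h3
    · exact hyp (htrans (hsymm h2) h3)
    · exact hyq (htrans (hsymm h2) h3)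
  · rcases key' u hu with h | h
    exacts [absurd h hyp, absurd h hyq]

/-- If each element of a group acting on a set moves the pair `{p, q}` to a pair meeting it, and
some element has exactly `p` and `q` as fixed points in their orbits, then the group fixes `p`,
fixes `q`, or preserves the pair. Equality of points is replaced by an invariant partial
equivalence relation. -/
theorem fixes_or_preserves_pair (hsymm : ∀ {x y}, r x y → r y x)
    (htrans : ∀ {x y z}, r x y → r y z → r x z)
    (hinv : ∀ (h : G) {x y}, r x y → r (h • x) (h • y))
    {p q : Ω} (hpq : ¬ r p q) {g : G} (hg : g ∈ Γ) (hgp : r (g • p) p) (hgq : r (g • q) q)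
    (hfix : ∀ h ∈ Γ, ∀ x, (x = p ∨ x = q) → r (g • h • x) (h • x) →
      r (h • x) p ∨ r (h • x) q)
    (hmeet : ∀ h ∈ Γ, ∃ s t, (s = p ∨ s = q) ∧ (t = p ∨ t = q) ∧ r (h • s) t) :
    (∀ h ∈ Γ, r (h • p) p) ∨ (∀ h ∈ Γ, r (h • q) q) ∨
      (∀ h ∈ Γ, (r (h • p) p ∧ r (h • q) q) ∨ (r (h • p) q ∧ r (h • q) p)) := by
  by_cases hpres : ∀ h ∈ Γ, (r (h • p) p ∧ r (h • q) q) ∨ (r (h • p) q ∧ r (h • q) p)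
  · exact Or.inr (Or.inr hpres)
  push Not at hpres
  obtain ⟨u, hu, hn⟩ := hpres
  have hne : ∀ z, r (u • p) z → r (u • q) z → False := fun z h1 h2 => by
    have := hinv u⁻¹ (htrans h1 (hsymm h2))
    rw [inv_smul_smul, inv_smul_smul] at this
    exact hpq this
  have fixp : ∀ x y, ((x = p ∧ y = q) ∨ (x = q ∧ y = p)) → r (u • x) p → ¬ r (u • y) p →
      ¬ r (u • y) q → ∀ h ∈ Γ, r (h • p) p := fun x y h1 h2 h3 h4 =>
    fixes_of_moves_pair (r := r) hsymm htrans hinv hg hgp hgq hfix hmeet hu h1 h2 h3 h4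
  have fixq : ∀ x y, ((x = q ∧ y = p) ∨ (x = p ∧ y = q)) → r (u • x) q → ¬ r (u • y) q →
      ¬ r (u • y) p → ∀ h ∈ Γ, r (h • q) q := fun x y h1 h2 h3 h4 =>
    fixes_of_moves_pair (r := r) hsymm htrans hinv hg hgq hgp
      (fun h hh x hx hr => (hfix h hh x hx.symm hr).symm)
      (fun h hh => by
        obtain ⟨s, t, hs, ht, hst⟩ := hmeet h hh
        exact ⟨s, t, hs.symm, ht.symm, hst⟩) hu h1 h2 h3 h4
  obtain ⟨s, t, hs, ht, hst⟩ := hmeet u hu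
  rcases hs with rfl | rfl <;> rcases ht with rfl | rfl
  · exact Or.inl (fixp _ _ (Or.inl ⟨rfl, rfl⟩) hst (fun h => hne _ hst h) (hn.1 hst))
  · exact Or.inr (Or.inl (fixq _ _ (Or.inr ⟨rfl, rfl⟩) hst (fun h => hne _ hst h) (hn.2 hst)))
  · exact Or.inl (fixp _ _ (Or.inr ⟨rfl, rfl⟩) hst (fun h => hne _ h hst)
      (fun h => hn.2 h hst))
  · exact Or.inr (Or.inl (fixq _ _ (Or.inl ⟨rfl, rfl⟩) hst (fun h => hne _ h hst)
      (fun h => hn.1 h hst)))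

theorem commutator_fixes_of_preserves_pair (hsymm : ∀ {x y}, r x y → r y x)
    (htrans : ∀ {x y z}, r x y → r y z → r x z)
    (hinv : ∀ (h : G) {x y}, r x y → r (h • x) (h • y)) {p q : Ω}
    (hpres : ∀ h ∈ Γ, (r (h • p) p ∧ r (h • q) q) ∨ (r (h • p) q ∧ r (h • q) p))
    {a b : G} (ha : a ∈ Γ) (hb : b ∈ Γ) : r ((a * b * a⁻¹ * b⁻¹) • p) p ∧
      r ((a * b * a⁻¹ * b⁻¹) • q) q := by
  let pt : Bool → Ω := fun c => bif c then q else p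
  have type : ∀ h ∈ Γ, ∃ e : Bool, ∀ c, r (h • pt c) (pt (c ^^ e)) := by
    intro h hh
    rcases hpres h hh with h1 | h1
    · refine ⟨false, fun c => ?_⟩
      cases c
      exacts [h1.1, h1.2]
    · refine ⟨true, fun c => ?_⟩
      cases c
      exacts [h1.1, h1.2]
  have tmul : ∀ {h k : G} {e f : Bool}, (∀ c, r (h • pt c) (pt (c ^^ e))) →
      (∀ c, r (k • pt c) (pt (c ^^ f))) → ∀ c, r ((h * k) • pt c) (pt (c ^^ (f ^^ e))) := by
    intro h k e f h1 h2 c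
    rw [mul_smul, ← Bool.xor_assoc]
    exact htrans (hinv h (h2 c)) (h1 _)
  have tinv : ∀ {h : G} {e : Bool}, (∀ c, r (h • pt c) (pt (c ^^ e))) →
      ∀ c, r (h⁻¹ • pt c) (pt (c ^^ e)) := by
    intro h e h1 c
    have h2 := hinv h⁻¹ (h1 (c ^^ e))
    rw [inv_smul_smul, Bool.xor_assoc, Bool.xor_self, Bool.xor_false] at h2
    exact hsymm h2
  obtain ⟨e, he⟩ := type a ha
  obtain ⟨f, hf⟩ := type b hb
  have h3 := tmul (tmul (tmul he hf) (tinv he)) (tinv hf)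
  have h4 : (f ^^ (e ^^ (f ^^ e))) = false := by cases e <;> cases f <;> rfl
  rw [h4] at h3
  exact ⟨h3 false, h3 true⟩

end Pair

section PingPong

open scoped Pointwise

universe u v

/-- The ping-pong lemma for two elements, without universe restrictions. -/
theorem injective_lift_of_ping_pong {G : Type u} {α : Type v} [Group G] [MulAction G α]
    (a : Fin 2 → G) (X Y : Fin 2 → Set α) (hX : ∀ i, (X i).Nonempty)
    (hXX : Pairwise fun i j => Disjoint (X i) (X j))
    (hYY : Pairwise fun i j => Disjoint (Y i) (Y j))
    (hXY : ∀ i j, Disjoint (X i) (Y j)) (h1 : ∀ i, ∀ x ∉ Y i, a i • x ∈ X i)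
    (h2 : ∀ i, ∀ x ∉ X i, (a i)⁻¹ • x ∈ Y i) : Function.Injective (FreeGroup.lift a) := by
  have key := FreeGroup.injective_lift_of_ping_pong (ι := ULift.{u} (Fin 2))
    (fun i => a i.down) (α := α) (fun i => X i.down) (fun i => Y i.down) (fun i => hX i.down)
    (fun i j hij => hXX fun h => hij (ULift.down_injective h))
    (fun i j hij => hYY fun h => hij (ULift.down_injective h)) (fun i j => hXY i.down j.down)
    (by rintro i _ ⟨x, hx, rfl⟩; exact h1 i.down x hx)
    (by rintro i _ ⟨x, hx, rfl⟩; exact h2 i.down x hx)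
  have h3 : FreeGroup.lift a = (FreeGroup.lift fun i : ULift.{u} (Fin 2) => a i.down).comp
      (FreeGroup.freeGroupCongr Equiv.ulift.{u}.symm).toMonoidHom := by
    ext i
    simp
  rw [h3]
  exact key.comp (FreeGroup.freeGroupCongr _).injective

end PingPong

/-- A group acting on a discrete tree, given through its distance function, preserving the
two-colouring of the vertices. -/
structure IsTreeAction (G : Type*) [Group G] {X : Type*} [MulAction G X] (d : X → X → ℕ) :
    Prop where
  dist_self : ∀ x, d x x = 0
  eq_of_dist : ∀ {x y}, d x y = 0 → x = y
  comm : ∀ x y, d x y = d y x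
  four_point : ∀ x y z w, d x y + d z w ≤ max (d x z + d y w) (d x w + d y z)
  even_perimeter : ∀ x y z, Even (d x y + d y z + d x z)
  exists_between : ∀ x y k, k ≤ d x y → ∃ z, d x z = k ∧ d z y = d x y - k
  isometry : ∀ (g : G) x y, d (g • x) (g • y) = d x y
  even_smul : ∀ (g : G) x, Even (d x (g • x))

/-- The Gromov product of `x` and `y` at `o`. -/
def gromov {X : Type*} (d : X → X → ℕ) (o x y : X) : ℕ := (d o x + d o y - d x y) / 2

namespace IsTreeAction

variable {G X : Type*} [Group G] [MulAction G X] {d : X → X → ℕ} (hd : IsTreeAction G d)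

include hd

theorem triangle (x y z : X) : d x z ≤ d x y + d y z := by
  have h1 := hd.four_point x z y y
  have h2 := hd.dist_self y
  have h3 := hd.comm y z
  omega

theorem gromov_spec (o x y : X) : d o x + d o y = d x y + 2 * gromov d o x y := by
  have h1 := hd.triangle x o y
  have h2 := hd.comm o x
  obtain ⟨m, hm⟩ := hd.even_perimeter o x y
  unfold gromov
  omega

theorem gromov_comm (o x y : X) : gromov d o x y = gromov d o y x := by
  have h1 := hd.gromov_spec o x y
  have h2 := hd.gromov_spec o y x
  have h3 := hd.comm x y
  omega

theorem gromov_le_left (o x y : X) : gromov d o x y ≤ d o x := by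
  have h1 := hd.gromov_spec o x y
  have h2 := hd.triangle o x y
  omega

theorem gromov_ultra (o x y z : X) :
    min (gromov d o x y) (gromov d o y z) ≤ gromov d o x z := by
  have h1 := hd.gromov_spec o x y
  have h2 := hd.gromov_spec o y z
  have h3 := hd.gromov_spec o x z
  have h4 := hd.four_point x z o y
  have h5 := hd.comm x o
  have h6 := hd.comm z o
  have h7 := hd.comm y z
  omega

theorem le_gromov_trans {o x y z : X} {n : ℕ} (h1 : n ≤ gromov d o x y)
    (h2 : n ≤ gromov d o y z) : n ≤ gromov d o x z :=
  (le_min h1 h2).trans (hd.gromov_ultra o x y z)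

theorem gromov_self (o x : X) : gromov d o x x = d o x := by
  have h1 := hd.gromov_spec o x x
  have h2 := hd.dist_self x
  omega

theorem gromov_smul (g : G) (o x y : X) : gromov d (g • o) (g • x) (g • y) = gromov d o x y := by
  simp only [gromov, hd.isometry]

/-- The identity behind the ping-pong argument. -/
theorem gromov_smul_add (s : G) (o x : X) :
    gromov d o (s • x) (s • o) + gromov d o x (s⁻¹ • o) = d o (s • o) := by
  have h1 := hd.gromov_spec o (s • x) (s • o)
  have h2 := hd.gromov_spec o x (s⁻¹ • o)
  have h3 := hd.isometry s x o
  have h4 := hd.isometry s x (s⁻¹ • o)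
  have h5 := hd.isometry s o (s⁻¹ • o)
  rw [smul_inv_smul] at h4 h5
  have h6 := hd.comm o x
  have h7 := hd.comm o (s • x)
  have h8 := hd.comm o (s • o)
  omega

theorem dist_inv_smul (s : G) (o : X) : d o (s⁻¹ • o) = d o (s • o) := by
  have h5 := hd.isometry s o (s⁻¹ • o)
  rw [smul_inv_smul] at h5
  rw [← h5, hd.comm]

theorem gromov_le_add_dist (o x x' y : X) : gromov d o x y ≤ gromov d o x' y + d x x' := by
  have h1 := hd.gromov_spec o x y
  have h2 := hd.gromov_spec o x' y
  have h3 := hd.triangle o x' x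
  have h4 := hd.triangle x' x y
  have h5 := hd.comm x x'
  omega

theorem gromov_le_add_dist_base (o o' x y : X) : gromov d o x y ≤ gromov d o' x y + d o o' := by
  have h1 := hd.gromov_spec o x y
  have h2 := hd.gromov_spec o' x y
  have h3 := hd.triangle o o' x
  have h4 := hd.triangle o o' y
  omega

theorem eq_of_le_gromov {o x y : X} (h : d o x = d o y) (h' : d o x ≤ gromov d o x y) :
    x = y := by
  have h1 := hd.gromov_spec o x y
  exact hd.eq_of_dist (by omega)

theorem exists_gromov_eq (o x : X) {k : ℕ} (hk : k ≤ d o x) :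
    ∃ z, d o z = k ∧ d z x = d o x - k ∧ gromov d o z x = k := by
  obtain ⟨z, h1, h2⟩ := hd.exists_between o x k hk
  have h3 := hd.gromov_spec o z x
  exact ⟨z, h1, h2, by omega⟩

/-- A point between a fixed point `o` and `x`, no further than the branching of `x` and `g x`,
is fixed. -/
theorem smul_eq_of_le_gromov {g : G} {o x z : X} (ho : g • o = o)
    (hz : gromov d o z x = d o z) (hk : d o z ≤ gromov d o x (g • x)) : g • z = z := by
  have h1 : gromov d o (g • z) (g • x) = d o z := by
    have := hd.gromov_smul g o z x
    rw [ho] at this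
    rw [this, hz]
  have h2 : d o (g • z) = d o z := by
    have := hd.isometry g o z
    rwa [ho] at this
  refine hd.eq_of_le_gromov (o := o) h2 ?_
  rw [h2]
  refine hd.le_gromov_trans h1.ge ?_
  refine hd.le_gromov_trans (y := x) ?_ ?_
  · rw [hd.gromov_comm]; exact hk
  · rw [hd.gromov_comm]; exact hz.ge

theorem injective_lift_of_far (o : X) (a b : G)
    (far : ∀ s t, (s = a ∧ t = a⁻¹) ∨ (s = b ∧ t = b⁻¹) ∨ ((s = a ∨ s = a⁻¹) ∧ (t = b ∨ t = b⁻¹)) →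
      2 * gromov d o (s • o) (t • o) < min (d o (s • o)) (d o (t • o))) :
    Function.Injective (FreeGroup.lift ![a, b]) := by
  set U : G → Set X := fun s => {x | d o (s • o) ≤ 2 * gromov d o x (s • o)} with hU
  have disj : ∀ s t, (s = a ∧ t = a⁻¹) ∨ (s = b ∧ t = b⁻¹) ∨
      ((s = a ∨ s = a⁻¹) ∧ (t = b ∨ t = b⁻¹)) → Disjoint (U s) (U t) := by
    intro s t hst
    rw [Set.disjoint_left]
    intro x hx hx'
    have h1 := far s t hst
    simp only [hU, Set.mem_ofPred_eq] at hx hx'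
    rw [hd.gromov_comm] at hx
    have h3 := hd.gromov_ultra o (s • o) x (t • o)
    omega
  have push : ∀ s : G, ∀ x ∉ U s⁻¹, s • x ∈ U s := by
    intro s x hx
    simp only [hU, Set.mem_ofPred_eq, not_le] at hx ⊢
    have h1 := hd.gromov_smul_add s o x
    have h2 := hd.dist_inv_smul s o
    omega
  have disjab : Disjoint (U a) (U b) := disj _ _ (by simp)
  have disjab' : Disjoint (U a⁻¹) (U b⁻¹) := disj _ _ (by simp)
  refine injective_lift_of_ping_pong ![a, b] (α := X) ![U a, U b] ![U a⁻¹, U b⁻¹]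
    ?_ ?_ ?_ ?_ ?_ ?_
  · intro i
    have : ∀ s, (U s).Nonempty := fun s => ⟨s • o, by
      simp only [hU, Set.mem_ofPred_eq, hd.gromov_self]; omega⟩
    fin_cases i
    exacts [this a, this b]
  · intro i j hij
    fin_cases i <;> fin_cases j <;> first | exact absurd rfl hij | skip
    exacts [disjab, disjab.symm]
  · intro i j hij
    fin_cases i <;> fin_cases j <;> first | exact absurd rfl hij | skip
    exacts [disjab', disjab'.symm]
  · intro i j
    fin_cases i <;> fin_cases j
    exacts [disj a a⁻¹ (by simp), disj a b⁻¹ (by simp), (disj a⁻¹ b (by simp)).symm,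
      disj b b⁻¹ (by simp)]
  · intro i
    fin_cases i
    exacts [push a, push b]
  · have key : ∀ s : G, ∀ x ∉ U s, s⁻¹ • x ∈ U s⁻¹ :=
      fun s x hx => push s⁻¹ x (by rwa [inv_inv])
    intro i
    fin_cases i
    exacts [key a, key b]

section Elliptic

/-- An element which is not hyperbolic has a fixed point. -/
theorem exists_smul_eq {g : G} {x : X} (h : d x (g • g • x) ≤ d x (g • x)) :
    ∃ y : X, g • y = y := by
  obtain ⟨m, hm⟩ := hd.even_smul g x
  obtain ⟨z, hz1, hz2⟩ := hd.exists_between x (g • x) m (by omega)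
  refine ⟨z, ?_⟩
  have h1 := hd.isometry g x z
  have h2 := hd.isometry g z (g • x)
  have h3 := hd.isometry g x (g • x)
  have h4 := hd.gromov_spec (g • x) z x
  have h5 := hd.gromov_spec (g • x) x (g • g • x)
  have h6 := hd.gromov_spec (g • x) (g • g • x) (g • z)
  have c1 := hd.comm (g • x) x
  have c2 := hd.comm (g • x) z
  have c3 := hd.comm z x
  have c4 := hd.comm (g • g • x) (g • z)
  refine (hd.eq_of_le_gromov (o := g • x) (by omega) ?_).symm
  refine hd.le_gromov_trans (y := x) (by omega) ?_
  exact hd.le_gromov_trans (y := g • g • x) (by omega) (by omega)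

theorem exists_common_smul_eq {Γ : Subgroup G} (hell : ∀ g ∈ Γ, ∀ x, d x (g • g • x) ≤ d x (g • x))
    {Δ : Subgroup G} (hΔ : Δ ≤ Γ) (hfix : ∃ x : X, Δ ≤ MulAction.stabilizer G x)
    {g : G} (hg : g ∈ Γ) : ∃ x : X, Δ ≤ MulAction.stabilizer G x ∧ g • x = x := by
  classical
  obtain ⟨x₀, hx₀⟩ := hfix
  obtain ⟨y₀, hy₀⟩ := hd.exists_smul_eq (hell g hg x₀)
  have hex : ∃ n p q, Δ ≤ MulAction.stabilizer G p ∧ g • q = q ∧ d p q = n :=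
    ⟨_, x₀, y₀, hx₀, hy₀, rfl⟩
  obtain ⟨p, q, hp, hq, hpq⟩ := Nat.find_spec hex
  have hmin : ∀ p' q', Δ ≤ MulAction.stabilizer G p' → g • q' = q' → d p q ≤ d p' q' :=
    fun p' q' h1 h2 => by rw [hpq]; exact Nat.find_min' hex ⟨p', q', h1, h2, rfl⟩
  have hpΔ : ∀ δ ∈ Δ, δ • p = p := fun δ hδ => MulAction.mem_stabilizer_iff.1 (hp hδ)
  by_cases h0 : d p q = 0
  · exact ⟨p, hp, by rw [hd.eq_of_dist h0, hq]⟩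
  exfalso
  have hqp := hd.comm p q
  have hA : gromov d q p (g • p) = 0 := by
    by_contra hne
    obtain ⟨z, hz1, hz2, hz3⟩ := hd.exists_gromov_eq q p (k := 1) (by omega)
    have hz := hd.smul_eq_of_le_gromov hq (z := z) (x := p) (by omega) (by omega)
    have := hmin p z hp hz
    have := hd.comm p z
    omega
  have hB : ∃ δ ∈ Δ, gromov d p q (δ • q) = 0 := by
    by_contra! hne
    obtain ⟨z, hz1, hz2, hz3⟩ := hd.exists_gromov_eq p q (k := 1) (by omega)
    have hz : Δ ≤ MulAction.stabilizer G z := fun δ hδ => by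
      have := hne δ hδ
      exact hd.smul_eq_of_le_gromov (hpΔ δ hδ) (x := q) (by omega) (by omega)
    have := hmin z q hz hq
    omega
  obtain ⟨δ, hδ, hδ0⟩ := hB
  have hh := hell (δ * g) (mul_mem (hΔ hδ) hg) q
  simp only [mul_smul, hq] at hh
  have e1 := hd.isometry δ (δ⁻¹ • q) (g • δ • q)
  rw [smul_inv_smul] at e1
  have e2 := hd.dist_inv_smul δ q
  have e3 := hd.isometry δ p (δ⁻¹ • q)
  rw [smul_inv_smul, hpΔ δ hδ] at e3
  have e4 := hd.isometry g q (δ • q)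
  rw [hq] at e4
  have e5 := hd.isometry g p (δ • q)
  have e6 := hd.isometry δ p q
  rw [hpΔ δ hδ] at e6
  have e7 := hd.isometry g q p
  rw [hq] at e7
  have s1 := hd.gromov_spec p q (δ • q)
  have s2 := hd.gromov_spec q p (δ⁻¹ • q)
  have s3 := hd.gromov_spec q (g • δ • q) (g • p)
  have s4 := hd.gromov_spec q (δ⁻¹ • q) (g • δ • q)
  have c1 := hd.comm (g • δ • q) (g • p)
  have u1 := hd.gromov_ultra q p (δ⁻¹ • q) (g • p)
  have u2 := hd.gromov_ultra q (δ⁻¹ • q) (g • δ • q) (g • p)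
  omega

theorem exists_fixed_of_finite [Nonempty X] {Γ : Subgroup G}
    (hell : ∀ g ∈ Γ, ∀ x, d x (g • g • x) ≤ d x (g • x)) {S : Set G} (hS : S.Finite)
    (hSΓ : S ⊆ Γ) : ∃ x : X, Subgroup.closure S ≤ MulAction.stabilizer G x := by
  induction S, hS using Set.Finite.induction_on with
  | empty => exact ⟨Classical.arbitrary X, by simp⟩
  | @insert a S _ _ ih =>
    obtain ⟨x, hx, hax⟩ := hd.exists_common_smul_eq hell
      ((Subgroup.closure_le Γ).2 ((Set.subset_insert a S).trans hSΓ))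
      (ih ((Set.subset_insert a S).trans hSΓ)) (hSΓ (Set.mem_insert a S))
    refine ⟨x, ?_⟩
    rw [Subgroup.closure_le]
    rintro s (rfl | hs)
    exacts [hax, hx (Subgroup.subset_closure hs)]

theorem isSolvable_or_fixed_of_elliptic [Nonempty X] {n₀ : ℕ}
    (hstab : ∀ x y : X, x ≠ y →
      derivedSub (MulAction.stabilizer G x ⊓ MulAction.stabilizer G y) n₀ = ⊥) {Γ : Subgroup G}
    (hell : ∀ g ∈ Γ, ∀ x, d x (g • g • x) ≤ d x (g • x)) :
    Group.IsSolvable Γ ∨ ∃ x : X, Γ ≤ MulAction.stabilizer G x := by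
  by_cases hall : ∀ S : Set G, S.Finite → S ⊆ Γ → derivedSub (Subgroup.closure S) n₀ = ⊥
  · exact Or.inl (isSolvable_iff_derivedSub.2 ⟨n₀, derivedSub_eq_bot_of_finite hall⟩)
  push Not at hall
  obtain ⟨S, hS, hSΓ, hne⟩ := hall
  obtain ⟨x, hx⟩ := hd.exists_fixed_of_finite hell hS hSΓ
  refine Or.inr ⟨x, fun g hg => ?_⟩
  obtain ⟨y, hy, hgy⟩ := hd.exists_common_smul_eq hell ((Subgroup.closure_le Γ).2 hSΓ) ⟨x, hx⟩ hg
  have : x = y := by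
    by_contra hxy
    apply hne
    rw [eq_bot_iff, ← hstab x y hxy]
    exact derivedSub_mono (le_inf hx hy) n₀
  rw [MulAction.mem_stabilizer_iff, this, hgy]

end Elliptic

end IsTreeAction

/-- Two sequences of points converge to the same end. -/
def SameEnd {X : Type*} (d : X → X → ℕ) (o : X) (u v : ℕ → X) : Prop :=
  ∀ N, ∃ M, ∀ n m, M ≤ n → M ≤ m → N ≤ gromov d o (u n) (v m)

/-- A sequence of points on a geodesic ray, at constant distance `l` from each other. -/
def IsRay {X : Type*} (d : X → X → ℕ) (l : ℕ) (p : ℕ → X) : Prop :=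
  ∀ n m, n ≤ m → d (p n) (p m) + n * l = m * l

theorem IsRay.dist_zero {X : Type*} {d : X → X → ℕ} {l : ℕ} {p : ℕ → X} (hp : IsRay d l p) (n : ℕ) :
    d (p 0) (p n) = n * l := by
  have := hp 0 n (Nat.zero_le n)
  omega

namespace IsTreeAction

variable {G X : Type*} [Group G] [MulAction G X] {d : X → X → ℕ} (hd : IsTreeAction G d)

include hd

section SameEnd

theorem sameEnd_symm {o : X} {u v : ℕ → X} (h : SameEnd d o u v) : SameEnd d o v u := by
  intro N
  obtain ⟨M, hM⟩ := h N
  exact ⟨M, fun n m hn hm => by rw [hd.gromov_comm]; exact hM m n hm hn⟩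

theorem sameEnd_trans {o : X} {u v w : ℕ → X} (h : SameEnd d o u v) (h' : SameEnd d o v w) :
    SameEnd d o u w := by
  intro N
  obtain ⟨M, hM⟩ := h N
  obtain ⟨M', hM'⟩ := h' N
  refine ⟨max M M', fun n m hn hm => ?_⟩
  exact hd.le_gromov_trans (hM n (max M M') (by omega) (by omega))
    (hM' (max M M') m (by omega) (by omega))

theorem sameEnd_smul {o : X} (g : G) {u v : ℕ → X} (h : SameEnd d o u v) :
    SameEnd d o (g • u) (g • v) := by
  intro N
  obtain ⟨M, hM⟩ := h (N + d (g • o) o)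
  refine ⟨M, fun n m hn hm => ?_⟩
  have h1 := hM n m hn hm
  have h2 := hd.gromov_smul g o (u n) (v m)
  have h3 := hd.gromov_le_add_dist_base (g • o) o (g • u n) (g • v m)
  simp only [Pi.smul_apply]
  omega

theorem exists_gromov_lt_of_not_sameEnd {o : X} {u v : ℕ → X} (hu : SameEnd d o u u)
    (hv : SameEnd d o v v) (h : ¬ SameEnd d o u v) :
    ∃ N, ∀ n m, N ≤ n → N ≤ m → gromov d o (u n) (v m) < N := by
  unfold SameEnd at h
  push Not at h
  obtain ⟨N, hN⟩ := h
  obtain ⟨M₁, h₁⟩ := hu N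
  obtain ⟨M₂, h₂⟩ := hv N
  obtain ⟨n₀, m₀, hn₀, hm₀, h₀⟩ := hN (max M₁ M₂)
  refine ⟨max N (max M₁ M₂), fun n m hn hm => lt_of_lt_of_le ?_ (le_max_left _ _)⟩
  by_contra! hcon
  have h3 := hd.le_gromov_trans (h₁ n₀ n (by omega) (by omega)) hcon
  have h4 := hd.le_gromov_trans h3 (h₂ m m₀ (by omega) (by omega))
  omega

/-- Any two points converging to the same end look the same from a given point. -/
theorem gromov_eq_of_lt {o x y z : X} (h : d o x < gromov d o y z) :
    gromov d o x y = gromov d o x z := by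
  have h1 := hd.gromov_ultra o x y z
  have h2 := hd.gromov_ultra o x z y
  rw [hd.gromov_comm o z y] at h2
  have h3 := hd.gromov_le_left o x y
  have h4 := hd.gromov_le_left o x z
  omega

end SameEnd

section Ray

variable {l : ℕ} {p : ℕ → X} (hp : IsRay d l p)

include hp

theorem gromov_ray {n m : ℕ} (h : n ≤ m) : gromov d (p 0) (p n) (p m) = n * l := by
  have h1 := hd.gromov_spec (p 0) (p n) (p m)
  have h2 := hp n m h
  have h3 := hp.dist_zero n
  have h4 := hp.dist_zero m
  omega

theorem sameEnd_ray (hl : 0 < l) : SameEnd d (p 0) p p := by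
  intro N
  refine ⟨N, fun n m hn hm => ?_⟩
  rcases le_total n m with h | h
  · rw [hd.gromov_ray hp h]; nlinarith
  · rw [hd.gromov_comm, hd.gromov_ray hp h]; nlinarith

/-- The shift of an element along a ray. -/
theorem exists_shift (hl : 0 < l) (h : G) :
    ∃ c : ℤ, ∃ M, ∀ n, M ≤ n → (d (p 0) (h • p n) : ℤ) = n * l + c := by
  set x := h⁻¹ • p 0 with hx
  refine ⟨d (p 0) x - 2 * gromov d (p 0) x (p (d (p 0) x + 1)), d (p 0) x + 1, fun n hn => ?_⟩
  have h1 : d (p 0) (h • p n) = d x (p n) := by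
    rw [← hd.isometry h x (p n), hx, smul_inv_smul]
  have h2 : d (p 0) x < gromov d (p 0) (p (d (p 0) x + 1)) (p n) := by
    rw [hd.gromov_ray hp hn]; nlinarith
  have h3 := hd.gromov_eq_of_lt h2
  have h4 := hd.gromov_spec (p 0) x (p n)
  have h5 := hp.dist_zero n
  rw [h1]
  omega

theorem shift_mul {h k : G} (hk : SameEnd d (p 0) (k • p) p) {c c' : ℤ}
    (hc : ∃ M, ∀ n, M ≤ n → (d (p 0) (h • p n) : ℤ) = n * l + c)
    (hc' : ∃ M, ∀ n, M ≤ n → (d (p 0) (k • p n) : ℤ) = n * l + c') :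
    ∃ M, ∀ n, M ≤ n → (d (p 0) ((h * k) • p n) : ℤ) = n * l + (c + c') := by
  obtain ⟨M₁, h₁⟩ := hc
  obtain ⟨M₂, h₂⟩ := hc'
  set x := h⁻¹ • p 0 with hx
  obtain ⟨M₃, h₃⟩ := hk (d (p 0) x + 1)
  refine ⟨max M₁ (max M₂ M₃), fun n hn => ?_⟩
  have e : ∀ y, d (p 0) (h • y) = d x y := fun y => by
    rw [← hd.isometry h x y, hx, smul_inv_smul]
  have a₁ := h₁ n (by omega)
  have a₂ := h₂ n (by omega)
  have a₃ := h₃ n n (by omega) (by omega)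
  rw [Pi.smul_apply] at a₃
  have a₄ := hd.gromov_eq_of_lt (x := x) a₃
  have a₅ := hd.gromov_spec (p 0) x (p n)
  have a₆ := hd.gromov_spec (p 0) x (k • p n)
  have a₇ := hp.dist_zero n
  rw [e] at a₁
  rw [mul_smul, e]
  zify at a₇
  omega

theorem eventually_fixed_of_shift_zero {h : G} (hS : SameEnd d (p 0) (h • p) p)
    (h0 : ∃ M, ∀ n, M ≤ n → (d (p 0) (h • p n) : ℤ) = n * l + 0) :
    ∀ᶠ n in Filter.atTop, h • p n = p n := by
  obtain ⟨M, hM⟩ := h0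
  refine Filter.eventually_atTop.2 ⟨M, fun n hn => ?_⟩
  have hd' : ∀ m, M ≤ m → d (p 0) (h • p m) = m * l := fun m hm => by
    have := hM m hm
    zify
    omega
  obtain ⟨N, hN⟩ := hS (n * l)
  refine hd.eq_of_le_gromov (o := p 0) ?_ ?_
  · rw [hd' n hn, hp.dist_zero]
  rw [hd' n hn]
  have h1 := hN (max n N) (max n N) (by omega) (by omega)
  refine hd.le_gromov_trans (y := h • p (max n N)) ?_ (hd.le_gromov_trans h1 ?_)
  · have h2 := hd.gromov_spec (p 0) (h • p n) (h • p (max n N))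
    rw [hd.isometry, hd' n hn, hd' _ (by omega)] at h2
    have h3 := hp n (max n N) (by omega)
    omega
  · rw [hd.gromov_comm, hd.gromov_ray hp (by omega)]

theorem isSolvable_of_fixes_end (hl : 0 < l) {n₀ : ℕ}
    (hstab : ∀ x y : X, x ≠ y →
      derivedSub (MulAction.stabilizer G x ⊓ MulAction.stabilizer G y) n₀ = ⊥)
    {S : Subgroup G} (hS : ∀ h ∈ S, SameEnd d (p 0) (h • p) p) : Group.IsSolvable S := by
  let K : Subgroup G :=
    { carrier := {h | ∀ᶠ n in Filter.atTop, h • p n = p n}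
      mul_mem' := fun {a b} ha hb => by
        filter_upwards [ha, hb] with n h1 h2
        rw [mul_smul, h2, h1]
      one_mem' := by simp
      inv_mem' := fun {a} ha => by
        filter_upwards [ha] with n h1
        rw [inv_smul_eq_iff, h1] }
  refine isSolvable_of_commutator_le (K := K) ?_ (isSolvable_iff_derivedSub.2 ⟨n₀, ?_⟩)
  · rw [Subgroup.commutator_le]
    intro h hh k hk
    obtain ⟨c, hc⟩ := hd.exists_shift hp hl h
    obtain ⟨c', hc'⟩ := hd.exists_shift hp hl k
    have inv : ∀ f ∈ S, ∀ e : ℤ, (∃ M, ∀ n, M ≤ n → (d (p 0) (f • p n) : ℤ) = n * l + e) →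
        ∃ M, ∀ n, M ≤ n → (d (p 0) (f⁻¹ • p n) : ℤ) = n * l + -e := by
      intro f hf e he
      obtain ⟨e', he'⟩ := hd.exists_shift hp hl f⁻¹
      obtain ⟨M, hM⟩ := hd.shift_mul hp (hS _ (inv_mem hf)) he he'
      have h1 := hM M le_rfl
      rw [mul_inv_cancel, one_smul, hp.dist_zero] at h1
      push_cast at h1
      have h2 : e' = -e := by linarith
      rwa [h2] at he'
    have h1 := hd.shift_mul hp (hS _ hk) hc hc'
    have h2 := hd.shift_mul hp (hS _ (inv_mem hh)) h1 (inv h hh c hc)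
    have h3 := hd.shift_mul hp (hS _ (inv_mem hk)) h2 (inv k hk c' hc')
    have e : c + c' + -c + -c' = 0 := by ring
    rw [e] at h3
    exact hd.eventually_fixed_of_shift_zero hp
      (hS _ (mul_mem (mul_mem (mul_mem hh hk) (inv_mem hh)) (inv_mem hk))) h3
  · refine derivedSub_eq_bot_of_finite fun T hT hTK => ?_
    obtain ⟨M, hM⟩ := Filter.eventually_atTop.1 ((Filter.eventually_all_finite hT).2 hTK)
    have hne : p M ≠ p (M + 1) := fun heq => by
      have h1 := hp M (M + 1) (by omega)
      rw [← heq, hd.dist_self] at h1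
      nlinarith
    rw [eq_bot_iff, ← hstab _ _ hne]
    refine derivedSub_mono ((Subgroup.closure_le _).2 fun t ht => ?_) n₀
    exact ⟨hM M le_rfl t ht, hM (M + 1) (by omega) t ht⟩

end Ray

section Hyperbolic

theorem exists_axis {g : G} {x : X} (h : d x (g • x) < d x (g • g • x)) :
    ∃ (o : X) (l : ℕ), 0 < l ∧ ∀ n : ℕ, d o (g ^ n • o) = n * l := by
  obtain ⟨o, ho1, ho2⟩ := hd.exists_between x (g • x) (gromov d (g • x) x (g • g • x))
    (by rw [hd.comm]; exact hd.gromov_le_left _ _ _)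
  set r := gromov d (g • x) x (g • g • x) with hr
  have s1 := hd.gromov_spec (g • x) x (g • g • x)
  have s2 := hd.gromov_spec (g • x) (g • g • x) (g • o)
  have s3 := hd.gromov_spec (g • x) o (g • o)
  have s4 := hd.gromov_spec (g • x) o x
  have i1 := hd.isometry g x (g • x)
  have i2 := hd.isometry g x o
  have i3 := hd.isometry g o (g • x)
  have i4 := hd.isometry g o (g • o)
  have i5 := hd.isometry g (g • x) (g • o)
  have u1 := hd.gromov_ultra (g • x) x (g • g • x) (g • o)
  have u2 := hd.gromov_ultra (g • x) o x (g • o)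
  have c1 := hd.comm (g • x) x
  have c2 := hd.comm (g • x) o
  have c3 := hd.comm (g • g • x) (g • o)
  have c4 := hd.comm o x
  have t1 := hd.triangle x o (g • g • x)
  have t2 := hd.triangle o (g • g • o) (g • g • x)
  have c5 := hd.comm (g • g • o) (g • g • x)
  have t3 := hd.triangle o (g • o) (g • g • o)
  have hl : d o (g • o) = d x (g • x) - 2 * r := by omega
  have h2 : d o (g • g • o) = 2 * d o (g • o) := by omega
  refine ⟨o, d o (g • o), by omega, fun n => ?_⟩
  induction n using Nat.twoStepInduction with
  | zero => simp [hd.dist_self]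
  | one => simp
  | more n ih1 ih2 =>
    have f := hd.four_point o (g ^ (n + 1) • o) (g ^ n • o) (g ^ (n + 2) • o)
    have j1 := hd.isometry (g ^ n) o (g • o)
    have j2 := hd.isometry (g ^ n) o (g • g • o)
    have j3 := hd.isometry (g ^ (n + 1)) o (g • o)
    rw [← mul_smul, ← pow_succ] at j1 j3
    rw [← mul_smul, ← mul_smul, ← pow_succ, ← pow_succ] at j2
    have c6 := hd.comm (g ^ (n + 1) • o) (g ^ n • o)
    have t4 := hd.triangle o (g ^ (n + 1) • o) (g ^ (n + 2) • o)
    rw [show n + 1 + 1 = n + 2 from rfl] at j2 j3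
    have e1 : ((n : ℕ) + 1) * d o (g • o) = n * d o (g • o) + d o (g • o) := by ring
    have e2 : ((n : ℕ) + 2) * d o (g • o) = n * d o (g • o) + 2 * d o (g • o) := by ring
    omega

variable {g : G} {o : X} {l : ℕ} (hax : ∀ n : ℕ, d o (g ^ n • o) = n * l)

include hax

theorem isRay_pow : IsRay d l fun n => g ^ n • o := by
  intro n m hnm
  have h1 := hd.isometry (g ^ n) o (g ^ (m - n) • o)
  rw [← mul_smul, ← pow_add, Nat.add_sub_cancel' hnm] at h1
  rw [h1, hax, ← add_mul, Nat.sub_add_cancel hnm]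

theorem dist_inv_pow (n : ℕ) : d o (g⁻¹ ^ n • o) = n * l := by
  rw [inv_pow, hd.dist_inv_smul, hax]

theorem gromov_pow_inv_pow (n m : ℕ) : gromov d o (g ^ n • o) (g⁻¹ ^ m • o) = 0 := by
  have h1 := hd.gromov_spec o (g ^ n • o) (g⁻¹ ^ m • o)
  have h2 := hd.isometry (g ^ m) (g ^ n • o) (g⁻¹ ^ m • o)
  rw [inv_pow, smul_inv_smul, ← mul_smul, ← pow_add, hd.comm, hax, ← inv_pow] at h2
  rw [hax, hd.dist_inv_pow hax] at h1
  have h3 : (m + n) * l = n * l + m * l := by ring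
  omega

/-- The only ends fixed by a hyperbolic element are those of its axis. -/
theorem sameEnd_axis_of_fixed (hl : 0 < l) {z : ℕ → X} (hz : SameEnd d o z z)
    (hgz : SameEnd d o (g • z) z) :
    SameEnd d o z (fun n => g ^ n • o) ∨ SameEnd d o z (fun n => g⁻¹ ^ n • o) := by
  by_contra hcon
  rw [not_or] at hcon
  have hp := hd.sameEnd_ray (hd.isRay_pow hax) hl
  have hq := hd.sameEnd_ray (hd.isRay_pow (hd.dist_inv_pow hax)) hl
  simp only [pow_zero, one_smul] at hp hq
  obtain ⟨N, hN⟩ := hd.exists_gromov_lt_of_not_sameEnd hz hp hcon.1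
  obtain ⟨N', hN'⟩ := hd.exists_gromov_lt_of_not_sameEnd hz hq hcon.2
  have hpow : ∀ j : ℕ, SameEnd d o (g ^ j • z) z := by
    intro j
    induction j with
    | zero => simpa using hz
    | succ j ih =>
      rw [pow_succ, mul_smul]
      exact hd.sameEnd_trans (hd.sameEnd_smul (g ^ j) hgz) ih
  obtain ⟨M, hM⟩ := hpow (N + N') N
  set n := max M (max N N') with hn
  have h1 := hM n n (by omega) (by omega)
  have h2 := hN n (N + N') (by omega) (by omega)
  have h3 := hN' n (N + N') (by omega) (by omega)
  have h4 := hd.gromov_smul_add (g ^ (N + N')) o (z n)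
  rw [hax, ← inv_pow] at h4
  rw [Pi.smul_apply, hd.gromov_comm] at h1
  have h5 := hd.le_gromov_trans (n := N) h1 (z := g ^ (N + N') • o) (by nlinarith)
  omega

theorem injective_lift_of_not_sameEnd (hl : 0 < l) {h : G}
    (hsep : ∀ s t : G, (s = g ∨ s = g⁻¹) → (t = g ∨ t = g⁻¹) →
      ¬ SameEnd d o (h • fun n => s ^ n • o) (fun n => t ^ n • o)) :
    ∃ j : ℕ, Function.Injective (FreeGroup.lift ![g ^ j, h * g ^ j * h⁻¹]) := by
  have hray : ∀ s : G, (s = g ∨ s = g⁻¹) → ∀ n : ℕ, d o (s ^ n • o) = n * l := by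
    rintro s (rfl | rfl)
    exacts [hax, hd.dist_inv_pow hax]
  have hself : ∀ s : G, (s = g ∨ s = g⁻¹) →
      SameEnd d o (fun n => s ^ n • o) (fun n => s ^ n • o) := by
    intro s hs
    have := hd.sameEnd_ray (hd.isRay_pow (hray s hs)) hl
    simpa using this
  have hex : ∃ N, ∀ s t : G, (s = g ∨ s = g⁻¹) → (t = g ∨ t = g⁻¹) → ∀ n, N ≤ n →
      gromov d o (h • s ^ n • o) (t ^ n • o) < N := by
    have := fun s t hs ht => hd.exists_gromov_lt_of_not_sameEnd
      (hd.sameEnd_smul h (hself s hs)) (hself t ht) (hsep s t hs ht)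
    obtain ⟨N₁, h₁⟩ := this g g (Or.inl rfl) (Or.inl rfl)
    obtain ⟨N₂, h₂⟩ := this g g⁻¹ (Or.inl rfl) (Or.inr rfl)
    obtain ⟨N₃, h₃⟩ := this g⁻¹ g (Or.inr rfl) (Or.inl rfl)
    obtain ⟨N₄, h₄⟩ := this g⁻¹ g⁻¹ (Or.inr rfl) (Or.inr rfl)
    refine ⟨max (max N₁ N₂) (max N₃ N₄), ?_⟩
    rintro s t (rfl | rfl) (rfl | rfl) n hn
    · exact (h₁ n n (by omega) (by omega)).trans_le (by omega)
    · exact (h₂ n n (by omega) (by omega)).trans_le (by omega)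
    · exact (h₃ n n (by omega) (by omega)).trans_le (by omega)
    · exact (h₄ n n (by omega) (by omega)).trans_le (by omega)
  obtain ⟨N, hN⟩ := hex
  set e := d o (h • o) with he
  have he' := hd.dist_inv_smul h o
  set j := 2 * (N + 3 * e) + 2 * e + 1 with hj
  have hjl : j ≤ j * l := Nat.le_mul_of_pos_right j hl
  have hclose : ∀ s : G, d ((h * s ^ j * h⁻¹) • o) (h • s ^ j • o) = e := by
    intro s
    rw [mul_smul, mul_smul, hd.isometry, hd.isometry, hd.comm, he']
  have hbig : ∀ s : G, (s = g ∨ s = g⁻¹) → j * l ≤ d o ((h * s ^ j * h⁻¹) • o) + 2 * e := by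
    intro s hs
    have h1 := hd.triangle (h • o) o (h • s ^ j • o)
    have h2 := hd.triangle o ((h * s ^ j * h⁻¹) • o) (h • s ^ j • o)
    rw [hd.isometry, hray s hs, hd.comm] at h1
    rw [hclose] at h2
    omega
  have hinv : (h * g ^ j * h⁻¹)⁻¹ = h * g⁻¹ ^ j * h⁻¹ := by group
  refine ⟨j, hd.injective_lift_of_far o _ _ ?_⟩
  rw [hinv, ← inv_pow]
  have cross : ∀ s t : G, (s = g ∨ s = g⁻¹) → (t = g ∨ t = g⁻¹) →
      2 * gromov d o (s ^ j • o) ((h * t ^ j * h⁻¹) • o) <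
        min (d o (s ^ j • o)) (d o ((h * t ^ j * h⁻¹) • o)) := by
    intro s t hs ht
    have h1 := hN t s ht hs j (by omega)
    have h2 := hd.gromov_le_add_dist o ((h * t ^ j * h⁻¹) • o) (h • t ^ j • o) (s ^ j • o)
    rw [hclose, hd.gromov_comm] at h2
    have h3 := hbig t ht
    have h4 := hray s hs j
    omega
  rintro s t (⟨rfl, rfl⟩ | ⟨rfl, rfl⟩ | ⟨hs, ht⟩)
  · rw [hd.gromov_pow_inv_pow hax, hax, hd.dist_inv_pow hax]
    omega
  · have h1 := hd.gromov_le_add_dist o ((h * g ^ j * h⁻¹) • o) (h • g ^ j • o)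
      ((h * g⁻¹ ^ j * h⁻¹) • o)
    have h2 := hd.gromov_le_add_dist o ((h * g⁻¹ ^ j * h⁻¹) • o) (h • g⁻¹ ^ j • o) (h • g ^ j • o)
    rw [hclose] at h1 h2
    rw [hd.gromov_comm o (h • g ^ j • o)] at h1
    have h3 := hd.gromov_le_add_dist_base o (h • o) (h • g⁻¹ ^ j • o) (h • g ^ j • o)
    rw [hd.gromov_smul, hd.gromov_comm o (g⁻¹ ^ j • o), hd.gromov_pow_inv_pow hax] at h3
    have h4 := hbig g (Or.inl rfl)
    have h5 := hbig g⁻¹ (Or.inr rfl)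
    omega
  · rcases hs with rfl | rfl <;> rcases ht with rfl | rfl
    exacts [cross _ _ (by simp) (by simp), cross _ _ (by simp) (by simp),
      cross _ _ (by simp) (by simp), cross _ _ (by simp) (by simp)]

end Hyperbolic

/-- The alternative for groups acting on trees such that stabilizers of pairs of points are
uniformly solvable. -/
theorem alternative [Nonempty X] {n₀ : ℕ}
    (hstab : ∀ x y : X, x ≠ y →
      derivedSub (MulAction.stabilizer G x ⊓ MulAction.stabilizer G y) n₀ = ⊥) (Γ : Subgroup G) :
    ContainsNonabelianFree Γ ∨ Group.IsSolvable Γ ∨ ∃ x : X, Γ ≤ MulAction.stabilizer G x := by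
  by_cases hell : ∀ g ∈ Γ, ∀ x, d x (g • g • x) ≤ d x (g • x)
  · exact Or.inr (hd.isSolvable_or_fixed_of_elliptic hstab hell)
  push Not at hell
  obtain ⟨g, hg, x, hx⟩ := hell
  obtain ⟨o, l, hl, hax⟩ := hd.exists_axis hx
  have hax' := hd.dist_inv_pow hax
  by_cases hmeet : ∀ h ∈ Γ, ∃ s t : G, (s = g ∨ s = g⁻¹) ∧ (t = g ∨ t = g⁻¹) ∧
      SameEnd d o (h • fun n => s ^ n • o) (fun n => t ^ n • o)
  swap
  · push Not at hmeet
    obtain ⟨h, hh, hsep⟩ := hmeet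
    obtain ⟨j, hj⟩ := hd.injective_lift_of_not_sameEnd hax hl hsep
    left
    have hb : h * g ^ j * h⁻¹ ∈ Γ := mul_mem (mul_mem hh (pow_mem hg j)) (inv_mem hh)
    refine containsNonabelianFree_iff.2
      ⟨FreeGroup.lift ![⟨g ^ j, pow_mem hg j⟩, ⟨h * g ^ j * h⁻¹, hb⟩], ?_⟩
    refine Function.Injective.of_comp (f := Γ.subtype) ?_
    rw [← MonoidHom.coe_comp]
    convert hj using 2
    ext i
    fin_cases i <;> simp
  right; left
  have hp := hd.isRay_pow hax
  have hq := hd.isRay_pow hax'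
  have hpp := hd.sameEnd_ray hp hl
  have hqq := hd.sameEnd_ray hq hl
  have solp := fun S => hd.isSolvable_of_fixes_end hp hl hstab (S := S)
  have solq := fun S => hd.isSolvable_of_fixes_end hq hl hstab (S := S)
  simp only [pow_zero, one_smul] at hpp hqq solp solq
  set p : ℕ → X := fun n => g ^ n • o with hpdef
  set q : ℕ → X := fun n => g⁻¹ ^ n • o with hqdef
  have hpq : ¬ SameEnd d o p q := by
    intro h
    obtain ⟨M, hM⟩ := h 1
    have := hM M M le_rfl le_rfl
    rw [hd.gromov_pow_inv_pow hax] at this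
    omega
  have shift : ∀ u v : ℕ → X, SameEnd d o v v → (∀ n, u n = v (n + 1)) → SameEnd d o u v := by
    intro u v hv huv N
    obtain ⟨M, hM⟩ := hv N
    exact ⟨M, fun n m hn hm => by rw [huv]; exact hM _ _ (by omega) hm⟩
  have hgp : SameEnd d o (g • p) p := shift _ _ hpp fun n => by
    simp [hpdef, ← mul_smul, pow_succ']
  have hgq : SameEnd d o (g⁻¹ • q) q := shift _ _ hqq fun n => by
    simp only [hqdef, Pi.smul_apply, ← mul_smul, pow_succ']
  have hgq : SameEnd d o (g • q) q := by
    have := hd.sameEnd_symm (hd.sameEnd_smul g hgq)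
    rwa [smul_inv_smul] at this
  have main := fixes_or_preserves_pair (r := SameEnd d o) (Γ := Γ) hd.sameEnd_symm hd.sameEnd_trans
    hd.sameEnd_smul hpq hg hgp hgq
    (fun h hh x hx hr => hd.sameEnd_axis_of_fixed hax hl (by
      rcases hx with rfl | rfl
      exacts [hd.sameEnd_smul h hpp, hd.sameEnd_smul h hqq]) hr)
    (fun h hh => by
      obtain ⟨s, t, hs, ht, hst⟩ := hmeet h hh
      refine ⟨_, _, ?_, ?_, hst⟩
      · rcases hs with rfl | rfl <;> simp [hpdef, hqdef]
      · rcases ht with rfl | rfl <;> simp [hpdef, hqdef])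
  rcases main with h | h | h
  · exact solp Γ h
  · exact solq Γ h
  · let S : Subgroup G :=
      { carrier := {h | SameEnd d o (h • p) p}
        mul_mem' := fun {a b} ha hb => by
          simp only [Set.mem_ofPred_eq, mul_smul] at *
          exact hd.sameEnd_trans (hd.sameEnd_smul a hb) ha
        one_mem' := by simpa using hpp
        inv_mem' := fun {a} ha => by
          have := hd.sameEnd_symm (hd.sameEnd_smul a⁻¹ ha)
          rwa [inv_smul_smul] at this }
    refine isSolvable_of_commutator_le (K := S) ?_ (solp S fun h hh => hh)
    rw [Subgroup.commutator_le]
    intro a ha b hb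
    exact (commutator_fixes_of_preserves_pair (r := SameEnd d o) hd.sameEnd_symm hd.sameEnd_trans
      hd.sameEnd_smul h ha hb).1

end IsTreeAction

/-- A group acting on a rooted tree described by its parent function, such that the edges and a
two-colouring are preserved. -/
structure IsRootedTreeAction (G : Type*) [Group G] {V : Type*} [MulAction G V] (o : V)
    (parent : V → V) (rank : V → ℕ) (col : V → Bool) : Prop where
  parent_root : parent o = o
  rank_parent_lt : ∀ {v}, v ≠ o → rank (parent v) < rank v
  col_parent : ∀ {v}, v ≠ o → col (parent v) = !col v
  col_smul : ∀ (g : G) v, col (g • v) = col v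
  smul_edge : ∀ (g : G) {v}, v ≠ o → (g • v ≠ o ∧ parent (g • v) = g • parent v) ∨
    (g • parent v ≠ o ∧ parent (g • parent v) = g • v)

namespace IsRootedTreeAction

open scoped Classical in
/-- The set of ancestors of a vertex. -/
noncomputable def anc {V : Type*} (parent : V → V) (rank : V → ℕ) (v : V) : Finset V :=
  (Finset.range (rank v + 1)).image fun i => parent^[i] v

open scoped Classical in
/-- The number of common ancestors. -/
noncomputable def meet {V : Type*} (parent : V → V) (rank : V → ℕ) (u v : V) : ℕ :=
  (anc parent rank u ∩ anc parent rank v).card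

/-- The distance in a rooted tree. -/
noncomputable def dist {V : Type*} (parent : V → V) (rank : V → ℕ) (u v : V) : ℕ :=
  (anc parent rank u).card + (anc parent rank v).card - 2 * meet parent rank u v

variable {G V : Type*} [Group G] [MulAction G V] {o : V} {parent : V → V} {rank : V → ℕ}
  {col : V → Bool} (h : IsRootedTreeAction G o parent rank col)

open scoped Classical in
theorem meet_comm (u v : V) : meet parent rank u v = meet parent rank v u := by
  unfold meet
  rw [Finset.inter_comm]

open scoped Classical in
theorem meet_le_left (u v : V) : meet parent rank u v ≤ (anc parent rank u).card :=
  Finset.card_le_card Finset.inter_subset_left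

open scoped Classical in
theorem meet_le_right (u v : V) : meet parent rank u v ≤ (anc parent rank v).card :=
  Finset.card_le_card Finset.inter_subset_right

theorem dist_spec (u v : V) : dist parent rank u v + 2 * meet parent rank u v =
    (anc parent rank u).card + (anc parent rank v).card := by
  have h1 := meet_le_left (parent := parent) (rank := rank) u v
  have h2 := meet_le_right (parent := parent) (rank := rank) u v
  unfold dist
  omega

open scoped Classical in
theorem self_mem_anc (v : V) : v ∈ anc parent rank v := by
  unfold anc
  exact Finset.mem_image.2 ⟨0, by simp, rfl⟩

theorem dist_self (v : V) : dist parent rank v v = 0 := by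
  simp [dist, meet, two_mul]

theorem dist_comm (u v : V) : dist parent rank u v = dist parent rank v u := by
  have h1 := dist_spec (parent := parent) (rank := rank) u v
  have h2 := dist_spec (parent := parent) (rank := rank) v u
  have h3 := meet_comm (parent := parent) (rank := rank) u v
  omega

include h

theorem iterate_parent_root (n : ℕ) : parent^[n] o = o :=
  Function.iterate_fixed h.parent_root n

theorem iterate_parent_eq_root {n : ℕ} {v : V} (hn : rank v ≤ n) : parent^[n] v = o := by
  induction n generalizing v with
  | zero =>
    by_contra hv
    have := h.rank_parent_lt (v := v) hv
    omega
  | succ n ih =>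
    by_cases hv : v = o
    · rw [hv, h.iterate_parent_root]
    · have := h.rank_parent_lt hv
      exact ih (v := parent v) (by omega)

open scoped Classical in
theorem mem_anc {u v : V} : u ∈ anc parent rank v ↔ ∃ n, parent^[n] v = u := by
  unfold anc
  rw [Finset.mem_image]
  constructor
  · rintro ⟨n, _, rfl⟩
    exact ⟨n, rfl⟩
  · rintro ⟨n, rfl⟩
    by_cases hn : n ≤ rank v
    · exact ⟨n, by simpa using Nat.lt_succ_of_le hn, rfl⟩
    · exact ⟨rank v, by simp, by
        rw [h.iterate_parent_eq_root le_rfl, h.iterate_parent_eq_root (by omega)]⟩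

theorem rank_le_of_mem_anc {u v : V} (hu : u ∈ anc parent rank v) : rank u ≤ rank v := by
  obtain ⟨n, rfl⟩ := h.mem_anc.1 hu
  induction n with
  | zero => simp
  | succ n ih =>
    rw [Function.iterate_succ_apply']
    refine le_trans ?_ (ih (h.mem_anc.2 ⟨n, rfl⟩))
    by_cases hv : parent^[n] v = o
    · rw [hv, h.parent_root]
    · exact (h.rank_parent_lt hv).le

theorem parent_mem_anc {u v : V} (hu : u ∈ anc parent rank v) : parent u ∈ anc parent rank v := by
  obtain ⟨n, rfl⟩ := h.mem_anc.1 hu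
  exact h.mem_anc.2 ⟨n + 1, Function.iterate_succ_apply' _ _ _⟩

theorem anc_subset {u v : V} (hu : u ∈ anc parent rank v) :
    anc parent rank u ⊆ anc parent rank v := by
  intro x hx
  obtain ⟨n, rfl⟩ := h.mem_anc.1 hu
  obtain ⟨m, rfl⟩ := h.mem_anc.1 hx
  exact h.mem_anc.2 ⟨m + n, Function.iterate_add_apply _ _ _ _⟩

theorem not_mem_anc_parent {v : V} (hv : v ≠ o) : v ∉ anc parent rank (parent v) := fun hmem => by
  have h1 := h.rank_le_of_mem_anc hmem
  have h2 := h.rank_parent_lt hv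
  omega

open scoped Classical in
theorem anc_eq_insert (v : V) :
    anc parent rank v = insert v (anc parent rank (parent v)) := by
  ext x
  rw [Finset.mem_insert, h.mem_anc, h.mem_anc]
  constructor
  · rintro ⟨n, rfl⟩
    cases n with
    | zero => exact Or.inl rfl
    | succ n => exact Or.inr ⟨n, rfl⟩
  · rintro (rfl | ⟨n, rfl⟩)
    exacts [⟨0, rfl⟩, ⟨n + 1, rfl⟩]

theorem card_anc {v : V} (hv : v ≠ o) :
    (anc parent rank v).card = (anc parent rank (parent v)).card + 1 := by
  classical
  rw [h.anc_eq_insert v, Finset.card_insert_of_notMem (h.not_mem_anc_parent hv)]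

theorem even_card_anc (v : V) : Even (anc parent rank v).card ↔ col v ≠ col o := by
  induction hn : rank v using Nat.strong_induction_on generalizing v with
  | _ n ih =>
    by_cases hv : v = o
    · subst hv
      have : anc parent rank v = {v} := by
        ext x
        rw [h.mem_anc, Finset.mem_singleton]
        simp [h.iterate_parent_root, eq_comm]
      simp [this]
    · rw [h.card_anc hv, Nat.even_add_one, ih _ (hn ▸ h.rank_parent_lt hv) (parent v) rfl,
        h.col_parent hv]
      cases col v <;> cases col o <;> simp

theorem subset_or_subset {v : V} {S T : Finset V} (hS : S ⊆ anc parent rank v)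
    (hT : T ⊆ anc parent rank v) (hS' : ∀ x ∈ S, parent x ∈ S) (hT' : ∀ x ∈ T, parent x ∈ T) :
    S ⊆ T ∨ T ⊆ S := by
  have iter : ∀ {R : Finset V}, (∀ x ∈ R, parent x ∈ R) → ∀ n, ∀ x ∈ R, parent^[n] x ∈ R := by
    intro R hR n
    induction n with
    | zero => exact fun x hx => hx
    | succ n ih => exact fun x hx => ih _ (hR x hx)
  by_contra! hcon
  obtain ⟨⟨x, hx, hxT⟩, y, hy, hyS⟩ := hcon.imp Finset.not_subset.1 Finset.not_subset.1
  obtain ⟨i, rfl⟩ := h.mem_anc.1 (hS hx)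
  obtain ⟨j, rfl⟩ := h.mem_anc.1 (hT hy)
  rcases le_total i j with hij | hij
  · apply hyS
    rw [← Nat.sub_add_cancel hij, Function.iterate_add_apply]
    exact iter hS' _ _ hx
  · apply hxT
    rw [← Nat.sub_add_cancel hij, Function.iterate_add_apply]
    exact iter hT' _ _ hy

theorem meet_ultra (u v w : V) :
    min (meet parent rank u v) (meet parent rank v w) ≤ meet parent rank u w := by
  classical
  have cl : ∀ a b : V, ∀ x ∈ anc parent rank a ∩ anc parent rank b,
      parent x ∈ anc parent rank a ∩ anc parent rank b := fun a b x hx =>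
    Finset.mem_inter.2 ⟨h.parent_mem_anc (Finset.mem_inter.1 hx).1,
      h.parent_mem_anc (Finset.mem_inter.1 hx).2⟩
  rw [min_le_iff]
  unfold meet
  rcases h.subset_or_subset Finset.inter_subset_right Finset.inter_subset_left (cl u v) (cl v w)
    with h1 | h1
  · exact Or.inl (Finset.card_le_card (Finset.subset_inter Finset.inter_subset_left
      (h1.trans Finset.inter_subset_right)))
  · exact Or.inr (Finset.card_le_card (Finset.subset_inter (h1.trans Finset.inter_subset_left)
      Finset.inter_subset_right))

theorem dist_four_point (x y z w : V) :
    dist parent rank x y + dist parent rank z w ≤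
      max (dist parent rank x z + dist parent rank y w)
        (dist parent rank x w + dist parent rank y z) := by
  have sp := dist_spec (parent := parent) (rank := rank)
  have cm := meet_comm (parent := parent) (rank := rank)
  have ul := h.meet_ultra
  have := sp x y; have := sp z w; have := sp x z; have := sp y w; have := sp x w; have := sp y z
  have := ul x z y; have := ul x w y; have := ul x y z; have := ul x w z; have := ul x y w
  have := ul x z w; have := ul y x z; have := ul y w z; have := ul y x w; have := ul y z w
  have := ul z x w; have := ul z y w
  have := cm y x; have := cm z x; have := cm w x; have := cm z y; have := cm w y; have := cm w z
  omega

theorem eq_of_dist {u v : V} (huv : dist parent rank u v = 0) : u = v := by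
  classical
  have h1 := dist_spec (parent := parent) (rank := rank) u v
  have h2 := meet_le_left (parent := parent) (rank := rank) u v
  have h3 := meet_le_right (parent := parent) (rank := rank) u v
  have e1 := Finset.eq_of_subset_of_card_le
    (Finset.inter_subset_left (s₁ := anc parent rank u) (s₂ := anc parent rank v))
    (by unfold meet at *; omega)
  have e2 := Finset.eq_of_subset_of_card_le
    (Finset.inter_subset_right (s₁ := anc parent rank u) (s₂ := anc parent rank v))
    (by unfold meet at *; omega)
  have e : anc parent rank u = anc parent rank v := e1.symm.trans e2
  have hu : u ∈ anc parent rank v := e ▸ self_mem_anc u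
  have hv : v ∈ anc parent rank u := e ▸ self_mem_anc v
  by_contra hne
  rw [h.anc_eq_insert v, Finset.mem_insert] at hu
  have r1 := h.rank_le_of_mem_anc (hu.resolve_left hne)
  have r2 := h.rank_le_of_mem_anc hv
  by_cases hvo : v = o
  · rcases hu with hu | hu
    · exact hne hu
    · obtain ⟨n, hn⟩ := h.mem_anc.1 hu
      rw [hvo, h.parent_root, h.iterate_parent_root] at hn
      exact hne (by rw [← hn, hvo])
  · have := h.rank_parent_lt hvo
    omega

theorem dist_parent_le (v : V) : dist parent rank v (parent v) ≤ 1 := by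
  classical
  by_cases hv : v = o
  · rw [hv, h.parent_root, dist_self]
    omega
  · have h1 := dist_spec (parent := parent) (rank := rank) v (parent v)
    have h2 := h.card_anc hv
    have h3 : meet parent rank v (parent v) = (anc parent rank (parent v)).card := by
      unfold meet
      rw [Finset.inter_eq_right.2 (h.anc_subset (h.parent_mem_anc (self_mem_anc v)))]
    omega

/-- The second vertex can be moved towards the first one. -/
theorem exists_dist_add_one_eq {u v : V} (huv : u ≠ v) :
    ∃ v', dist parent rank u v' + 1 = dist parent rank u v ∧
    ((v ≠ o ∧ v' = parent v) ∨ (v' ≠ o ∧ v = parent v')) := by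
  classical
  have h1 := dist_spec (parent := parent) (rank := rank) u v
  by_cases hv : v ∈ anc parent rank u
  · have hex := h.mem_anc.1 hv
    have hn := Nat.find_spec hex
    obtain ⟨n, hn'⟩ : ∃ n, Nat.find hex = n + 1 := by
      refine Nat.exists_eq_succ_of_ne_zero fun h0 => huv ?_
      rw [h0] at hn
      exact hn
    rw [hn', Function.iterate_succ_apply'] at hn
    have hmin : parent^[n] u ≠ v := Nat.find_min hex (by omega)
    set v' := parent^[n] u with hv'
    have hv'o : v' ≠ o := fun h0 => hmin (by rw [h0] at hn ⊢; rw [← hn, h.parent_root])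
    refine ⟨v', ?_, Or.inr ⟨hv'o, hn.symm⟩⟩
    have hm : v' ∈ anc parent rank u := h.mem_anc.2 ⟨n, rfl⟩
    have h2 := dist_spec (parent := parent) (rank := rank) u v'
    have h3 := h.card_anc hv'o
    have h4 : meet parent rank u v' = (anc parent rank v').card := by
      unfold meet
      rw [Finset.inter_eq_right.2 (h.anc_subset hm)]
    have h5 : meet parent rank u v = (anc parent rank v).card := by
      unfold meet
      rw [Finset.inter_eq_right.2 (h.anc_subset hv)]
    have h6 := meet_le_left (parent := parent) (rank := rank) u v'
    rw [hn] at h3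
    omega
  · have hvo : v ≠ o := fun h0 => hv (h0 ▸ h.mem_anc.2 ⟨rank u, h.iterate_parent_eq_root le_rfl⟩)
    refine ⟨parent v, ?_, Or.inl ⟨hvo, rfl⟩⟩
    have h2 := dist_spec (parent := parent) (rank := rank) u (parent v)
    have h3 := h.card_anc hvo
    have h4 : meet parent rank u v = meet parent rank u (parent v) := by
      unfold meet
      rw [h.anc_eq_insert v, Finset.inter_insert_of_notMem hv]
    have h5 := meet_le_right (parent := parent) (rank := rank) u (parent v)
    have h6 := meet_le_left (parent := parent) (rank := rank) u (parent v)
    omega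

theorem dist_triangle (x y z : V) :
    dist parent rank x z ≤ dist parent rank x y + dist parent rank y z := by
  have h1 := h.dist_four_point x z y y
  have h2 := dist_self (parent := parent) (rank := rank) y
  have h3 := dist_comm (parent := parent) (rank := rank) y z
  omega

theorem dist_smul_le (g : G) (u v : V) :
    dist parent rank (g • u) (g • v) ≤ dist parent rank u v := by
  induction hn : dist parent rank u v generalizing v with
  | zero => rw [h.eq_of_dist hn, dist_self]
  | succ n ih =>
    have huv : u ≠ v := by
      rintro rfl
      rw [dist_self] at hn
      omega
    obtain ⟨v', h1, h2⟩ := h.exists_dist_add_one_eq huv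
    have h3 := ih v' (by omega)
    have edge : ∀ x : V, x ≠ o → dist parent rank (g • x) (g • parent x) ≤ 1 := by
      intro x hx
      rcases h.smul_edge g hx with ⟨_, h4⟩ | ⟨_, h4⟩
      · rw [← h4]; exact h.dist_parent_le _
      · rw [← h4, dist_comm]; exact h.dist_parent_le _
    have h5 : dist parent rank (g • v') (g • v) ≤ 1 := by
      rcases h2 with ⟨hv, rfl⟩ | ⟨hv, rfl⟩
      · rw [dist_comm]; exact edge v hv
      · exact edge v' hv
    have h6 := h.dist_triangle (g • u) (g • v') (g • v)
    omega

theorem exists_dist_eq (x y : V) (k : ℕ) (hk : k ≤ dist parent rank x y) :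
    ∃ z, dist parent rank x z = k ∧ dist parent rank z y = dist parent rank x y - k := by
  induction hn : dist parent rank x y generalizing y with
  | zero => exact ⟨x, by rw [dist_self]; omega, by omega⟩
  | succ n ih =>
    rcases hk.eq_or_lt with hk | hk
    · exact ⟨y, hk.symm, by rw [dist_self]; omega⟩
    have hxy : x ≠ y := by
      rintro rfl
      rw [dist_self] at hn
      omega
    obtain ⟨y', h1, h2⟩ := h.exists_dist_add_one_eq hxy
    obtain ⟨z, h3, h4⟩ := ih y' (by omega) (by omega)
    have h5 : dist parent rank y' y ≤ 1 := by
      rcases h2 with ⟨hv, rfl⟩ | ⟨hv, rfl⟩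
      · rw [dist_comm]; exact h.dist_parent_le _
      · exact h.dist_parent_le _
    have h6 := h.dist_triangle z y' y
    have h7 := h.dist_triangle x z y
    exact ⟨z, h3, by omega⟩

theorem isTreeAction : IsTreeAction G (dist parent rank) where
  dist_self := dist_self
  eq_of_dist := h.eq_of_dist
  comm := dist_comm
  four_point := h.dist_four_point
  even_perimeter x y z := by
    have h1 := dist_spec (parent := parent) (rank := rank) x y
    have h2 := dist_spec (parent := parent) (rank := rank) y z
    have h3 := dist_spec (parent := parent) (rank := rank) x z
    rw [Nat.even_iff]
    omega
  exists_between := h.exists_dist_eq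
  isometry g x y := by
    refine le_antisymm (h.dist_smul_le g x y) ?_
    simpa using h.dist_smul_le g⁻¹ (g • x) (g • y)
  even_smul g x := by
    have h1 := dist_spec (parent := parent) (rank := rank) x (g • x)
    have h2 := h.even_card_anc x
    have h3 := h.even_card_anc (g • x)
    rw [h.col_smul, ← h2, Nat.even_iff, Nat.even_iff] at h3
    rw [Nat.even_iff]
    omega

end IsRootedTreeAction

namespace TitsSL

open Matrix Matrix.SpecialLinearGroup
open scoped MatrixGroups

section Entries

variable {R : Type*} [CommRing R]

theorem mul_entry (A B : SL(2, R)) (i j : Fin 2) :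
    (A * B) i j = A i 0 * B 0 j + A i 1 * B 1 j := by
  change (A.1 * B.1) i j = _
  rw [Matrix.mul_apply, Fin.sum_univ_two]

theorem ext_entries {A B : SL(2, R)} (h1 : A 0 0 = B 0 0) (h2 : A 0 1 = B 0 1)
    (h3 : A 1 0 = B 1 0) (h4 : A 1 1 = B 1 1) : A = B := by
  ext i j
  fin_cases i <;> fin_cases j
  exacts [h1, h2, h3, h4]

/-- Diagonal matrices in `SL₂`. -/
def diag : Rˣ →* SL(2, R) where
  toFun z := ⟨!![(z : R), 0; 0, ((z⁻¹ : Rˣ) : R)], by simp [Matrix.det_fin_two]⟩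
  map_one' := by
    apply ext_entries
    · change ((1 : Rˣ) : R) = 1
      simp
    · change (0 : R) = 0
      rfl
    · change (0 : R) = 0
      rfl
    · change (((1 : Rˣ)⁻¹ : Rˣ) : R) = 1
      simp
  map_mul' z w := by
    refine ext_entries (Eq.trans ?_ (mul_entry _ _ _ _).symm)
      (Eq.trans ?_ (mul_entry _ _ _ _).symm) (Eq.trans ?_ (mul_entry _ _ _ _).symm)
      (Eq.trans ?_ (mul_entry _ _ _ _).symm)
    · change ((z * w : Rˣ) : R) = z * w + 0 * 0
      simp
    · change (0 : R) = z * 0 + 0 * _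
      simp
    · change (0 : R) = 0 * w + _ * 0
      simp
    · change (((z * w)⁻¹ : Rˣ) : R) = 0 * 0 + ((z⁻¹ : Rˣ) : R) * ((w⁻¹ : Rˣ) : R)
      simp [mul_comm]

theorem diag_zero_zero (z : Rˣ) : diag z 0 0 = (z : R) := rfl

theorem diag_zero_one (z : Rˣ) : diag z 0 1 = (0 : R) := rfl

theorem diag_one_zero (z : Rˣ) : diag z 1 0 = (0 : R) := rfl

theorem diag_one_one (z : Rˣ) : diag z 1 1 = ((z⁻¹ : Rˣ) : R) := rfl

theorem diag_mul_apply_zero (z : Rˣ) (A : SL(2, R)) (j : Fin 2) :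
    (diag z * A) 0 j = z * A 0 j := by
  rw [mul_entry, diag_zero_zero, diag_zero_one, zero_mul, add_zero]

theorem diag_mul_apply_one (z : Rˣ) (A : SL(2, R)) (j : Fin 2) :
    (diag z * A) 1 j = ((z⁻¹ : Rˣ) : R) * A 1 j := by
  rw [mul_entry, diag_one_zero, diag_one_one, zero_mul, zero_add]

theorem det_entry (A : SL(2, R)) : A 0 0 * A 1 1 - A 0 1 * A 1 0 = 1 := by
  have := A.det_coe
  rwa [Matrix.det_fin_two] at this

theorem inv_entries (A : SL(2, R)) :
    A⁻¹ 0 0 = A 1 1 ∧ A⁻¹ 0 1 = -A 0 1 ∧ A⁻¹ 1 0 = -A 1 0 ∧ A⁻¹ 1 1 = A 0 0 := by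
  rw [Matrix.SpecialLinearGroup.SL2_inv_expl]
  simp

/-- All entries of the matrix are nonzero. -/
def IsGeneric (A : SL(2, R)) : Prop := A 0 0 ≠ 0 ∧ A 0 1 ≠ 0 ∧ A 1 0 ≠ 0 ∧ A 1 1 ≠ 0

/-- The first columns of two matrices are proportional. -/
def SameLine (A B : SL(2, R)) : Prop := A 0 0 * B 1 0 = A 1 0 * B 0 0

end Entries

variable {K : Type*} [Field K]

theorem SameLine.symm {A B : SL(2, K)} (h : SameLine A B) : SameLine B A := by
  unfold SameLine at *
  linear_combination -h

theorem col_ne_zero (A : SL(2, K)) : A 0 0 ≠ 0 ∨ A 1 0 ≠ 0 := by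
  by_contra! h
  have := det_entry A
  simp [h.1, h.2] at this

theorem SameLine.trans {A B C : SL(2, K)} (h : SameLine A B) (h' : SameLine B C) :
    SameLine A C := by
  unfold SameLine at *
  rcases col_ne_zero B with hB | hB
  · apply mul_left_cancel₀ hB
    linear_combination A 0 0 * h' + C 0 0 * h
  · apply mul_left_cancel₀ hB
    linear_combination C 1 0 * h + A 1 0 * h'

theorem SameLine.smul (g : SL(2, K)) {A B : SL(2, K)} (h : SameLine A B) :
    SameLine (g • A) (g • B) := by
  unfold SameLine at *
  simp only [smul_eq_mul, mul_entry]
  linear_combination (g 0 0 * g 1 1 - g 0 1 * g 1 0) * h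

/-- The group of upper triangular matrices. -/
def upper (K : Type*) [Field K] : Subgroup SL(2, K) where
  carrier := {A | A 1 0 = 0}
  mul_mem' {A B} hA hB := by
    simp only [Set.mem_ofPred_eq] at *
    rw [mul_entry, hA, hB]; ring
  one_mem' := by simp
  inv_mem' {A} hA := by
    simp only [Set.mem_ofPred_eq] at *
    rw [(inv_entries A).2.2.1, hA, neg_zero]

theorem isSolvable_upper : Group.IsSolvable (upper K) := by
  let N : Subgroup SL(2, K) :=
    { carrier := {A | A 1 0 = 0 ∧ A 0 0 = 1 ∧ A 1 1 = 1}
      mul_mem' := fun {A B} hA hB => by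
        simp only [Set.mem_ofPred_eq] at *
        simp [mul_entry, hA, hB]
      one_mem' := by simp
      inv_mem' := fun {A} hA => by
        simp only [Set.mem_ofPred_eq] at *
        obtain ⟨h1, h2, h3, h4⟩ := inv_entries A
        rw [h1, h3, h4]
        simp [hA] }
  refine isSolvable_of_commutator_le (K := N) ?_
    (isSolvable_of_commutator_le (K := ⊥) ?_ inferInstance)
  · rw [Subgroup.commutator_le]
    intro A hA B hB
    have hA : A 1 0 = 0 := hA
    have hB : B 1 0 = 0 := hB
    obtain ⟨a1, a2, a3, a4⟩ := inv_entries A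
    obtain ⟨b1, b2, b3, b4⟩ := inv_entries B
    have dA := det_entry A
    have dB := det_entry B
    change (A * B * A⁻¹ * B⁻¹) 1 0 = 0 ∧ (A * B * A⁻¹ * B⁻¹) 0 0 = 1 ∧
      (A * B * A⁻¹ * B⁻¹) 1 1 = 1
    rw [hA] at dA a3
    rw [hB] at dB b3
    simp only [mul_entry, a1, a2, a3, a4, b1, b2, b3, b4, hA, hB]
    refine ⟨by ring, ?_, ?_⟩
    · linear_combination (B 0 0 * B 1 1) * dA + dB
    · linear_combination (B 0 0 * B 1 1) * dA + dB
  · rw [Subgroup.commutator_le]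
    intro A hA B hB
    rw [Subgroup.mem_bot, commutatorElement_eq_one_iff_mul_comm]
    obtain ⟨a1, a2, a3⟩ := hA
    obtain ⟨b1, b2, b3⟩ := hB
    apply ext_entries <;> simp only [mul_entry, a1, a2, a3, b1, b2, b3] <;> ring

theorem inv_mul_mul_mem_upper {A h : SL(2, K)} (hA : SameLine (h • A) A) :
    A⁻¹ * h * A ∈ upper K := by
  change (A⁻¹ * h * A) 1 0 = 0
  obtain ⟨a1, a2, a3, a4⟩ := inv_entries A
  unfold SameLine at hA
  rw [smul_eq_mul] at hA
  rw [mul_assoc, mul_entry, a3, a4]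
  linear_combination -hA

/-- The subgroup of conjugates. -/
theorem isSolvable_of_fixes_line {Γ : Subgroup SL(2, K)} (A : SL(2, K))
    (hA : ∀ h ∈ Γ, SameLine (h • A) A) : Group.IsSolvable Γ := by
  have := isSolvable_upper (K := K)
  have hf : ∀ h : Γ, ((MulAut.conj A⁻¹).toMonoidHom.comp Γ.subtype) h ∈ upper K := fun h => by
    simpa using inv_mul_mul_mem_upper (hA h h.2)
  refine Group.isSolvable_of_isSolvable_injective
    (f := (((MulAut.conj A⁻¹).toMonoidHom.comp Γ.subtype).codRestrict (upper K) hf)) ?_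
  intro x y hxy
  exact Subtype.ext ((MulAut.conj A⁻¹).injective (congrArg Subtype.val hxy))

/-- If no element is generic with respect to the axes of a diagonal matrix, then the group is
solvable. -/
theorem isSolvable_of_not_generic {Γ : Subgroup SL(2, K)} {z : Kˣ} (hz : (z : K) ^ 2 ≠ 1)
    (hg : diag z ∈ Γ) (hΓ : ∀ h ∈ Γ, ¬ IsGeneric h) : Group.IsSolvable Γ := by
  let w : SL(2, K) := ⟨!![0, -1; 1, 0], by simp [Matrix.det_fin_two]⟩
  have w0 : w 0 0 = 0 := rfl
  have w1 : w 1 0 = 1 := rfl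
  have line1 : ∀ B : SL(2, K), SameLine B 1 ↔ B 1 0 = 0 := fun B => by
    simp [SameLine, eq_comm]
  have linew : ∀ B : SL(2, K), SameLine B w ↔ B 0 0 = 0 := fun B => by
    simp [SameLine, w0, w1]
  have col : ∀ h : SL(2, K), (h • w) 0 0 = h 0 1 ∧ (h • w) 1 0 = h 1 1 := fun h => by
    simp [mul_entry, w0, w1]
  have main := fixes_or_preserves_pair (r := SameLine) (Γ := Γ) (p := (1 : SL(2, K))) (q := w)
    SameLine.symm SameLine.trans SameLine.smul (by rw [linew]; simp) hg
    (by rw [line1, smul_eq_mul, diag_mul_apply_one]; simp)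
    (by rw [linew, smul_eq_mul, diag_mul_apply_zero, w0, mul_zero])
    (fun h _ x _ hr => by
      rw [line1, linew]
      unfold SameLine at hr
      rw [smul_eq_mul (a := diag z), diag_mul_apply_zero, diag_mul_apply_one] at hr
      have hz0 : (z : K) * ((z⁻¹ : Kˣ) : K) = 1 := by simp
      have h1 : ((z : K) ^ 2 - 1) * ((h • x) 1 0 * (h • x) 0 0) = 0 := by
        linear_combination (z : K) * hr + (h • x) 1 0 * (h • x) 0 0 * hz0
      exact mul_eq_zero.1 ((mul_eq_zero.1 h1).resolve_left (sub_ne_zero.2 hz)))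
    (fun h hh => by
      have h1 := hΓ h hh
      unfold IsGeneric at h1
      by_cases h00 : h 0 0 = 0
      · exact ⟨1, w, by simp, by simp, by rw [linew]; simpa using h00⟩
      by_cases h10 : h 1 0 = 0
      · exact ⟨1, 1, by simp, by simp, by rw [line1]; simpa using h10⟩
      by_cases h01 : h 0 1 = 0
      · exact ⟨w, w, by simp, by simp, by rw [linew, (col h).1, h01]⟩
      · exact ⟨w, 1, by simp, by simp, by rw [line1, (col h).2]; tauto⟩)
  rcases main with h | h | h
  · exact isSolvable_of_fixes_line 1 h
  · exact isSolvable_of_fixes_line w h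
  · refine isSolvable_of_commutator_le (K := upper K) ?_ isSolvable_upper
    rw [Subgroup.commutator_le]
    intro a ha b hb
    have h3 := (commutator_fixes_of_preserves_pair (r := SameLine) SameLine.symm SameLine.trans
      SameLine.smul h ha hb).1
    rw [line1, smul_eq_mul, mul_one] at h3
    exact h3

theorem trace_entry {R : Type*} [CommRing R] (A : SL(2, R)) : A.1.trace = A 0 0 + A 1 1 :=
  Matrix.trace_fin_two _

theorem trace_inv_mul_mul {R : Type*} [CommRing R] (A g : SL(2, R)) :
    (A⁻¹ * g * A).1.trace = g.1.trace := by
  change ((A⁻¹ * g).1 * A.1).trace = _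
  rw [Matrix.trace_mul_comm]
  change (A * (A⁻¹ * g)).1.trace = _
  rw [mul_inv_cancel_left]

theorem finite_of_finite_trace {Γ : Subgroup SL(2, K)} {z : Kˣ} (hz : (z : K) ^ 2 ≠ 1)
    (hg : diag z ∈ Γ) {k : SL(2, K)} (hk : k ∈ Γ) (hkg : IsGeneric k) {T : Set K} (hT : T.Finite)
    (hΓ : ∀ h ∈ Γ, h.1.trace ∈ T) : Finite Γ := by
  have := hT.to_subtype
  let f : Γ → T × T × T × T := fun h =>
    (⟨_, hΓ h h.2⟩, ⟨_, hΓ _ (mul_mem hg h.2)⟩, ⟨_, hΓ _ (mul_mem h.2 hk)⟩,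
      ⟨_, hΓ _ (mul_mem hg (mul_mem h.2 hk))⟩)
  refine Finite.of_injective f fun x y hxy => ?_
  obtain ⟨x, hx⟩ := x
  obtain ⟨y, hy⟩ := y
  simp only [f, Prod.mk.injEq, Subtype.mk.injEq] at hxy
  obtain ⟨h1, h2, h3, h4⟩ := hxy
  simp only [trace_entry, diag_mul_apply_zero, diag_mul_apply_one] at h1 h2 h3 h4
  simp only [mul_entry] at h3 h4
  obtain ⟨_, k01, k10, _⟩ := hkg
  have hz0 : (z : K) * ((z⁻¹ : Kˣ) : K) = 1 := by simp
  have hz1 : (z : K) ^ 2 - 1 ≠ 0 := sub_ne_zero.2 hz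
  set zi := ((z⁻¹ : Kˣ) : K) with hzi
  have e0 : x 0 0 = y 0 0 := by
    apply mul_left_cancel₀ hz1
    linear_combination (z : K) * h2 - h1 + (y 1 1 - x 1 1) * hz0
  have e1 : x 1 1 = y 1 1 := by linear_combination h1 - e0
  have e2 : x 0 1 = y 0 1 := by
    apply mul_left_cancel₀ hz1
    apply mul_left_cancel₀ k10
    linear_combination (z : K) * h4 - h3 - ((z : K) ^ 2 - 1) * k 0 0 * e0 -
      (x 1 0 * k 0 1 + x 1 1 * k 1 1 - y 1 0 * k 0 1 - y 1 1 * k 1 1) * hz0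
  have e3 : x 1 0 = y 1 0 := by
    apply mul_left_cancel₀ k01
    linear_combination h3 - k 0 0 * e0 - k 1 0 * e2 - k 1 1 * e1
  exact Subtype.ext (ext_entries e0 e2 e3 e1)

theorem exists_conj_diag {g : SL(2, K)} {z : Kˣ} (hz : (z : K) ^ 2 ≠ 1) (h10 : g 1 0 = 0)
    (h00 : g 0 0 = z) : ∃ A : SL(2, K), A⁻¹ * g * A = diag z := by
  have hdet := det_entry g
  have hz0 : (z : K) * ((z⁻¹ : Kˣ) : K) = 1 := by simp
  set zi := ((z⁻¹ : Kˣ) : K) with hzi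
  have h11 : g 1 1 = zi := by
    apply mul_left_cancel₀ z.ne_zero
    linear_combination hdet - hz0 - g 1 1 * h00 + g 0 1 * h10
  have hne : zi - z ≠ 0 := fun h => hz (by linear_combination (-(z : K)) * h + hz0)
  let A : SL(2, K) := ⟨!![1, g 0 1 / (zi - z); 0, 1], by simp [Matrix.det_fin_two]⟩
  refine ⟨A, ?_⟩
  rw [mul_assoc, inv_mul_eq_iff_eq_mul]
  have e : A 0 0 = 1 ∧ A 0 1 = g 0 1 / (zi - z) ∧ A 1 0 = 0 ∧ A 1 1 = 1 := ⟨rfl, rfl, rfl, rfl⟩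
  have e' : diag z 0 0 = (z : K) ∧ diag z 0 1 = 0 ∧ diag z 1 0 = 0 ∧ diag z 1 1 = zi :=
    ⟨rfl, rfl, rfl, rfl⟩
  obtain ⟨e1, e2, e3, e4⟩ := e
  obtain ⟨f1, f2, f3, f4⟩ := e'
  apply ext_entries <;> simp only [mul_entry, e1, e2, e3, e4, f1, f2, f3, f4, h10, h00, h11] <;>
    field_simp <;> ring

variable [IsAlgClosed K] [CharZero K]

/-- The eigenvalue of a matrix, with a matrix conjugating it to a triangular one. -/
theorem exists_conj_upper (g : SL(2, K)) : ∃ A : SL(2, K), A⁻¹ * g * A ∈ upper K := by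
  by_cases hc : g 1 0 = 0
  · exact ⟨1, by rw [inv_one, one_mul, mul_one]; exact hc⟩
  obtain ⟨s, hs⟩ := IsAlgClosed.exists_pow_nat_eq ((g 0 0 + g 1 1) ^ 2 - 4) (n := 2) (by norm_num)
  set e := (g 0 0 + g 1 1 + s) / 2 with he
  have he2 : e ^ 2 - (g 0 0 + g 1 1) * e + 1 = 0 := by
    rw [he]
    field_simp
    linear_combination hs
  let A : SL(2, K) := ⟨!![e - g 1 1, -(g 1 0)⁻¹; g 1 0, 0], by
    simp [Matrix.det_fin_two, hc]⟩
  have A0 : A 0 0 = e - g 1 1 := rfl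
  have A1 : A 1 0 = g 1 0 := rfl
  refine ⟨A, inv_mul_mul_mem_upper ?_⟩
  unfold SameLine
  rw [smul_eq_mul, mul_entry, mul_entry, A0, A1]
  linear_combination -g 1 0 * det_entry g - g 1 0 * he2

theorem isSolvable_of_trace_sq {Γ : Subgroup SL(2, K)} (hΓ : ∀ h ∈ Γ, h.1.trace ^ 2 = 4) :
    Group.IsSolvable Γ := by
  by_cases hup : ∀ h ∈ Γ, h 1 0 = 0
  · exact isSolvable_of_fixes_line 1 fun h hh => by simp [SameLine, hup h hh]
  push Not at hup
  obtain ⟨g, hg, hg10⟩ := hup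
  obtain ⟨A, hA⟩ := exists_conj_upper g
  have htr : ∀ h ∈ Γ, ((A⁻¹ * h * A) 0 0 + (A⁻¹ * h * A) 1 1) ^ 2 = 4 := fun h hh => by
    rw [← trace_entry, trace_inv_mul_mul]
    exact hΓ h hh
  obtain ⟨g', hg'⟩ : ∃ g', g' = A⁻¹ * g * A := ⟨_, rfl⟩
  have g10 : g' 1 0 = 0 := by rw [hg']; exact hA
  have hgtr := htr g hg
  rw [← hg'] at hgtr
  have hdet := det_entry g'
  rw [g10, mul_zero, sub_zero] at hdet
  have hdiag : g' 0 0 = g' 1 1 := by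
    refine sub_eq_zero.1 ((pow_eq_zero_iff two_ne_zero).1 ?_)
    linear_combination hgtr - 4 * hdet
  have hz : g' 0 0 * g' 0 0 = 1 := by linear_combination hdet + g' 0 0 * hdiag
  have hu : g' 0 1 ≠ 0 := fun hu => by
    have hgA : g = A * g' * A⁻¹ := by rw [hg']; group
    apply hg10
    obtain ⟨a1, a2, a3, a4⟩ := inv_entries A
    rw [hgA, mul_entry, mul_entry, mul_entry, a1, a3, g10, hu, ← hdiag]
    ring
  refine isSolvable_of_fixes_line A fun h hh => ?_
  obtain ⟨h', hh'⟩ : ∃ h', h' = A⁻¹ * h * A := ⟨_, rfl⟩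
  have t0 := htr h hh
  have t1 := htr (g * h) (mul_mem hg hh)
  have t2 := htr (g * (g * h)) (mul_mem hg (mul_mem hg hh))
  have e1 : A⁻¹ * (g * h) * A = g' * h' := by rw [hg', hh']; group
  have e2 : A⁻¹ * (g * (g * h)) * A = g' * (g' * h') := by rw [hg', hh']; group
  rw [← hh'] at t0
  rw [e1] at t1
  rw [e2] at t2
  simp only [mul_entry, g10, ← hdiag] at t1 t2
  have hh10 : h' 1 0 = 0 := by
    have hz2 : g' 0 0 ≠ 0 := left_ne_zero_of_mul_eq_one hz
    have hy : (g' 0 0 * g' 0 1 * h' 1 0) ^ 2 = 0 := by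
      have h2 : (2 : K) ≠ 0 := two_ne_zero
      apply mul_left_cancel₀ h2
      linear_combination t2 - 2 * t1 + t0 - ((g' 0 0 * g' 0 0 - 1) * (h' 0 0 + h' 1 1) ^ 2 +
        4 * (h' 0 0 + h' 1 1) * (g' 0 0 * g' 0 1 * h' 1 0) + 2 * (g' 0 1 * h' 1 0) ^ 2) * hz
    simpa [hz2, hu] using hy
  unfold SameLine
  have e3 : h • A = A * h' := by rw [hh', smul_eq_mul]; group
  rw [e3, mul_entry, mul_entry, hh10]
  ring

end TitsSL

namespace TitsSL

open Matrix Matrix.SpecialLinearGroup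
open scoped MatrixGroups

section PingPong

variable {L : Type*} [Field L] (v : AbsoluteValue L ℝ)

theorem cone_image_le {ε S m : ℝ} (hε0 : 0 < ε) (hε1 : ε ≤ 1) (hε : 3 * ε * S ≤ m)
    {p q r s x y : L} (hp : m ≤ v p) (hq : v q ≤ S) (hr : v r ≤ S) (hs : v s ≤ S)
    (hxy : v y ≤ ε * v x) : ε * v (r * x + s * y) ≤ v (p * x + q * y) := by
  have hx := v.nonneg x
  have hy := v.nonneg y
  have hS : 0 ≤ S := (v.nonneg q).trans hq
  have h1 : v (p * x) ≤ v (p * x + q * y) + v (q * y) := by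
    have := v.add_le (p * x + q * y) (-(q * y))
    rwa [add_neg_cancel_right, v.map_neg] at this
  have h2 := v.add_le (r * x) (s * y)
  simp only [map_mul] at h1 h2
  have h3 : v q * v y ≤ S * (ε * v x) := by gcongr
  have h4 : m * v x ≤ v p * v x := by gcongr
  have h5 : v r * v x ≤ S * v x := by gcongr
  have h6 : v s * v y ≤ S * v x := by
    have : v y ≤ v x := hxy.trans (mul_le_of_le_one_left hx hε1)
    gcongr
  have h7 : ε * v (r * x + s * y) ≤ ε * (S * v x + S * v x) := by
    gcongr
    linarith
  have h8 : 3 * ε * S * v x ≤ m * v x := by gcongr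
  linarith

/-- The matrices whose first column is close to the first axis. -/
def coneX (ε : ℝ) : Set SL(2, L) := {A | v (A 1 0) < ε * v (A 0 0)}

/-- The matrices whose first column is close to the second axis. -/
def coneY (ε : ℝ) : Set SL(2, L) := {A | v (A 0 0) < ε * v (A 1 0)}

variable {v}

theorem disjoint_coneX_coneY {ε : ℝ} (hε1 : ε ≤ 1) : Disjoint (coneX v ε) (coneY v ε) := by
  rw [Set.disjoint_left]
  intro A hA hB
  have hA : v (A 1 0) < ε * v (A 0 0) := hA
  have hB : v (A 0 0) < ε * v (A 1 0) := hB
  have h1 := mul_le_of_le_one_left (v.nonneg (A 0 0)) hε1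
  have h2 := mul_le_of_le_one_left (v.nonneg (A 1 0)) hε1
  linarith

theorem diag_smul_mem_coneX {ε : ℝ} (hε0 : 0 < ε) {z : Lˣ} (hz : 1 < ε ^ 2 * v z ^ 2)
    {A : SL(2, L)} (hA : A ∉ coneY v ε) : diag z * A ∈ coneX v ε := by
  have hA : ¬ v (A 0 0) < ε * v (A 1 0) := hA
  change v ((diag z * A) 1 0) < ε * v ((diag z * A) 0 0)
  rw [diag_mul_apply_one, diag_mul_apply_zero, map_mul, map_mul]
  push Not at hA
  have hz0 : 0 < v z := v.pos z.ne_zero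
  have hzi : v z * v ((z⁻¹ : Lˣ) : L) = 1 := by rw [← map_mul]; simp
  have hpos : 0 < v (A 0 0) := by
    refine v.pos fun h0 => ?_
    rw [h0, map_zero] at hA
    have h1 : v (A 1 0) ≤ 0 := by
      by_contra! h
      have := mul_pos hε0 h
      linarith
    have h2 := v.eq_zero.1 (le_antisymm h1 (v.nonneg _))
    rcases col_ne_zero A with h | h
    exacts [h h0, h h2]
  refine lt_of_mul_lt_mul_left ?_ (mul_pos hε0 hz0).le
  calc ε * v z * (v ((z⁻¹ : Lˣ) : L) * v (A 1 0))
      = ε * v (A 1 0) := by linear_combination ε * v (A 1 0) * hzi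
    _ ≤ 1 * v (A 0 0) := by rwa [one_mul]
    _ < ε ^ 2 * v z ^ 2 * v (A 0 0) := by gcongr
    _ = ε * v z * (ε * (v z * v (A 0 0))) := by ring

theorem inv_diag_smul_mem_coneY {ε : ℝ} (hε0 : 0 < ε) {z : Lˣ} (hz : 1 < ε ^ 2 * v z ^ 2)
    {A : SL(2, L)} (hA : A ∉ coneX v ε) : (diag z)⁻¹ * A ∈ coneY v ε := by
  have hA : ¬ v (A 1 0) < ε * v (A 0 0) := hA
  change v (((diag z)⁻¹ * A) 0 0) < ε * v (((diag z)⁻¹ * A) 1 0)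
  rw [← map_inv, diag_mul_apply_one, diag_mul_apply_zero, map_mul, map_mul, inv_inv]
  push Not at hA
  have hz0 : 0 < v z := v.pos z.ne_zero
  have hzi : v z * v ((z⁻¹ : Lˣ) : L) = 1 := by rw [← map_mul]; simp
  have hpos : 0 < v (A 1 0) := by
    refine v.pos fun h0 => ?_
    rw [h0, map_zero] at hA
    have h1 : v (A 0 0) ≤ 0 := by
      by_contra! h
      have := mul_pos hε0 h
      linarith
    have h2 := v.eq_zero.1 (le_antisymm h1 (v.nonneg _))
    rcases col_ne_zero A with h | h
    exacts [h h2, h h0]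
  refine lt_of_mul_lt_mul_left ?_ (mul_pos hε0 hz0).le
  calc ε * v z * (v ((z⁻¹ : Lˣ) : L) * v (A 0 0))
      = ε * v (A 0 0) := by linear_combination ε * v (A 0 0) * hzi
    _ ≤ 1 * v (A 1 0) := by rwa [one_mul]
    _ < ε ^ 2 * v z ^ 2 * v (A 1 0) := by gcongr
    _ = ε * v z * (ε * (v z * v (A 1 0))) := by ring

theorem mul_notMem_cones {ε S m : ℝ} (hε0 : 0 < ε) (hε1 : ε ≤ 1) (hε : 3 * ε * S ≤ m)
    {k : SL(2, L)} (hk : ∀ i j, m ≤ v (k i j) ∧ v (k i j) ≤ S) {A : SL(2, L)}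
    (hA : A ∈ coneX v ε ∪ coneY v ε) : k * A ∉ coneX v ε ∪ coneY v ε := by
  have h : ε * v ((k * A) 0 0) ≤ v ((k * A) 1 0) ∧ ε * v ((k * A) 1 0) ≤ v ((k * A) 0 0) := by
    rw [mul_entry, mul_entry]
    rcases hA with hA | hA
    · have hA : v (A 1 0) ≤ ε * v (A 0 0) := le_of_lt hA
      exact ⟨cone_image_le v hε0 hε1 hε (hk _ _).1 (hk _ _).2 (hk _ _).2 (hk _ _).2 hA,
        cone_image_le v hε0 hε1 hε (hk _ _).1 (hk _ _).2 (hk _ _).2 (hk _ _).2 hA⟩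
    · have hA : v (A 0 0) ≤ ε * v (A 1 0) := le_of_lt hA
      rw [add_comm (k 0 0 * A 0 0), add_comm (k 1 0 * A 0 0)]
      exact ⟨cone_image_le v hε0 hε1 hε (hk _ _).1 (hk _ _).2 (hk _ _).2 (hk _ _).2 hA,
        cone_image_le v hε0 hε1 hε (hk _ _).1 (hk _ _).2 (hk _ _).2 (hk _ _).2 hA⟩
  rintro (hB | hB)
  · exact absurd hB (not_lt.2 h.1)
  · exact absurd hB (not_lt.2 h.2)

/-- A diagonal matrix expanded by an absolute value and its conjugate by a generic matrix have
powers generating a free group. -/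
theorem exists_injective_lift {z : Lˣ} (hz : 1 < v z) {k : SL(2, L)} (hk : IsGeneric k) :
    ∃ n : ℕ, Function.Injective
      (FreeGroup.lift ![diag z ^ n, k * diag z ^ n * k⁻¹] : FreeGroup (Fin 2) →* SL(2, L)) := by
  obtain ⟨S, m, hm, hkm⟩ : ∃ S m : ℝ, 0 < m ∧ ∀ i j, m ≤ v (k i j) ∧ v (k i j) ≤ S := by
    obtain ⟨h1, h2, h3, h4⟩ := hk
    refine ⟨v (k 0 0) + v (k 0 1) + v (k 1 0) + v (k 1 1),
      min (min (v (k 0 0)) (v (k 0 1))) (min (v (k 1 0)) (v (k 1 1))), ?_, ?_⟩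
    · simp [v.pos h1, v.pos h2, v.pos h3, v.pos h4]
    · have n1 := v.nonneg (k 0 0)
      have n2 := v.nonneg (k 0 1)
      have n3 := v.nonneg (k 1 0)
      have n4 := v.nonneg (k 1 1)
      intro i j
      constructor
      · fin_cases i <;> fin_cases j <;> simp
      · fin_cases i <;> fin_cases j <;> simp <;> linarith
  have hS : 0 < S := hm.trans_le ((hkm 0 0).1.trans (hkm 0 0).2)
  obtain ⟨ε, hε0, hε1, hε⟩ : ∃ ε : ℝ, 0 < ε ∧ ε ≤ 1 ∧ 3 * ε * S ≤ m := by
    refine ⟨min 1 (m / (3 * S)), by positivity, min_le_left _ _, ?_⟩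
    have := min_le_right 1 (m / (3 * S))
    rw [le_div_iff₀ (by positivity)] at this
    linarith
  obtain ⟨n, hn⟩ := pow_unbounded_of_one_lt (ε⁻¹) hz
  refine ⟨n, ?_⟩
  have hzn : 1 < ε ^ 2 * v ((z ^ n : Lˣ) : L) ^ 2 := by
    rw [Units.val_pow_eq_pow_val, map_pow, ← mul_pow]
    refine one_lt_pow₀ ?_ two_ne_zero
    rwa [inv_lt_iff_one_lt_mul₀' hε0] at hn
  rw [← map_pow]
  have hcone := fun A => mul_notMem_cones (A := A) hε0 hε1 hε hkm
  have hd : Disjoint (coneX v ε ∪ coneY v ε) {A | k⁻¹ * A ∈ coneX v ε ∪ coneY v ε} := by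
    rw [Set.disjoint_left]
    intro A hA hB
    have := hcone _ hB
    rw [mul_inv_cancel_left] at this
    exact this hA
  have hXY := disjoint_coneX_coneY (v := v) hε1
  refine injective_lift_of_ping_pong (α := SL(2, L)) _
    ![coneX v ε, {A | k⁻¹ * A ∈ coneX v ε}]
    ![coneY v ε, {A | k⁻¹ * A ∈ coneY v ε}] ?_ ?_ ?_ ?_ ?_ ?_
  · have h1 : (1 : SL(2, L)) ∈ coneX v ε := by simp [coneX, hε0]
    rw [Fin.forall_fin_two]
    refine ⟨⟨1, h1⟩, ⟨k, ?_⟩⟩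
    change k⁻¹ * k ∈ coneX v ε
    rwa [inv_mul_cancel]
  · have h1 : Disjoint (coneX v ε) {A | k⁻¹ * A ∈ coneX v ε} :=
      hd.mono Set.subset_union_left fun A hA => Or.inl hA
    intro i j hij
    fin_cases i <;> fin_cases j
    exacts [absurd rfl hij, h1, h1.symm, absurd rfl hij]
  · have h1 : Disjoint (coneY v ε) {A | k⁻¹ * A ∈ coneY v ε} :=
      hd.mono Set.subset_union_right fun A hA => Or.inr hA
    intro i j hij
    fin_cases i <;> fin_cases j
    exacts [absurd rfl hij, h1, h1.symm, absurd rfl hij]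
  · intro i j
    fin_cases i <;> fin_cases j
    · exact hXY
    · exact hd.mono Set.subset_union_left fun A hA => Or.inr hA
    · exact (hd.mono Set.subset_union_right fun A hA => Or.inl hA).symm
    · exact Set.disjoint_left.2 fun A hA hB => Set.disjoint_left.1 hXY hA hB
  · rw [Fin.forall_fin_two]
    refine ⟨fun A hA => diag_smul_mem_coneX hε0 hzn hA, fun A hA => ?_⟩
    change k⁻¹ * (k * diag (z ^ n) * k⁻¹ * A) ∈ coneX v ε
    rw [show k⁻¹ * (k * diag (z ^ n) * k⁻¹ * A) = diag (z ^ n) * (k⁻¹ * A) by group]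
    exact diag_smul_mem_coneX hε0 hzn hA
  · rw [Fin.forall_fin_two]
    refine ⟨fun A hA => inv_diag_smul_mem_coneY hε0 hzn hA, fun A hA => ?_⟩
    change k⁻¹ * ((k * diag (z ^ n) * k⁻¹)⁻¹ * A) ∈ coneY v ε
    rw [show k⁻¹ * ((k * diag (z ^ n) * k⁻¹)⁻¹ * A) = (diag (z ^ n))⁻¹ * (k⁻¹ * A) by group]
    exact inv_diag_smul_mem_coneY hε0 hzn hA

end PingPong

end TitsSL

namespace TitsSL

universe u

open Matrix Matrix.SpecialLinearGroup
open scoped MatrixGroups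

section AbsoluteValues

open NumberField IntermediateField IsDedekindDomain

/-- The absolute value induced by a homomorphism to the complex numbers. -/
noncomputable def complexAbs {L : Type*} [Field L] (φ : L →+* ℂ) : AbsoluteValue L ℝ :=
  (NormedField.toAbsoluteValue ℂ).comp φ.injective

theorem complexAbs_apply {L : Type*} [Field L] (φ : L →+* ℂ) (x : L) :
    complexAbs φ x = ‖φ x‖ := rfl

theorem exists_absoluteValue_of_numberField {L : Type*} [Field L] [NumberField L] {x : L}
    (hx0 : x ≠ 0) (hx : ∀ n : ℕ, 0 < n → x ^ n ≠ 1) : ∃ v : AbsoluteValue L ℝ, 1 < v x := by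
  by_cases hxint : IsIntegral ℤ x
  · by_contra! h
    obtain ⟨n, hn, hn1⟩ := Embeddings.pow_eq_one_of_norm_le_one L ℂ hx0 hxint fun φ => by
      simpa [complexAbs_apply] using h (complexAbs φ)
    exact hx n hn hn1
  · by_contra! h
    refine hxint ?_
    obtain ⟨y, rfl⟩ := HeightOneSpectrum.mem_integers_of_valuation_le_one (R := 𝓞 L) L x
      fun w => by
        have h1 := h (NumberField.HeightOneSpectrum.adicAbv L w)
        rw [NumberField.HeightOneSpectrum.adicAbv_def] at h1
        rwa [← NNReal.coe_one, NNReal.coe_le_coe, WithZeroMulInt.toNNReal_le_one_iff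
          (NumberField.HeightOneSpectrum.one_lt_absNorm_nnreal w)] at h1
    exact y.2

theorem exists_transcendental_one_lt_norm : ∃ t : ℂ, Transcendental ℚ t ∧ 1 < ‖t‖ := by
  obtain ⟨t, ht⟩ : ∃ t : ℂ, Transcendental ℚ t := by
    refine ⟨algebraMap ℝ ℂ (liouvilleNumber (2 : ℕ)), ?_⟩
    have := transcendental_liouvilleNumber (m := 2) le_rfl
    rw [transcendental_algebraMap_iff (algebraMap ℝ ℂ).injective]
    exact fun h => this ((IsFractionRing.isAlgebraic_iff ℤ ℚ ℝ).2 h)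
  obtain ⟨n, hn⟩ := exists_nat_gt (‖t‖ + 1)
  refine ⟨t + n, fun h => ht ?_, ?_⟩
  · simpa using h.sub (isAlgebraic_algebraMap (A := ℂ) (n : ℚ))
  · have : ‖(n : ℂ)‖ ≤ ‖t + n‖ + ‖t‖ := by simpa using norm_sub_le (t + n) t
    rw [Complex.norm_natCast] at this
    linarith

theorem exists_adjoin_hom {F K M : Type*} [Field F] [Field K] [Field M] [Algebra F K] [Algebra F M]
    {z : K} {t : M} (hz : Transcendental F z) (ht : Transcendental F t) :
    ∃ φ : F⟮z⟯ →+* M, φ (AdjoinSimple.gen F z) = t := by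
  let e := (RatFunc.algEquivOfTranscendental z hz).symm.trans
    (RatFunc.algEquivOfTranscendental t ht)
  refine ⟨(algebraMap F⟮t⟯ M).comp e.toAlgHom.toRingHom, ?_⟩
  have h1 : e (AdjoinSimple.gen F z) = AdjoinSimple.gen F t := by
    change RatFunc.algEquivOfTranscendental t ht
      ((RatFunc.algEquivOfTranscendental z hz).symm (AdjoinSimple.gen F z)) = _
    rw [RatFunc.algEquivOfTranscendental_symm_gen]
    exact Subtype.ext (RatFunc.algEquivOfTranscendental_X t ht)
  change algebraMap F⟮t⟯ M (e (AdjoinSimple.gen F z)) = t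
  rw [h1, AdjoinSimple.algebraMap_gen]

theorem exists_hom_of_transcendental {K : Type*} [Field K] [CharZero K] {z : K}
    (hz : Transcendental ℚ z) : ∃ φ : ℚ⟮z⟯ →+* ℂ, 1 < ‖φ (AdjoinSimple.gen ℚ z)‖ := by
  obtain ⟨t, ht, ht1⟩ := exists_transcendental_one_lt_norm
  obtain ⟨φ, hφ⟩ := exists_adjoin_hom hz ht
  exact ⟨φ, by rwa [hφ]⟩

theorem exists_absoluteValue {K : Type*} [Field K] [CharZero K] {z : K} (hz0 : z ≠ 0)
    (hz : ∀ n : ℕ, 0 < n → z ^ n ≠ 1) (L : Type*) [Field L] [Algebra ℚ⟮z⟯ L]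
    [FiniteDimensional ℚ⟮z⟯ L] :
    ∃ v : AbsoluteValue L ℝ, 1 < v (algebraMap ℚ⟮z⟯ L (AdjoinSimple.gen ℚ z)) := by
  have hinj := (algebraMap ℚ⟮z⟯ L).injective
  by_cases halg : IsAlgebraic ℚ z
  · have : CharZero L := charZero_of_injective_algebraMap hinj
    have h1 : FiniteDimensional ℚ ℚ⟮z⟯ := adjoin.finiteDimensional halg.isIntegral
    have : IsScalarTower ℚ ℚ⟮z⟯ L := IsScalarTower.rat
    have h2 : FiniteDimensional ℚ L := FiniteDimensional.trans ℚ ℚ⟮z⟯ L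
    have : NumberField L := ⟨⟩
    have hval : ((AdjoinSimple.gen ℚ z : ℚ⟮z⟯) : K) = z := AdjoinSimple.coe_gen ℚ z
    refine exists_absoluteValue_of_numberField ?_ fun n hn h => ?_
    · rw [Ne, map_eq_zero_iff _ hinj]
      exact fun h => hz0 (by rw [← hval, h]; rfl)
    · rw [← map_pow, map_eq_one_iff _ hinj] at h
      refine hz n hn ?_
      rw [← hval, ← IntermediateField.coe_pow, h]
      rfl
  · obtain ⟨φ, hφ⟩ := exists_hom_of_transcendental (z := z) halg
    let _ : Algebra ℚ⟮z⟯ ℂ := φ.toAlgebra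
    have ψ : L →ₐ[ℚ⟮z⟯] ℂ := IsAlgClosed.lift
    refine ⟨complexAbs ψ.toRingHom, ?_⟩
    rw [complexAbs_apply]
    change 1 < ‖ψ _‖
    rw [ψ.commutes]
    exact hφ

end AbsoluteValues

section Specialisation

open IntermediateField

theorem map_diag {R S : Type*} [CommRing R] [CommRing S] (f : R →+* S) (z : Rˣ) :
    SpecialLinearGroup.map f (diag z) = diag (Units.map f z) := by
  apply ext_entries
  · rfl
  · exact map_zero f
  · exact map_zero f
  · exact congrArg Units.val ((Units.map (f : R →* S)).map_inv z)

theorem map_lift {R S : Type*} [CommRing R] [CommRing S] (f : R →+* S) (z : Rˣ) (k : SL(2, R))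
    (n : ℕ) :
    (SpecialLinearGroup.map f).comp
      (FreeGroup.lift ![diag z ^ n, k * diag z ^ n * k⁻¹] : FreeGroup (Fin 2) →* SL(2, R)) =
    FreeGroup.lift ![diag (Units.map f z) ^ n, SpecialLinearGroup.map f k *
      diag (Units.map f z) ^ n * (SpecialLinearGroup.map f k)⁻¹] := by
  ext1 i
  fin_cases i <;> simp [map_diag]

theorem exists_algHom_finite (E : Type*) (R : Type u) [Field E] [CommRing R] [Nontrivial R]
    [Algebra E R]
    [Algebra.FiniteType E R] : ∃ (L : Type u) (_ : Field L) (_ : Algebra E L),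
      FiniteDimensional E L ∧ Nonempty (R →ₐ[E] L) := by
  obtain ⟨m, hm⟩ := Ideal.exists_maximal R
  exact ⟨R ⧸ m, Ideal.Quotient.field m, inferInstance,
    @finite_of_finite_type_of_isJacobsonRing E (R ⧸ m) _ (Ideal.Quotient.field m) _ _ _,
    ⟨Ideal.Quotient.mkₐ E m⟩⟩

theorem exists_injective_lift_of_generic {K : Type*} [Field K] [CharZero K] {z : Kˣ}
    (hz : ∀ n : ℕ, 0 < n → (z : K) ^ n ≠ 1) {k : SL(2, K)} (hk : IsGeneric k) :
    ∃ n : ℕ, Function.Injective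
      (FreeGroup.lift ![diag z ^ n, k * diag z ^ n * k⁻¹] : FreeGroup (Fin 2) →* SL(2, K)) := by
  let E := ℚ⟮(z : K)⟯
  let s : Finset K := by
    classical exact {k 0 0, k 0 1, k 1 0, k 1 1, (k 0 0 * k 0 1 * k 1 0 * k 1 1)⁻¹}
  let R := Algebra.adjoin E (s : Set K)
  have hs : ∀ x ∈ s, x ∈ R := fun x hx => Algebra.subset_adjoin hx
  have : Algebra.FiniteType E R :=
    (Subalgebra.fg_iff_finiteType R).1 (Subalgebra.fg_adjoin_finset s)
  obtain ⟨L, _, _, hL, ⟨π⟩⟩ := exists_algHom_finite E R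
  obtain ⟨v, hv⟩ := exists_absoluteValue z.ne_zero hz L
  let zE : Eˣ := Units.mk0 (AdjoinSimple.gen ℚ (z : K)) fun h =>
    z.ne_zero (by rw [← AdjoinSimple.coe_gen ℚ (z : K), h]; rfl)
  let zR : Rˣ := Units.map (algebraMap E R) zE
  have m1 : k 0 0 ∈ R := hs _ (by simp [s])
  have m2 : k 0 1 ∈ R := hs _ (by simp [s])
  have m3 : k 1 0 ∈ R := hs _ (by simp [s])
  have m4 : k 1 1 ∈ R := hs _ (by simp [s])
  have m5 : (k 0 0 * k 0 1 * k 1 0 * k 1 1)⁻¹ ∈ R := hs _ (by simp [s])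
  let kR : SL(2, R) := ⟨!![⟨_, m1⟩, ⟨_, m2⟩; ⟨_, m3⟩, ⟨_, m4⟩], by
    rw [Matrix.det_fin_two]
    exact Subtype.ext (det_entry k)⟩
  have hkR : SpecialLinearGroup.map R.val.toRingHom kR = k := by
    apply ext_entries <;> rfl
  have hzR : Units.map R.val.toRingHom zR = z := by
    ext
    rfl
  have hunit : IsUnit (kR 0 0 * kR 0 1 * kR 1 0 * kR 1 1) := by
    refine IsUnit.of_mul_eq_one ⟨_, m5⟩ (Subtype.ext ?_)
    obtain ⟨h1, h2, h3, h4⟩ := hk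
    exact mul_inv_cancel₀ (mul_ne_zero (mul_ne_zero (mul_ne_zero h1 h2) h3) h4)
  have hgen : IsGeneric (SpecialLinearGroup.map π.toRingHom kR) := by
    have h1 := hunit.map π.toRingHom
    rw [map_mul, map_mul, map_mul] at h1
    have h1 := h1.ne_zero
    rw [mul_ne_zero_iff, mul_ne_zero_iff, mul_ne_zero_iff] at h1
    exact ⟨h1.1.1.1, h1.1.1.2, h1.1.2, h1.2⟩
  obtain ⟨n, hn⟩ := exists_injective_lift (v := v) (z := Units.map π.toRingHom zR) (by
    change 1 < v (π (algebraMap E R _))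
    rw [π.commutes]
    exact hv) hgen
  refine ⟨n, ?_⟩
  rw [← map_lift] at hn
  rw [← hzR, ← hkR, ← map_lift]
  rw [MonoidHom.coe_comp] at hn ⊢
  refine Function.Injective.comp ?_ (Function.Injective.of_comp hn)
  intro A B hAB
  have h := fun i j => congrArg (fun C : SL(2, K) => C i j) hAB
  exact ext_entries (Subtype.ext (h 0 0)) (Subtype.ext (h 0 1)) (Subtype.ext (h 1 0))
    (Subtype.ext (h 1 1))

end Specialisation

end TitsSL

namespace TitsSL

open Matrix Matrix.SpecialLinearGroup
open scoped MatrixGroups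

section Dickson

open Polynomial

/-- `t` is of the form `η + η⁻¹` for a root of unity `η` (in an algebraic closure). -/
def IsCyclotomicTrace {F : Type*} [Field F] (t : F) : Prop :=
  ∃ N : ℕ, 0 < N ∧ (dickson 1 (1 : F) N).eval t = 2

variable {F : Type*} [Field F]

theorem isCyclotomicTrace_of_pow_eq_one {x y : F} (hxy : x * y = 1) {N : ℕ} (hN : 0 < N)
    (hx : x ^ N = 1) : IsCyclotomicTrace (x + y) := by
  refine ⟨N, hN, ?_⟩
  have hy : y ^ N = 1 := by rw [← one_mul (y ^ N), ← hx, ← mul_pow, hxy, one_pow, hx]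
  rw [dickson_one_one_eval_add_inv x y hxy, hx, hy]
  norm_num

theorem IsCyclotomicTrace.map {F' : Type*} [Field F'] {t : F} (f : F →+* F')
    (h : IsCyclotomicTrace t) : IsCyclotomicTrace (f t) := by
  obtain ⟨N, hN, h⟩ := h
  refine ⟨N, hN, ?_⟩
  have := congrArg f h
  rwa [map_ofNat, ← eval_map_apply, map_dickson, map_one] at this

theorem IsCyclotomicTrace.of_map {F' : Type*} [Field F'] {t : F} (f : F →+* F')
    (h : IsCyclotomicTrace (f t)) : IsCyclotomicTrace t := by
  obtain ⟨N, hN, h⟩ := h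
  refine ⟨N, hN, f.injective ?_⟩
  rwa [map_ofNat, ← eval_map_apply, map_dickson, map_one]

theorem exists_add_eq_of_isAlgClosed [IsAlgClosed F] [CharZero F] (t : F) :
    ∃ x y : F, x * y = 1 ∧ t = x + y := by
  obtain ⟨s, hs⟩ := IsAlgClosed.exists_pow_nat_eq (t ^ 2 - 4) (n := 2) (by norm_num)
  refine ⟨(t + s) / 2, (t - s) / 2, ?_, by ring⟩
  field_simp
  linear_combination -hs

theorem IsCyclotomicTrace.exists_root [IsAlgClosed F] [CharZero F] {t : F}
    (h : IsCyclotomicTrace t) :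
    ∃ x y : F, x * y = 1 ∧ t = x + y ∧ ∃ N : ℕ, 0 < N ∧ x ^ N = 1 ∧ y ^ N = 1 := by
  obtain ⟨N, hN, h⟩ := h
  obtain ⟨x, y, hxy, rfl⟩ := exists_add_eq_of_isAlgClosed t
  rw [dickson_one_one_eval_add_inv x y hxy] at h
  have h1 : x ^ N * y ^ N = 1 := by rw [← mul_pow, hxy, one_pow]
  have hx : x ^ N = 1 := by
    refine sub_eq_zero.1 ((pow_eq_zero_iff two_ne_zero).1 ?_)
    linear_combination x ^ N * h - h1
  rw [hx, one_mul] at h1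
  exact ⟨x, y, hxy, rfl, N, hN, hx, h1⟩

theorem IsCyclotomicTrace.isIntegral [IsAlgClosed F] [CharZero F] {t : F}
    (h : IsCyclotomicTrace t) : IsIntegral ℤ t := by
  obtain ⟨x, y, _, rfl, N, hN, hx, hy⟩ := h.exists_root
  refine IsIntegral.add (IsIntegral.of_pow hN ?_) (IsIntegral.of_pow hN ?_)
  · rw [hx]; exact isIntegral_one
  · rw [hy]; exact isIntegral_one

theorem IsCyclotomicTrace.exists_real {t : ℂ} (h : IsCyclotomicTrace t) :
    ∃ r : ℝ, t = r ∧ -2 ≤ r ∧ r ≤ 2 := by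
  obtain ⟨x, y, hxy, rfl, N, hN, hx, -⟩ := h.exists_root
  have hn : ‖x‖ = 1 := by
    have := congrArg norm hx
    rw [norm_pow, norm_one] at this
    exact (pow_eq_one_iff_of_nonneg (norm_nonneg x) hN.ne').1 this
  have hy : y = (starRingEnd ℂ) x := by
    have h0 : x ≠ 0 := left_ne_zero_of_mul_eq_one hxy
    apply mul_left_cancel₀ h0
    rw [hxy, Complex.mul_conj, Complex.normSq_eq_norm_sq, hn]
    simp
  refine ⟨2 * x.re, ?_, ?_, ?_⟩
  · rw [hy, Complex.add_conj]
  · have := Complex.abs_re_le_norm x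
    rw [hn, abs_le] at this
    linarith
  · have := Complex.abs_re_le_norm x
    rw [hn, abs_le] at this
    linarith

end Dickson

section Descent

open IntermediateField NumberField

theorem false_of_logistic {κ : ℝ} (hκ0 : 0 < κ) (hκ1 : κ ≤ 1)
    (hκ : IsCyclotomicTrace (2 - κ : ℂ)) (w : ℕ → ℂ) (hw : ∀ j, IsCyclotomicTrace (2 - w j))
    (hrec : ∀ j, w (j + 1) = w j * (κ - w j)) (h0 : w 0 ≠ 0) (h1 : w 0 ≠ κ) : False := by
  choose r hr hr1 hr2 using fun j => (hw j).exists_real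
  have hwr : ∀ j, w j = ((2 - r j : ℝ) : ℂ) := fun j => by
    push_cast
    rw [← hr j]
    ring
  obtain ⟨u, hu⟩ : ∃ u : ℕ → ℝ, u = fun j => 2 - r j := ⟨_, rfl⟩
  have hwu : ∀ j, w j = (u j : ℂ) := fun j => by rw [hwr, hu]
  have hu0 : ∀ j, 0 ≤ u j := fun j => by rw [hu]; linarith [hr2 j]
  have hurec : ∀ j, u (j + 1) = u j * (κ - u j) := fun j => by
    have := hrec j
    rw [hwu, hwu] at this
    exact_mod_cast this
  have hpos : ∀ j, 0 < u j ∧ u j < κ := by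
    intro j
    induction j with
    | zero =>
      have hne : u 0 ≠ 0 := fun h => h0 (by rw [hwu, h]; simp)
      have hne' : u 0 ≠ κ := fun h => h1 (by rw [hwu, h])
      have p0 : 0 < u 0 := lt_of_le_of_ne (hu0 0) hne.symm
      refine ⟨p0, lt_of_le_of_ne ?_ hne'⟩
      have := hu0 1
      rw [hurec 0] at this
      by_contra! h
      nlinarith [mul_pos p0 (sub_pos.2 h)]
    | succ j ih =>
      rw [hurec]
      have := mul_pos ih.1 (sub_pos.2 ih.2)
      exact ⟨this, by nlinarith⟩
  have hanti : StrictAnti u := strictAnti_nat_of_succ_lt fun j => by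
    rw [hurec]
    nlinarith [(hpos j).1]
  have i2 : IsIntegral ℤ (2 : ℂ) := by simpa using isIntegral_algebraMap (R := ℤ) (A := ℂ) (x := 2)
  have iκ : IsIntegral ℤ (κ : ℂ) := by simpa using i2.sub hκ.isIntegral
  have iw : ∀ j, IsIntegral ℤ (w j) := fun j => by simpa using i2.sub (hw j).isIntegral
  let L := IntermediateField.adjoin ℚ ({(κ : ℂ), w 0} : Set ℂ)
  have hfin : FiniteDimensional ℚ L := by
    refine IntermediateField.finiteDimensional_adjoin fun x hx => ?_
    rcases hx with rfl | rfl
    · exact iκ.tower_top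
    · exact (iw 0).tower_top
  have hN : NumberField L := ⟨⟩
  have mκ : (κ : ℂ) ∈ L := IntermediateField.subset_adjoin ℚ _ (by simp)
  have mw : ∀ j, w j ∈ L := by
    intro j
    induction j with
    | zero => exact IntermediateField.subset_adjoin ℚ _ (by simp)
    | succ j ih => rw [hrec]; exact mul_mem ih (sub_mem mκ ih)
  have hfinite := Embeddings.finite_of_norm_le L ℂ 4
  refine Set.infinite_range_of_injective (f := fun j => (⟨w j, mw j⟩ : L)) ?_ (hfinite.subset ?_)
  · intro i j hij
    have : w i = w j := congrArg Subtype.val hij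
    rw [hwu, hwu] at this
    exact hanti.injective (by exact_mod_cast this)
  · rintro _ ⟨j, rfl⟩
    refine ⟨?_, fun φ => ?_⟩
    · exact (isIntegral_algHom_iff (L.val.restrictScalars ℤ) L.val.injective).1 (iw j)
    · have hL : IsCyclotomicTrace (2 - (⟨w j, mw j⟩ : L)) := by
        refine IsCyclotomicTrace.of_map L.val.toRingHom ?_
        rw [map_sub, map_ofNat]
        exact hw j
      obtain ⟨r, hr, hr1, hr2⟩ := (hL.map φ).exists_real
      rw [map_sub, map_ofNat] at hr
      have : φ ⟨w j, mw j⟩ = ((2 - r : ℝ) : ℂ) := by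
        push_cast
        rw [← hr]
        ring
      rw [this, Complex.norm_real, Real.norm_eq_abs, abs_le]
      constructor <;> linarith

theorem commutator_diag_entries {K : Type*} [Field K] (z : Kˣ) (h : SL(2, K)) :
    let s := -(h 0 1 * h 1 0)
    let κ := 2 - ((z : K) ^ 2 + ((z⁻¹ : Kˣ) : K) ^ 2)
    let h' := diag z * h * (diag z)⁻¹ * h⁻¹
    h'.1.trace = 2 - κ * s ∧ -(h' 0 1 * h' 1 0) = κ * s * (1 - s) := by
  intro s κ h'
  obtain ⟨a1, a2, a3, a4⟩ := inv_entries h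
  have hz0 : (z : K) * ((z⁻¹ : Kˣ) : K) = 1 := by simp
  have hd := det_entry h
  have e : ∀ i j, h' i j = (diag z * (h * (diag z⁻¹ * h⁻¹))) i j := fun i j => by
    simp only [h', map_inv, mul_assoc]
  have e2 : ∀ i j, (h * (diag z⁻¹ * h⁻¹)) i j =
      h i 0 * (((z⁻¹ : Kˣ) : K) * h⁻¹ 0 j) + h i 1 * ((z : K) * h⁻¹ 1 j) := fun i j => by
    rw [mul_entry, diag_mul_apply_zero, diag_mul_apply_one, inv_inv]
  rw [trace_entry, e, e, e, e, diag_mul_apply_zero, diag_mul_apply_one, diag_mul_apply_zero,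
    diag_mul_apply_one, e2, e2, e2, e2, a1, a2, a3, a4]
  simp only [s, κ]
  generalize ((z⁻¹ : Kˣ) : K) = y at *
  generalize h 0 0 = a at *
  generalize h 0 1 = b at *
  generalize h 1 0 = c at *
  generalize h 1 1 = d at *
  generalize (z : K) = x at *
  constructor
  · linear_combination 2 * a * d * hz0 + 2 * hd
  · linear_combination a * b * c * d * (x ^ 2 + y ^ 2 - 2 * (x * y + 1)) * hz0 +
      (x ^ 2 + y ^ 2 - 2) * b * c * hd

/-- A group whose eigenvalues are all roots of unity contains no generic element with respect to
the axes of a diagonal matrix of large order. -/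
theorem false_of_isGeneric {K : Type*} [Field K] [IsAlgClosed K] [CharZero K]
    {Γ : Subgroup SL(2, K)} {z : Kˣ} (hg : diag z ∈ Γ) {n : ℕ} (hn : 6 ≤ n)
    (hz : IsPrimitiveRoot ((z : K) ^ 2) n) {h : SL(2, K)} (hh : h ∈ Γ) (hgen : IsGeneric h)
    (hΓ : ∀ h ∈ Γ, IsCyclotomicTrace h.1.trace) : False := by
  let A := algebraicClosure ℚ K
  have hA : Algebra.IsAlgebraic ℚ A := algebraicClosure.isAlgebraic ℚ K
  let σ : A →ₐ[ℚ] ℂ := IsAlgClosed.lift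
  have hσ : Function.Injective σ := σ.toRingHom.injective
  have hq : (z : K) ^ 2 ∈ A := mem_algebraicClosure_iff.2
    ((IsIntegral.of_pow (n := n) (by omega) (by rw [hz.pow_eq_one]; exact isIntegral_one)
      : IsIntegral ℚ ((z : K) ^ 2)).isAlgebraic)
  have hqA : IsPrimitiveRoot (⟨(z : K) ^ 2, hq⟩ : A) n :=
    IsPrimitiveRoot.of_map_of_injective (f := A.val) hz A.val.injective
  have hqσ : IsPrimitiveRoot (σ ⟨(z : K) ^ 2, hq⟩) n := hqA.map_of_injective hσ
  have : NeZero n := ⟨by omega⟩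
  obtain ⟨p, -, hp⟩ := hqσ.eq_pow_of_pow_eq_one
    (Complex.isPrimitiveRoot_exp n (by omega)).pow_eq_one
  obtain ⟨y, hy⟩ : ∃ y, y = z ^ p := ⟨_, rfl⟩
  have hgy : diag y ∈ Γ := by rw [hy, map_pow]; exact pow_mem hg p
  let κ : K := 2 - ((y : K) ^ 2 + ((y⁻¹ : Kˣ) : K) ^ 2)
  let f : SL(2, K) → SL(2, K) := fun h => diag y * h * (diag y)⁻¹ * h⁻¹
  let H : ℕ → SL(2, K) := fun j => f^[j] h
  have hHsucc : ∀ j, H (j + 1) = f (H j) := fun j => Function.iterate_succ_apply' f j h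
  have hH : ∀ j, H j ∈ Γ := by
    intro j
    induction j with
    | zero => exact hh
    | succ j ih =>
      rw [hHsucc]
      exact mul_mem (mul_mem (mul_mem hgy ih) (inv_mem hgy)) (inv_mem ih)
  let w : ℕ → K := fun j => κ * -(H j 0 1 * H j 1 0)
  have hw : ∀ j, IsCyclotomicTrace (2 - w j) := fun j => by
    have h1 := hΓ _ (hH (j + 1))
    rw [hHsucc] at h1
    exact (commutator_diag_entries y (H j)).1 ▸ h1
  have hrec : ∀ j, w (j + 1) = w j * (κ - w j) := fun j => by
    have := (commutator_diag_entries y (H j)).2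
    simp only [w, hHsucc]
    rw [this]
    ring
  have hκ : IsCyclotomicTrace (2 - κ) := by
    have := hΓ _ (mul_mem hgy hgy)
    rw [trace_entry, diag_mul_apply_zero, diag_mul_apply_one, diag_zero_zero, diag_one_one] at this
    convert this using 1
    simp only [κ]
    ring
  have i2 : IsIntegral ℤ (2 : K) := by simpa using isIntegral_algebraMap (R := ℤ) (A := K) (x := 2)
  have hmem : ∀ x : K, IsCyclotomicTrace (2 - x) → x ∈ A := fun x hx => by
    have h1 : IsIntegral ℤ x := by simpa using i2.sub hx.isIntegral
    exact mem_algebraicClosure_iff.2 (h1.tower_top (A := ℚ)).isAlgebraic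
  have hmap : ∀ (x : K) (hx : IsCyclotomicTrace (2 - x)),
      IsCyclotomicTrace (2 - σ ⟨x, hmem x hx⟩) := fun x hx => by
    have h1 : IsCyclotomicTrace (2 - (⟨x, hmem x hx⟩ : A)) := by
      refine IsCyclotomicTrace.of_map A.val.toRingHom ?_
      rw [map_sub, map_ofNat]
      exact hx
    have h2 := h1.map σ.toRingHom
    rwa [map_sub, map_ofNat] at h2
  have hκσ : σ ⟨κ, hmem κ hκ⟩ = ((2 - 2 * Real.cos (2 * Real.pi / n) : ℝ) : ℂ) := by
    let Y : A := ⟨(z : K) ^ 2, hq⟩ ^ p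
    have hY : (Y : K) = (y : K) ^ 2 := by
      rw [hy, Units.val_pow_eq_pow_val, ← pow_mul, mul_comm p, pow_mul]
      rfl
    have hκY : (⟨κ, hmem κ hκ⟩ : A) = 2 - (Y + Y⁻¹) := by
      refine Subtype.ext ?_
      change κ = 2 - ((Y : K) + (Y : K)⁻¹)
      simp only [hY, κ, Units.val_inv_eq_inv_val, inv_pow]
    have hσY : σ Y = Complex.exp (2 * Real.pi * Complex.I / n) := by rw [map_pow, hp]
    rw [hκY, map_sub, map_add, map_inv₀, map_ofNat, hσY, ← Complex.exp_neg]
    push_cast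
    rw [Complex.cos]
    ring_nf
  have hn0 : (6 : ℝ) ≤ n := by exact_mod_cast hn
  have hpi := Real.pi_pos
  have hθ0 : 0 < 2 * Real.pi / n := by positivity
  have hθ1 : 2 * Real.pi / n ≤ Real.pi / 3 := by
    rw [div_le_div_iff₀ (by linarith) (by norm_num)]
    nlinarith
  have hcos1 : Real.cos (2 * Real.pi / n) < 1 := by
    rw [← Real.cos_zero]
    exact Real.cos_lt_cos_of_nonneg_of_le_pi le_rfl (by linarith) hθ0
  have hcos2 : 1 / 2 ≤ Real.cos (2 * Real.pi / n) := by
    rw [← Real.cos_pi_div_three]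
    exact Real.cos_le_cos_of_nonneg_of_le_pi hθ0.le (by linarith) hθ1
  have hκ0 : κ ≠ 0 := fun h0 => by
    have h1 : (⟨κ, hmem κ hκ⟩ : A) = 0 := Subtype.ext h0
    rw [h1, map_zero, ← Complex.ofReal_zero, Complex.ofReal_inj] at hκσ
    linarith
  refine false_of_logistic (κ := 2 - 2 * Real.cos (2 * Real.pi / n)) (by linarith) (by linarith) ?_
    (fun j => σ ⟨w j, hmem _ (hw j)⟩) (fun j => hmap _ (hw j)) ?_ ?_ ?_
  · rw [← hκσ]
    exact hmap κ hκ
  · intro j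
    rw [← hκσ, ← map_sub, ← map_mul]
    exact congrArg σ (Subtype.ext (hrec j))
  · rw [Ne, map_eq_zero_iff _ hσ]
    intro h0
    have h0 : w 0 = 0 := congrArg Subtype.val h0
    have : κ * -(h 0 1 * h 1 0) = 0 := h0
    simp [hκ0, hgen.2.1, hgen.2.2.1] at this
  · rw [← hκσ, hσ.ne_iff]
    intro h0
    have h0 : κ * -(h 0 1 * h 1 0) = κ := congrArg Subtype.val h0
    have h1 := mul_left_cancel₀ hκ0 (h0.trans (mul_one κ).symm)
    have : h 0 0 * h 1 1 = 0 := by linear_combination det_entry h - h1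
    simp [hgen.1, hgen.2.2.2] at this

end Descent

end TitsSL

namespace TitsSL

open Matrix Matrix.SpecialLinearGroup
open scoped MatrixGroups

variable {K : Type*} [Field K] [IsAlgClosed K] [CharZero K]

theorem exists_eigenvalue (g : SL(2, K)) : ∃ z : Kˣ, g.1.trace = z + ((z⁻¹ : Kˣ) : K) ∧
    ((z : K) ^ 2 ≠ 1 → ∃ A : SL(2, K), A⁻¹ * g * A = diag z) := by
  obtain ⟨A, hA⟩ := exists_conj_upper g
  have h10 : (A⁻¹ * g * A) 1 0 = 0 := hA
  have hdet := det_entry (A⁻¹ * g * A)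
  have htr := trace_entry (A⁻¹ * g * A)
  rw [trace_inv_mul_mul] at htr
  rw [h10, mul_zero, sub_zero] at hdet
  refine ⟨⟨(A⁻¹ * g * A) 0 0, (A⁻¹ * g * A) 1 1, hdet, by rw [mul_comm]; exact hdet⟩, htr, ?_⟩
  intro hz
  obtain ⟨C, hC⟩ := exists_conj_diag (z := ⟨(A⁻¹ * g * A) 0 0, (A⁻¹ * g * A) 1 1, hdet,
    by rw [mul_comm]; exact hdet⟩) hz h10 rfl
  refine ⟨A * C, ?_⟩
  rw [← hC]
  group

theorem alternative_of_diag_mem {Γ : Subgroup SL(2, K)} {z : Kˣ} (hz : (z : K) ^ 2 ≠ 1)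
    (hg : diag z ∈ Γ)
    (h : (∀ n : ℕ, 0 < n → (z : K) ^ n ≠ 1) ∨
      ((∀ h ∈ Γ, IsCyclotomicTrace h.1.trace) ∧ ∃ n, 6 ≤ n ∧ IsPrimitiveRoot ((z : K) ^ 2) n) ∨
      ∃ T : Set K, T.Finite ∧ ∀ h ∈ Γ, h.1.trace ∈ T) :
    ContainsNonabelianFree Γ ∨ IsVirtuallySolvable Γ := by
  by_cases hgen : ∃ h ∈ Γ, IsGeneric h
  swap
  · push Not at hgen
    exact Or.inr (.of_isSolvable (isSolvable_of_not_generic hz hg hgen))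
  obtain ⟨x, hx, hxg⟩ := hgen
  rcases h with h | ⟨h, n, hn, hp⟩ | ⟨T, hT, h⟩
  · left
    obtain ⟨n, hn⟩ := exists_injective_lift_of_generic h hxg
    have hmem : ∀ w, (FreeGroup.lift ![diag z ^ n, x * diag z ^ n * x⁻¹] :
        FreeGroup (Fin 2) →* SL(2, K)) w ∈ Γ := by
      intro w
      induction w using FreeGroup.induction_on with
      | C1 => rw [map_one]; exact one_mem _
      | of i =>
        rw [FreeGroup.lift_apply_of]
        fin_cases i
        · exact pow_mem hg n
        · exact mul_mem (mul_mem hx (pow_mem hg n)) (inv_mem hx)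
      | inv_of i hi => rw [map_inv]; exact inv_mem hi
      | mul a b ha hb => rw [map_mul]; exact mul_mem ha hb
    refine containsNonabelianFree_iff.2 ⟨MonoidHom.codRestrict _ Γ hmem, ?_⟩
    intro a b hab
    exact hn (congrArg Subtype.val hab)
  · exact (false_of_isGeneric hg hn hp hx hxg h).elim
  · have := finite_of_finite_trace hz hg hx hxg hT h
    exact Or.inr .of_finite

theorem alternative_of_mem {Γ : Subgroup SL(2, K)} {g : SL(2, K)} {z : Kˣ}
    (hz : (z : K) ^ 2 ≠ 1) (hg : g ∈ Γ) (hgz : ∃ A : SL(2, K), A⁻¹ * g * A = diag z)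
    (h : (∀ n : ℕ, 0 < n → (z : K) ^ n ≠ 1) ∨
      ((∀ h ∈ Γ, IsCyclotomicTrace h.1.trace) ∧ ∃ n, 6 ≤ n ∧ IsPrimitiveRoot ((z : K) ^ 2) n) ∨
      ∃ T : Set K, T.Finite ∧ ∀ h ∈ Γ, h.1.trace ∈ T) :
    ContainsNonabelianFree Γ ∨ IsVirtuallySolvable Γ := by
  obtain ⟨A, hA⟩ := hgz
  let e := MulAut.conj A⁻¹
  have he : ∀ x, e x = A⁻¹ * x * A := fun x => by simp [e]
  have htr : ∀ x ∈ Γ.map e.toMonoidHom, ∃ y ∈ Γ, x.1.trace = y.1.trace := by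
    rintro _ ⟨y, hy, rfl⟩
    refine ⟨y, hy, ?_⟩
    change (e y).1.trace = _
    rw [he, trace_inv_mul_mul]
  have key : ContainsNonabelianFree (Γ.map e.toMonoidHom) ∨
      IsVirtuallySolvable (Γ.map e.toMonoidHom) := by
    refine alternative_of_diag_mem hz ⟨g, hg, by rw [← hA, ← he]; rfl⟩ ?_
    rcases h with h | ⟨h, h'⟩ | ⟨T, hT, h⟩
    · exact Or.inl h
    · refine Or.inr (Or.inl ⟨fun x hx => ?_, h'⟩)
      obtain ⟨y, hy, hxy⟩ := htr x hx
      rw [hxy]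
      exact h y hy
    · refine Or.inr (Or.inr ⟨T, hT, fun x hx => ?_⟩)
      obtain ⟨y, hy, hxy⟩ := htr x hx
      rw [hxy]
      exact h y hy
  have e' := (Γ.equivMapOfInjective e.toMonoidHom e.injective).symm
  exact key.imp (fun h => h.of_injective e'.toMonoidHom e'.injective)
    (fun h => h.of_surjective e'.toMonoidHom e'.surjective)

theorem strongTitsAlternative : StrongTitsAlternative SL(2, K) := by
  intro Γ
  choose ev hev hdiag using exists_eigenvalue (K := K)
  by_cases h1 : ∃ g ∈ Γ, ∀ n : ℕ, 0 < n → (ev g : K) ^ n ≠ 1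
  · obtain ⟨g, hg, h⟩ := h1
    exact alternative_of_mem (h 2 two_pos) hg (hdiag g (h 2 two_pos)) (Or.inl h)
  push Not at h1
  have hsq : ∀ g ∈ Γ, 0 < orderOf ((ev g : K) ^ 2) := fun g hg => by
    obtain ⟨n, hn, h⟩ := h1 g hg
    rw [orderOf_pos_iff, isOfFinOrder_iff_pow_eq_one]
    exact ⟨n, hn, by rw [← pow_mul, mul_comm, pow_mul, h, one_pow]⟩
  by_cases h2 : ∃ g ∈ Γ, 6 ≤ orderOf ((ev g : K) ^ 2)
  · obtain ⟨g, hg, h⟩ := h2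
    have hz : (ev g : K) ^ 2 ≠ 1 := fun h0 => by
      rw [h0, orderOf_one] at h
      omega
    refine alternative_of_mem hz hg (hdiag g hz)
      (Or.inr (Or.inl ⟨fun x hx => ?_, _, h, IsPrimitiveRoot.orderOf _⟩))
    obtain ⟨n, hn, hxn⟩ := h1 x hx
    rw [hev]
    exact isCyclotomicTrace_of_pow_eq_one (by simp) hn hxn
  push Not at h2
  by_cases h3 : ∃ g ∈ Γ, (ev g : K) ^ 2 ≠ 1
  swap
  · push Not at h3
    refine Or.inr (.of_isSolvable (isSolvable_of_trace_sq fun g hg => ?_))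
    have h4 := h3 g hg
    rcases sq_eq_one_iff.1 h4 with h | h
    all_goals
      have hu : ((ev g)⁻¹ : Kˣ) = ev g := by
        rw [inv_eq_iff_mul_eq_one]
        ext
        simpa [sq] using h4
      rw [hev, hu, h]
      norm_num
  obtain ⟨g, hg, hz⟩ := h3
  refine alternative_of_mem hz hg (hdiag g hz) (Or.inr (Or.inr
    ⟨(fun x : K => x + x⁻¹) '' {x : K | x ^ 120 = 1}, ?_, fun x hx => ⟨ev x, ?_, ?_⟩⟩))
  · apply Set.Finite.image
    refine (Polynomial.nthRootsFinset 120 (1 : K)).finite_toSet.subset fun x hx => ?_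
    exact (Polynomial.mem_nthRootsFinset (by norm_num) _).2 hx
  · have h4 := hsq x hx
    have h5 := h2 x hx
    have h6 : orderOf ((ev x : K) ^ 2) ∣ 60 := by
      generalize orderOf ((ev x : K) ^ 2) = m at h4 h5
      interval_cases m <;> norm_num
    have := orderOf_dvd_iff_pow_eq_one.1 h6
    rw [← pow_mul] at this
    exact this
  · rw [hev]
    simp

end TitsSL

section GeneralLinear

open Matrix

theorem strongTitsAlternative_GL_of_isAlgClosed (K : Type*) [Field K] [IsAlgClosed K] [CharZero K] :
    StrongTitsAlternative (GL (Fin 2) K) := by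
  refine StrongTitsAlternative.of_isSolvable_ker (ProjGenLinGroup.mk (n := Fin 2) (R := K)) ?_ ?_
  · rw [ProjGenLinGroup.ker_mk]
    exact Group.isSolvable_of_comm fun a b => Subtype.ext (Subgroup.mem_center_iff.1 b.2 a)
  refine StrongTitsAlternative.of_surjective
    (SpecialLinearGroup.toPGL (n := Fin 2) (R := K)) ?_ ?_ TitsSL.strongTitsAlternative
  · have h : Function.Surjective (ProjectiveSpecialLinearGroup.toPGL (n := Fin 2) (R := K)) := by
      refine ProjectiveSpecialLinearGroup.toPGL_surj_of_roots fun r => ?_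
      obtain ⟨s, hs⟩ := IsAlgClosed.exists_pow_nat_eq (r : K) (n := 2) two_pos
      have hs0 : s ≠ 0 := by
        rintro rfl
        exact r.ne_zero (by rw [← hs]; norm_num)
      exact ⟨Units.mk0 s hs0, Units.ext (by simpa using hs)⟩
    intro y
    obtain ⟨x, rfl⟩ := h y
    obtain ⟨g, rfl⟩ := QuotientGroup.mk_surjective x
    exact ⟨g, rfl⟩
  · intro x hx
    rw [SpecialLinearGroup.toPGL_ker, Matrix.SpecialLinearGroup.mem_center_iff] at hx
    obtain ⟨r, hr, hx⟩ := hx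
    rw [Fintype.card_fin] at hr
    apply Subtype.ext
    change (x ^ 2 : SpecialLinearGroup (Fin 2) K).1 = 1
    rw [Matrix.SpecialLinearGroup.coe_pow, ← hx, ← map_pow, hr, map_one]

theorem strongTitsAlternative_GL (k : Type*) [Field k] [CharZero k] :
    StrongTitsAlternative (GL (Fin 2) k) := by
  have := charZero_of_injective_algebraMap (algebraMap k (AlgebraicClosure k)).injective
  refine (strongTitsAlternative_GL_of_isAlgClosed (AlgebraicClosure k)).of_injective
    (GeneralLinearGroup.map (algebraMap k (AlgebraicClosure k))) ?_
  intro a b hab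
  ext i j
  apply (algebraMap k (AlgebraicClosure k)).injective
  exact congrArg (fun u : GL (Fin 2) (AlgebraicClosure k) => u i j) hab

end GeneralLinear

/-- Degree functions on a group exhibiting it as an amalgamated product of two subgroups. -/
structure IsDescent {G : Type*} [Group G] (A T : Subgroup G) (D E : G → ℕ) : Prop where
  D_mul : ∀ g, ∀ a ∈ A, D (g * a) = D g
  E_mul : ∀ g, ∀ t ∈ T, E (g * t) = E g
  E_le_D : ∀ g, E g ≤ D g
  D_le_E : ∀ a ∈ A, D a ≤ E a
  mem_T : ∀ g, ∀ a ∈ A, E g < D g → E (g * a) < D g → a ∈ T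
  mem_A : ∀ g, ∀ t ∈ T, D g = E g → D (g * t) = E g → t ∈ A
  sup_eq_top : A ⊔ T = ⊤

namespace IsRootedTreeAction

variable {G V : Type*} [Group G] [MulAction G V] {o : V} {parent : V → V} {rank : V → ℕ}
  {col : V → Bool}

theorem smul_parent_of_smul_eq (h : IsRootedTreeAction G o parent rank col) {u : G}
    (ho : u • o = o) {v : V} (hv : v ≠ o) (huv : u • v = v) : u • parent v = parent v := by
  have key : ∀ n v, rank v ≤ n → v ≠ o →
      ¬ (u • parent v ≠ o ∧ parent (u • parent v) = u • v) := by
    intro n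
    induction n with
    | zero =>
      intro v hn hv
      have := h.rank_parent_lt hv
      omega
    | succ n ih =>
      rintro v hn hv ⟨h1, h2⟩
      have hpv : parent v ≠ o := fun h0 => h1 (by rw [h0, ho])
      have hlt := h.rank_parent_lt hv
      rcases h.smul_edge u hpv with ⟨-, h3⟩ | h3
      · rw [h2] at h3
        have h4 := smul_left_cancel u h3
        have := h.rank_parent_lt hpv
        rw [← h4] at this
        omega
      · exact ih (parent v) (by omega) hpv h3
  rcases h.smul_edge u hv with ⟨-, h1⟩ | h1
  · rw [← h1, huv]
  · exact (key _ v le_rfl hv h1).elim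

end IsRootedTreeAction

theorem derivedSub_stabilizer_smul {G X : Type*} [Group G] [MulAction G X] {x : X} {n : ℕ} (g : G)
    (h : derivedSub (MulAction.stabilizer G x) n = ⊥) :
    derivedSub (MulAction.stabilizer G (g • x)) n = ⊥ := by
  rw [MulAction.stabilizer_smul_eq_stabilizer_map_conj, ← map_derivedSub, h, Subgroup.map_bot]

namespace IsDescent

variable {G : Type*} [Group G] {A T : Subgroup G} {D E : G → ℕ}

theorem lt_D_mul (h : IsDescent A T D E) {g t : G} (ht : t ∈ T) (hg : D g = E g) (htA : t ∉ A) :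
    E g < D (g * t) := by
  have h1 := h.E_mul g t ht
  have h2 := h.E_le_D (g * t)
  have h3 : ¬ D (g * t) = E g := fun h' => htA (h.mem_A g t ht hg h')
  omega

theorem D_eq_E_mul (h : IsDescent A T D E) {g t a : G} (ht : t ∈ T) (ha : a ∈ A) (hg : D g = E g)
    (htA : t ∉ A) (haT : a ∉ T) : D (g * t * a) = E (g * t * a) := by
  have h1 := h.lt_D_mul ht hg htA
  have h2 := h.E_mul g t ht
  have h3 : ¬ E (g * t * a) < D (g * t) := fun h' => haT (h.mem_T (g * t) a ha (by omega) h')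
  have h4 := h.E_le_D (g * t * a)
  have h5 := h.D_mul (g * t) a ha
  omega

/-- Products in which the degree increases with each factor from `T`. -/
inductive IsReduced (A T : Subgroup G) (D E : G → ℕ) : G → Prop
  | of_mem {a : G} (ha : a ∈ A) : IsReduced A T D E a
  | mul {x t a : G} (hx : IsReduced A T D E x) (hDE : D x = E x) (ht : t ∈ T) (htA : t ∉ A)
      (ha : a ∈ A) : IsReduced A T D E (x * t * a)

theorem IsReduced.mul_mem_left {g a : G} (hg : IsReduced A T D E g) (ha : a ∈ A) :
    IsReduced A T D E (g * a) := by
  cases hg with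
  | of_mem hg => exact .of_mem (mul_mem hg ha)
  | mul hx hDE ht htA hb => rw [mul_assoc _ _ a]; exact .mul hx hDE ht htA (mul_mem hb ha)

theorem IsReduced.mul_of_eq {g t : G} (hg : IsReduced A T D E g) (hDE : D g = E g) (ht : t ∈ T) :
    IsReduced A T D E (g * t) := by
  by_cases htA : t ∈ A
  · exact hg.mul_mem_left htA
  · rw [← mul_one (g * t)]
    exact .mul hg hDE ht htA (one_mem _)

theorem IsReduced.mul_mem_right (h : IsDescent A T D E) {g t : G} (hg : IsReduced A T D E g)
    (ht : t ∈ T) : IsReduced A T D E (g * t) := by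
  cases hg with
  | of_mem hg => exact (IsReduced.of_mem hg).mul_of_eq ((h.D_le_E g hg).antisymm (h.E_le_D g)) ht
  | @mul x s a hx hDE hs hsA ha =>
    by_cases haT : a ∈ T
    · rw [mul_assoc x, mul_assoc x]
      exact hx.mul_of_eq hDE (mul_mem (mul_mem hs haT) ht)
    · exact (IsReduced.mul hx hDE hs hsA ha).mul_of_eq (h.D_eq_E_mul hs ha hDE hsA haT) ht

theorem isReduced (h : IsDescent A T D E) (g : G) : IsReduced A T D E g := by
  have hg : g ∈ Subgroup.closure (A ∪ T : Set G) := by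
    rw [Subgroup.closure_union, Subgroup.closure_eq, Subgroup.closure_eq, h.sup_eq_top]
    exact Subgroup.mem_top g
  have hmul : ∀ x y, y ∈ (A ∪ T : Set G) → IsReduced A T D E x → IsReduced A T D E (x * y) := by
    rintro x y (hy | hy) hx
    · exact hx.mul_mem_left hy
    · exact hx.mul_mem_right h hy
  induction hg using Subgroup.closure_induction_right with
  | one => exact .of_mem (one_mem _)
  | mul_right x _ y hy hx => exact hmul x y hy hx
  | mul_inv_cancel x _ y hy hx =>
    exact hmul x y⁻¹ (hy.imp (fun h => A.inv_mem h) fun h => T.inv_mem h) hx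

theorem exists_E_lt (h : IsDescent A T D E) {g : G} (hg : g ∉ A) : ∃ a ∈ A, E (g * a) < D g := by
  cases h.isReduced g with
  | of_mem hg' => exact (hg hg').elim
  | @mul x t a _ hx ht htA ha =>
    refine ⟨a⁻¹, inv_mem ha, ?_⟩
    rw [mul_inv_cancel_right, h.D_mul _ a ha, h.E_mul x t ht]
    exact h.lt_D_mul ht hx htA

theorem exists_D_le (h : IsDescent A T D E) (g : G) : ∃ t ∈ T, D (g * t) ≤ E g := by
  cases h.isReduced g with
  | of_mem hg => exact ⟨1, one_mem _, by rw [mul_one]; exact h.D_le_E g hg⟩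
  | @mul x t a _ hx ht htA ha =>
    by_cases haT : a ∈ T
    · refine ⟨a⁻¹ * t⁻¹, mul_mem (inv_mem haT) (inv_mem ht), ?_⟩
      rw [h.E_mul _ a haT, h.E_mul x t ht, ← hx]
      refine le_of_eq (congrArg D ?_)
      group
    · exact ⟨1, one_mem _, by rw [mul_one]; exact (h.D_eq_E_mul ht ha hx htA haT).le⟩

theorem exists_isRootedTreeAction (h : IsDescent A T D E) :
    ∃ (parent : (G ⧸ A) ⊕ (G ⧸ T) → (G ⧸ A) ⊕ (G ⧸ T)) (rank : (G ⧸ A) ⊕ (G ⧸ T) → ℕ),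
      IsRootedTreeAction G (Sum.inl ((1 : G) : G ⧸ A)) parent rank Sum.isLeft := by
  classical
  let V := (G ⧸ A) ⊕ (G ⧸ T)
  let va : G → V := fun g => Sum.inl (g : G ⧸ A)
  let vt : G → V := fun g => Sum.inr (g : G ⧸ T)
  let parent : V → V := Sum.elim
    (fun q => if hq : ∃ g : G, (g : G ⧸ A) = q ∧ E g < D g then vt hq.choose else Sum.inl q)
    (fun q => if hq : ∃ g : G, (g : G ⧸ T) = q ∧ D g = E g then va hq.choose else Sum.inr q)
  have hD : ∀ g g' : G, (g : G ⧸ A) = g' → D g = D g' := fun g g' hg => by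
    have := h.D_mul g _ (QuotientGroup.eq.1 hg)
    rw [← this, mul_inv_cancel_left]
  have hE : ∀ g g' : G, (g : G ⧸ T) = g' → E g = E g' := fun g g' hg => by
    have := h.E_mul g _ (QuotientGroup.eq.1 hg)
    rw [← this, mul_inv_cancel_left]
  have hpa : ∀ g, E g < D g → parent (va g) = vt g := by
    intro g hg
    have hq : ∃ g' : G, (g' : G ⧸ A) = g ∧ E g' < D g' := ⟨g, rfl, hg⟩
    have hp : parent (va g) = vt hq.choose := dif_pos hq
    obtain ⟨h1, h2⟩ := hq.choose_spec
    rw [hp]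
    refine congrArg Sum.inr (QuotientGroup.eq.2 ?_)
    have hmem := QuotientGroup.eq.1 h1
    refine h.mem_T hq.choose _ hmem h2 ?_
    rw [mul_inv_cancel_left, hD _ _ h1]
    exact hg
  have hpt : ∀ g, D g = E g → parent (vt g) = va g := by
    intro g hg
    have hq : ∃ g' : G, (g' : G ⧸ T) = g ∧ D g' = E g' := ⟨g, rfl, hg⟩
    have hp : parent (vt g) = va hq.choose := dif_pos hq
    obtain ⟨h1, h2⟩ := hq.choose_spec
    rw [hp]
    refine congrArg Sum.inl (QuotientGroup.eq.2 ?_)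
    have hmem := QuotientGroup.eq.1 h1
    refine h.mem_A hq.choose _ hmem h2 ?_
    rw [mul_inv_cancel_left, hE _ _ h1]
    exact hg
  have hroot : ∀ g, va g = va 1 ↔ g ∈ A := by
    intro g
    rw [eq_comm, Sum.inl.injEq, QuotientGroup.eq]
    simp
  let rank : V → ℕ := Sum.elim (Quotient.lift (fun g => 2 * D g) fun g g' hg => by
      have := hD g g' (Quotient.sound hg)
      simp [this])
    (Quotient.lift (fun g => 2 * E g + 1) fun g g' hg => by
      have := hE g g' (Quotient.sound hg)
      simp [this])
  have hra : ∀ g, rank (va g) = 2 * D g := fun g => rfl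
  have hrt : ∀ g, rank (vt g) = 2 * E g + 1 := fun g => rfl
  have hcases : ∀ v : V, v ≠ va 1 → (∃ g, v = va g ∧ E g < D g) ∨ ∃ g, v = vt g ∧ D g = E g := by
    rintro (q | q) hv
    · obtain ⟨g, rfl⟩ := QuotientGroup.mk_surjective q
      have hg : g ∉ A := fun hg => hv ((hroot g).2 hg)
      obtain ⟨a, ha, hlt⟩ := h.exists_E_lt hg
      refine Or.inl ⟨g * a, congrArg Sum.inl (QuotientGroup.eq.2 (by simpa using ha)), ?_⟩
      rwa [h.D_mul g a ha]
    · obtain ⟨g, rfl⟩ := QuotientGroup.mk_surjective q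
      obtain ⟨t, ht, hle⟩ := h.exists_D_le g
      refine Or.inr ⟨g * t, congrArg Sum.inr (QuotientGroup.eq.2 (by simpa using ht)), ?_⟩
      have := h.E_le_D (g * t)
      have := h.E_mul g t ht
      omega
  have hne : ∀ g, E g < D g → va g ≠ va 1 := fun g hg h0 => by
    have := h.D_le_E g ((hroot g).1 h0)
    omega
  have hnt : ∀ g, vt g ≠ va 1 := fun g => Sum.inr_ne_inl
  have hedge : ∀ g, (va g ≠ va 1 ∧ parent (va g) = vt g) ∨ parent (vt g) = va g := by
    intro g
    rcases (h.E_le_D g).lt_or_eq with hg | hg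
    · exact Or.inl ⟨hne g hg, hpa g hg⟩
    · exact Or.inr (hpt g hg.symm)
  have hsa : ∀ x g : G, x • va g = va (x * g) := fun _ _ => rfl
  have hst : ∀ x g : G, x • vt g = vt (x * g) := fun _ _ => rfl
  refine ⟨parent, rank, ?_, ?_, ?_, ?_, ?_⟩
  · refine dif_neg ?_
    rintro ⟨g, h1, h2⟩
    exact hne g h2 (congrArg Sum.inl h1)
  · intro v hv
    rcases hcases v hv with ⟨g, rfl, hg⟩ | ⟨g, rfl, hg⟩
    · rw [hpa g hg, hra, hrt]
      omega
    · rw [hpt g hg, hra, hrt]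
      omega
  · intro v hv
    rcases hcases v hv with ⟨g, rfl, hg⟩ | ⟨g, rfl, hg⟩
    · rw [hpa g hg]
      rfl
    · rw [hpt g hg]
      rfl
  · rintro x (q | q) <;> rfl
  · intro x v hv
    rcases hcases v hv with ⟨g, rfl, hg⟩ | ⟨g, rfl, hg⟩
    · rw [hpa g hg, hsa, hst]
      exact (hedge (x * g)).imp id fun h' => ⟨hnt _, h'⟩
    · rw [hpt g hg, hsa, hst]
      exact (hedge (x * g)).symm.imp (fun h' => ⟨hnt _, h'⟩) id

theorem strongTitsAlternative (h : IsDescent A T D E) (hA : StrongTitsAlternative A)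
    (hT : Group.IsSolvable T) : StrongTitsAlternative G := by
  obtain ⟨parent, rank, hR⟩ := h.exists_isRootedTreeAction
  obtain ⟨n, hn⟩ := isSolvable_iff_derivedSub.1 hT
  have hstabT : ∀ v : (G ⧸ A) ⊕ (G ⧸ T), v.isLeft = false →
      derivedSub (MulAction.stabilizer G v) n = ⊥ := by
    rintro (q | q) hq
    · simp at hq
    · obtain ⟨g, rfl⟩ := QuotientGroup.mk_surjective q
      have h1 : (Sum.inr (g : G ⧸ T) : (G ⧸ A) ⊕ (G ⧸ T)) = g • Sum.inr ((1 : G) : G ⧸ T) := by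
        change _ = Sum.inr ((g * 1 : G) : G ⧸ T)
        rw [mul_one]
      rw [h1]
      apply derivedSub_stabilizer_smul
      rw [← le_bot_iff, ← hn]
      refine derivedSub_mono (fun x hx => ?_) n
      have hx : (Sum.inr ((x * 1 : G) : G ⧸ T) : (G ⧸ A) ⊕ (G ⧸ T)) =
        Sum.inr ((1 : G) : G ⧸ T) := hx
      rw [Sum.inr.injEq, eq_comm, QuotientGroup.eq] at hx
      simpa using hx
  have hstabA : ∀ g : G, ∀ x ∈ MulAction.stabilizer G (Sum.inl (g : G ⧸ A) : (G ⧸ A) ⊕ (G ⧸ T)),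
      g⁻¹ * x * g ∈ A := by
    intro g x hx
    have hx : (Sum.inl ((x * g : G) : G ⧸ A) : (G ⧸ A) ⊕ (G ⧸ T)) = Sum.inl (g : G ⧸ A) := hx
    rw [Sum.inl.injEq, eq_comm, QuotientGroup.eq] at hx
    rwa [mul_assoc]
  have : Nonempty ((G ⧸ A) ⊕ (G ⧸ T)) := ⟨Sum.inl ((1 : G) : G ⧸ A)⟩
  intro Γ
  have hstab : ∀ x y : (G ⧸ A) ⊕ (G ⧸ T), x ≠ y →
      derivedSub (MulAction.stabilizer G x ⊓ MulAction.stabilizer G y) n = ⊥ := by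
    intro x y hxy
    suffices ∃ w : (G ⧸ A) ⊕ (G ⧸ T), w.isLeft = false ∧
        MulAction.stabilizer G x ⊓ MulAction.stabilizer G y ≤ MulAction.stabilizer G w by
      obtain ⟨w, hw, hle⟩ := this
      rw [← le_bot_iff, ← hstabT w hw]
      exact derivedSub_mono hle n
    rcases x with x | x
    swap
    · exact ⟨_, rfl, inf_le_left⟩
    obtain ⟨g, rfl⟩ := QuotientGroup.mk_surjective x
    rcases y with y | y
    swap
    · exact ⟨_, rfl, inf_le_right⟩
    have hx : (Sum.inl (g : G ⧸ A) : (G ⧸ A) ⊕ (G ⧸ T)) = g • Sum.inl ((1 : G) : G ⧸ A) := by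
      change _ = Sum.inl ((g * 1 : G) : G ⧸ A)
      rw [mul_one]
    set y' : (G ⧸ A) ⊕ (G ⧸ T) := Sum.inl y with hy'
    have hne : g⁻¹ • y' ≠ Sum.inl ((1 : G) : G ⧸ A) := by
      rw [Ne, inv_smul_eq_iff, ← hx]
      exact hxy.symm
    refine ⟨g • parent (g⁻¹ • y'), ?_, ?_⟩
    · rw [hR.col_smul, hR.col_parent hne, hR.col_smul, hy']
      rfl
    · rintro u ⟨h1, h2⟩
      have h1 : u • (Sum.inl (g : G ⧸ A) : (G ⧸ A) ⊕ (G ⧸ T)) = Sum.inl (g : G ⧸ A) := h1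
      have h2 : u • y' = y' := h2
      rw [hx, smul_smul, ← inv_smul_eq_iff, smul_smul] at h1
      have h3 := hR.smul_parent_of_smul_eq h1 hne (by
        rw [smul_smul, mul_assoc, mul_assoc, mul_inv_cancel, mul_one, mul_smul, h2])
      rw [MulAction.mem_stabilizer_iff, smul_smul, ← inv_smul_eq_iff, smul_smul]
      exact h3
  rcases hR.isTreeAction.alternative hstab Γ with h1 | h1 | ⟨x, hx⟩
  · exact Or.inl h1
  · exact Or.inr (.of_isSolvable h1)
  rcases x with x | x
  · obtain ⟨g, rfl⟩ := QuotientGroup.mk_surjective x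
    let f : Γ →* A := ((MulAut.conj g⁻¹).toMonoidHom.comp Γ.subtype).codRestrict A fun x => by
      simpa using hstabA g x (hx x.2)
    have hf : Function.Injective f := fun a b hab => by
      have h1 : MulAut.conj g⁻¹ a.1 = MulAut.conj g⁻¹ b.1 := congrArg Subtype.val hab
      exact Subtype.ext ((MulAut.conj g⁻¹).injective h1)
    have h2 := hA.of_injective f hf ⊤
    exact h2.imp (fun h => h.of_injective _ (Subgroup.subtype_injective _))
      (fun h => h.of_surjective (Subgroup.topEquiv (G := Γ)).toMonoidHom
        (Subgroup.topEquiv (G := Γ)).surjective)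
  · refine Or.inr (.of_isSolvable (isSolvable_of_le hx ?_))
    exact isSolvable_iff_derivedSub.2 ⟨n, hstabT _ rfl⟩

end IsDescent

section Triangular

variable {n : ℕ} {k : Type*} [Field k]

theorem map_mem_supported {f : MvPolynomial (Fin n) k ≃ₐ[k] MvPolynomial (Fin n) k}
    {S S' : Set (Fin n)} (h : ∀ i ∈ S, f (X i) ∈ supported k S') {P : MvPolynomial (Fin n) k}
    (hP : P ∈ supported k S) : f P ∈ supported k S' := by
  have : supported k S ≤ (supported k S').comap (f : MvPolynomial (Fin n) k →ₐ[k] _) := by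
    rw [supported_eq_adjoin_X, Algebra.adjoin_le_iff]
    rintro _ ⟨i, hi, rfl⟩
    exact h i hi
  exact this hP

theorem C_mem_supported (S : Set (Fin n)) (c : k) :
    (C c : MvPolynomial (Fin n) k) ∈ supported k S :=
  (supported k S).algebraMap_mem c

theorem map_C_eq (f : MvPolynomial (Fin n) k ≃ₐ[k] MvPolynomial (Fin n) k) (c : k) :
    f (C c) = C c :=
  f.commutes c

theorem map_supported_of_triangular {f : MvPolynomial (Fin n) k ≃ₐ[k] MvPolynomial (Fin n) k}
    (h : ∀ i, ∃ a : k, a ≠ 0 ∧ ∃ P ∈ supported k (Set.Ioi i), f (X i) = C a * X i + P)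
    (i : Fin n) {P : MvPolynomial (Fin n) k} (hP : P ∈ supported k (Set.Ioi i)) :
    f P ∈ supported k (Set.Ioi i) := by
  refine map_mem_supported (fun j hj => ?_) hP
  obtain ⟨a, -, Q, hQ, h1⟩ := h j
  rw [h1]
  refine add_mem (mul_mem (C_mem_supported _ _) (X_mem_supported.2 hj)) ?_
  exact supported_mono (Set.Ioi_subset_Ioi (le_of_lt hj)) hQ

/-- The group of triangular automorphisms of a polynomial ring. -/
noncomputable def triangular (n : ℕ) (k : Type*) [Field k] :
    Subgroup (MvPolynomial (Fin n) k ≃ₐ[k] MvPolynomial (Fin n) k) where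
  carrier := {f | ∀ i, ∃ a : k, a ≠ 0 ∧ ∃ P ∈ supported k (Set.Ioi i), f (X i) = C a * X i + P}
  mul_mem' {f g} hf hg i := by
    obtain ⟨a, ha, P, hP, h1⟩ := hf i
    obtain ⟨b, hb, Q, hQ, h2⟩ := hg i
    refine ⟨b * a, mul_ne_zero hb ha, C b * P + f Q,
      add_mem (mul_mem (C_mem_supported _ _) hP) (map_supported_of_triangular hf i hQ), ?_⟩
    rw [AlgEquiv.mul_apply, h2, map_add, map_mul, map_C_eq, h1, C_mul]
    ring
  one_mem' i := ⟨1, one_ne_zero, 0, zero_mem _, by simp⟩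
  inv_mem' {f} hf := by
    have key : ∀ i, f⁻¹ (X i) ∈ supported k (Set.Ici i) ∧
        ∃ a : k, a ≠ 0 ∧ ∃ P ∈ supported k (Set.Ioi i), f⁻¹ (X i) = C a * X i + P := by
      intro i
      induction i using WellFoundedGT.induction with
      | ind i ih =>
        obtain ⟨a, ha, P, hP, h1⟩ := hf i
        have hP' : f⁻¹ P ∈ supported k (Set.Ioi i) := map_mem_supported (fun j hj =>
          supported_mono (Set.Ici_subset_Ioi.2 hj) (ih j hj).1) hP
        have h2 := congrArg (f⁻¹ : MvPolynomial (Fin n) k ≃ₐ[k] MvPolynomial (Fin n) k) h1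
        rw [← AlgEquiv.mul_apply, inv_mul_cancel, AlgEquiv.one_apply, map_add, map_mul,
          map_C_eq] at h2
        have h3 : f⁻¹ (X i) = C a⁻¹ * X i + - C a⁻¹ * f⁻¹ P := by
          have h4 : (C a⁻¹ * C a : MvPolynomial (Fin n) k) = 1 := by
            rw [← C_mul, inv_mul_cancel₀ ha, C_1]
          linear_combination (-C a⁻¹) * h2 - f⁻¹ (X i) * h4
        have h5 := mul_mem (neg_mem (C_mem_supported (Set.Ioi i) a⁻¹)) hP'
        refine ⟨?_, a⁻¹, inv_ne_zero ha, _, h5, h3⟩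
        rw [h3]
        exact add_mem (mul_mem (C_mem_supported _ _) (X_mem_supported.2 Set.self_mem_Ici))
          (supported_mono Set.Ioi_subset_Ici_self h5)
    exact fun i => (key i).2

theorem eq_zero_of_C_mul_X_mem {S : Set (Fin n)} {i : Fin n} (hi : i ∉ S) {s : k}
    (h : C s * X i ∈ supported k S) : s = 0 := by
  by_contra hs
  refine hi (X_mem_supported (R := k).1 ?_)
  have h1 := mul_mem (C_mem_supported S s⁻¹) h
  rwa [← mul_assoc, ← C_mul, inv_mul_cancel₀ hs, C_1, one_mul] at h1

/-- The unipotent triangular automorphisms fixing the last `m` variables. -/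
noncomputable def unitriangular (n : ℕ) (k : Type*) [Field k] (m : ℕ) :
    Subgroup (MvPolynomial (Fin n) k ≃ₐ[k] MvPolynomial (Fin n) k) where
  carrier := {f | f ∈ triangular n k ∧ ∀ i : Fin n, f (X i) - X i ∈ supported k (Set.Ioi i) ∧
    (n ≤ i + m → f (X i) = X i)}
  mul_mem' {f g} hf hg := by
    refine ⟨mul_mem hf.1 hg.1, fun i => ⟨?_, fun hi => ?_⟩⟩
    · have h1 : (f * g) (X i) - X i = f (g (X i) - X i) + (f (X i) - X i) := by
        rw [AlgEquiv.mul_apply, map_sub]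
        ring
      rw [h1]
      exact add_mem (map_supported_of_triangular hf.1 i (hg.2 i).1) (hf.2 i).1
    · rw [AlgEquiv.mul_apply, (hg.2 i).2 hi, (hf.2 i).2 hi]
  one_mem' := ⟨one_mem _, fun i => ⟨by simp, fun _ => rfl⟩⟩
  inv_mem' {f} hf := by
    have hinv : ∀ p, f⁻¹ (f p) = p := fun p => f.symm_apply_apply p
    refine ⟨inv_mem hf.1, fun i => ⟨?_, fun hi => ?_⟩⟩
    · have h1 : f⁻¹ (X i) - X i = - f⁻¹ (f (X i) - X i) := by
        rw [map_sub, hinv]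
        ring
      rw [h1]
      exact neg_mem (map_supported_of_triangular (inv_mem hf.1) i (hf.2 i).1)
    · conv_lhs => rw [← (hf.2 i).2 hi]
      exact hinv _

theorem commutator_triangular_le : ⁅triangular n k, triangular n k⁆ ≤ unitriangular n k 0 := by
  rw [Subgroup.commutator_le]
  intro u hu v hv
  have hw : u * v * u⁻¹ * v⁻¹ ∈ triangular n k :=
    mul_mem (mul_mem (mul_mem hu hv) (inv_mem hu)) (inv_mem hv)
  have hmul : u * v * u⁻¹ * v⁻¹ * (v * u) = u * v := by group
  change u * v * u⁻¹ * v⁻¹ ∈ unitriangular n k 0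
  generalize u * v * u⁻¹ * v⁻¹ = w at hw hmul
  refine ⟨hw, fun i => ⟨?_, fun hi => absurd hi (by omega)⟩⟩
  obtain ⟨a, ha, P, hP, h1⟩ := hu i
  obtain ⟨b, hb, Q, hQ, h2⟩ := hv i
  obtain ⟨c, hc, R, hR, h3⟩ := hw i
  have h4 := congrArg (fun f : MvPolynomial (Fin n) k ≃ₐ[k] MvPolynomial (Fin n) k => f (X i)) hmul
  simp only [AlgEquiv.mul_apply, h1, h2, h3, map_add, map_mul, map_C_eq] at h4
  have hvP := map_supported_of_triangular hw i (map_supported_of_triangular hv i hP)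
  have huQ := map_supported_of_triangular hu i hQ
  have hwQ := map_supported_of_triangular hw i hQ
  have h5 : C (a * b * (c - 1)) * X i ∈ supported k (Set.Ioi i) := by
    have h6 : C (a * b * (c - 1)) * X i =
        C b * P + u Q - C a * C b * R - C a * w Q - w (v P) := by
      rw [C_mul, C_mul, C_sub, C_1]
      linear_combination h4
    rw [h6]
    have hC := C_mem_supported (k := k) (Set.Ioi i)
    exact sub_mem (sub_mem (sub_mem (add_mem (mul_mem (hC b) hP) huQ)
      (mul_mem (mul_mem (hC a) (hC b)) hR)) (mul_mem (hC a) hwQ)) hvP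
  have h7 := eq_zero_of_C_mul_X_mem (by simp) h5
  have h8 : c = 1 := by
    simpa [ha, hb, sub_eq_zero] using h7
  rw [h3, h8, C_1, one_mul, add_sub_cancel_left]
  exact hR

theorem map_eq_self_of_mem_supported {f : MvPolynomial (Fin n) k ≃ₐ[k] MvPolynomial (Fin n) k}
    {S : Set (Fin n)} (h : ∀ i ∈ S, f (X i) = X i) {P : MvPolynomial (Fin n) k}
    (hP : P ∈ supported k S) : f P = P := by
  have : supported k S ≤ AlgHom.equalizer (f : MvPolynomial (Fin n) k →ₐ[k] _) (AlgHom.id k _) := by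
    rw [supported_eq_adjoin_X, Algebra.adjoin_le_iff]
    rintro _ ⟨i, hi, rfl⟩
    exact h i hi
  exact this hP

theorem commutator_unitriangular_le (m : ℕ) :
    ⁅unitriangular n k m, unitriangular n k m⁆ ≤ unitriangular n k (m + 1) := by
  rw [Subgroup.commutator_le]
  intro u hu v hv
  have hw : u * v * u⁻¹ * v⁻¹ ∈ unitriangular n k m :=
    mul_mem (mul_mem (mul_mem hu hv) (inv_mem hu)) (inv_mem hv)
  refine ⟨hw.1, fun i => ⟨(hw.2 i).1, fun hi => ?_⟩⟩
  have hfix : ∀ f ∈ unitriangular n k m, ∀ P ∈ supported k (Set.Ioi i), f P = P := fun f hf P hP =>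
    map_eq_self_of_mem_supported (fun j hj => (hf.2 j).2 (by
      have : (i : ℕ) < j := hj
      omega)) hP
  have h1 := hfix u hu _ (hv.2 i).1
  have h2 := hfix v hv _ (hu.2 i).1
  have h3 : (u * v) (X i) = (v * u) (X i) := by
    rw [map_sub] at h1 h2
    simp only [AlgEquiv.mul_apply]
    linear_combination h1 - h2
  have h4 := hfix _ hw _ ((mul_mem hv hu).2 i).1
  have h5 : (u * v * u⁻¹ * v⁻¹) ((v * u) (X i)) = (u * v) (X i) := by
    rw [← AlgEquiv.mul_apply]
    congr 1
    group
  rw [map_sub, h5, h3] at h4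
  change (u * v * u⁻¹ * v⁻¹) (X i) = X i
  linear_combination -h4

theorem isSolvable_triangular (n : ℕ) (k : Type*) [Field k] :
    Group.IsSolvable (triangular n k) := by
  have key : ∀ m, m ≤ n → Group.IsSolvable (unitriangular n k (n - m)) := by
    intro m
    induction m with
    | zero =>
      intro _
      have : unitriangular n k (n - 0) = ⊥ := by
        rw [eq_bot_iff]
        intro f hf
        rw [Subgroup.mem_bot]
        apply AlgEquiv.coe_toAlgHom_injective
        apply MvPolynomial.algHom_ext
        intro i
        exact (hf.2 i).2 (by omega)
      rw [this]
      infer_instance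
    | succ m ih =>
      intro hm
      refine isSolvable_of_commutator_le (commutator_unitriangular_le _) ?_
      have : n - (m + 1) + 1 = n - m := by omega
      rw [this]
      exact ih (by omega)
  have h := key n le_rfl
  rw [Nat.sub_self] at h
  exact isSolvable_of_commutator_le commutator_triangular_le h

end Triangular

theorem isH_iff_mem_triangular {k : Type*} [Field k]
    {f : MvPolynomial (Fin 3) k ≃ₐ[k] MvPolynomial (Fin 3) k} :
    IsH k f ↔ f ∈ triangular 3 k := by
  have h0 : Set.Ioi (0 : Fin 3) = {1, 2} := by ext i; fin_cases i <;> simp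
  have h1 : Set.Ioi (1 : Fin 3) = {2} := by ext i; fin_cases i <;> simp
  have h2 : Set.Ioi (2 : Fin 3) = ∅ := by ext i; fin_cases i <;> simp
  constructor
  · rintro ⟨a, b, c, d, P₁, P₂, ha, hb, hc, hP₁, hP₂, e0, e1, e2⟩ i
    fin_cases i
    · exact ⟨a, ha, P₁, by simpa [h0] using hP₁, e0⟩
    · exact ⟨b, hb, P₂, by simpa [h1] using hP₂, e1⟩
    · exact ⟨c, hc, C d, C_mem_supported _ _, e2⟩
  · intro h
    obtain ⟨a, ha, P₁, hP₁, e0⟩ := h 0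
    obtain ⟨b, hb, P₂, hP₂, e1⟩ := h 1
    obtain ⟨c, hc, P₃, hP₃, e2⟩ := h 2
    rw [h2, supported_empty, Algebra.mem_bot] at hP₃
    obtain ⟨d, rfl⟩ := hP₃
    exact ⟨a, b, c, d, P₁, P₂, ha, hb, hc, h0 ▸ hP₁, h1 ▸ hP₂, e0, e1, e2⟩

section Degree

variable {σ k : Type*} [Field k]

theorem totalDegree_affine_le (b c d : k) (u v : MvPolynomial σ k) :
    (C b * u + C c * v + C d).totalDegree ≤ max u.totalDegree v.totalDegree := by
  have h : ∀ (s : k) (w : MvPolynomial σ k), (C s * w).totalDegree ≤ w.totalDegree := fun s w => by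
    simpa using totalDegree_mul (C s) w
  refine (totalDegree_add _ _).trans (max_le ((totalDegree_add _ _).trans
    (max_le_max (h b u) (h c v))) ?_)
  rw [totalDegree_C]
  exact Nat.zero_le _

theorem totalDegree_aeval_le (v : MvPolynomial σ k) (p : Polynomial k) :
    (Polynomial.aeval v p).totalDegree ≤ p.natDegree * v.totalDegree := by
  rw [Polynomial.aeval_eq_sum_range]
  refine totalDegree_finsetSum_le fun i hi => ?_
  refine (totalDegree_smul_le _ _).trans ((totalDegree_pow _ _).trans ?_)
  exact Nat.mul_le_mul_right _ (Nat.lt_succ_iff.1 (Finset.mem_range.1 hi))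

theorem totalDegree_aeval {v : MvPolynomial σ k} (hv : 0 < v.totalDegree) (p : Polynomial k) :
    (Polynomial.aeval v p).totalDegree = p.natDegree * v.totalDegree := by
  have hv0 : v ≠ 0 := fun h => by simp [h] at hv
  rcases Nat.eq_zero_or_pos p.natDegree with hp | hp
  · have := totalDegree_aeval_le v p
    rw [hp, zero_mul] at this ⊢
    omega
  have hp0 : p.leadingCoeff ≠ 0 := by
    rw [Polynomial.leadingCoeff_ne_zero]
    rintro rfl
    simp at hp
  have h1 : (C p.leadingCoeff * v ^ p.natDegree).totalDegree = p.natDegree * v.totalDegree := by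
    have h0 : ∀ m : ℕ, (v ^ m).totalDegree = m * v.totalDegree := by
      intro m
      induction m with
      | zero => simp
      | succ m ih => rw [pow_succ, totalDegree_mul_of_isDomain (pow_ne_zero _ hv0) hv0, ih]; ring
    rw [totalDegree_mul_of_isDomain (by simpa using hp0) (pow_ne_zero _ hv0), totalDegree_C,
      zero_add,
      h0]
  have h2 : (Polynomial.aeval v p.eraseLead).totalDegree <
      (C p.leadingCoeff * v ^ p.natDegree).totalDegree := by
    rw [h1]
    refine (totalDegree_aeval_le _ _).trans_lt (Nat.mul_lt_mul_of_pos_right ?_ hv)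
    have := p.eraseLead_natDegree_le
    omega
  have h3 : Polynomial.aeval v p =
      Polynomial.aeval v p.eraseLead + C p.leadingCoeff * v ^ p.natDegree := by
    conv_lhs => rw [← p.eraseLead_add_monomial_natDegree_leadingCoeff]
    rw [map_add, Polynomial.aeval_monomial]
    rfl
  rw [h3, totalDegree_add_eq_right_of_totalDegree_lt h2, h1]

theorem totalDegree_map_X_pos (f : MvPolynomial σ k ≃ₐ[k] MvPolynomial σ k) (i : σ) :
    0 < (f (X i)).totalDegree := by
  rw [Nat.pos_iff_ne_zero, Ne, totalDegree_eq_zero_iff_eq_C]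
  intro h
  have h1 : f (X i) = f (C (coeff 0 (f (X i)))) := h.trans (f.commutes _).symm
  have h2 := congrArg totalDegree (f.injective h1)
  rw [totalDegree_X, totalDegree_C] at h2
  omega

theorem exists_aeval_of_mem_supported_singleton {i : σ} {P : MvPolynomial σ k}
    (hP : P ∈ supported k ({i} : Set σ)) : ∃ p : Polynomial k, P = Polynomial.aeval (X i) p := by
  rw [supported_eq_adjoin_X, Set.image_singleton, Algebra.adjoin_singleton_eq_range_aeval] at hP
  obtain ⟨p, hp⟩ := hP
  exact ⟨p, hp.symm⟩

end Degree

section Affine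

variable {k : Type*} [Field k]

theorem IsB.map_supported {f : MvPolynomial (Fin 3) k ≃ₐ[k] MvPolynomial (Fin 3) k} (hf : IsB k f)
    {P : MvPolynomial (Fin 3) k} (hP : P ∈ supported k ({1, 2} : Set (Fin 3))) :
    f P ∈ supported k ({1, 2} : Set (Fin 3)) := by
  obtain ⟨a, b, c, d, b', c', d', Q, ha, hdet, hQ, e0, e1, e2⟩ := hf
  have hC := C_mem_supported (k := k) ({1, 2} : Set (Fin 3))
  have h1 : (X 1 : MvPolynomial (Fin 3) k) ∈ supported k ({1, 2} : Set (Fin 3)) :=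
    X_mem_supported.2 (by simp)
  have h2 : (X 2 : MvPolynomial (Fin 3) k) ∈ supported k ({1, 2} : Set (Fin 3)) :=
    X_mem_supported.2 (by simp)
  refine map_mem_supported (fun i hi => ?_) hP
  rcases hi with rfl | rfl
  · rw [e1]
    exact add_mem (add_mem (mul_mem (hC _) h1) (mul_mem (hC _) h2)) (hC _)
  · rw [e2]
    exact add_mem (add_mem (mul_mem (hC _) h1) (mul_mem (hC _) h2)) (hC _)

theorem IsB.mul {f g : MvPolynomial (Fin 3) k ≃ₐ[k] MvPolynomial (Fin 3) k} (hf : IsB k f)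
    (hg : IsB k g) : IsB k (f * g) := by
  have hsupp := @IsB.map_supported _ _ _ hf
  obtain ⟨a, b, c, d, b', c', d', P, ha, hdet, hP, e0, e1, e2⟩ := hf
  obtain ⟨s, t, u, v, t', u', v', Q, hs, hdet', hQ, f0, f1, f2⟩ := hg
  have hC := C_mem_supported (k := k) ({1, 2} : Set (Fin 3))
  refine ⟨s * a, t * b + u * b', t * c + u * c', t * d + u * d' + v, t' * b + u' * b',
    t' * c + u' * c', t' * d + u' * d' + v', C s * P + f Q, mul_ne_zero hs ha, ?_,
    add_mem (mul_mem (hC _) hP) (hsupp hQ), ?_, ?_, ?_⟩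
  · convert mul_ne_zero hdet hdet' using 1
    ring
  all_goals
    simp only [AlgEquiv.mul_apply, f0, f1, f2, map_add, map_mul, map_C_eq, e0, e1, e2]
    ring

theorem IsB.inv {f : MvPolynomial (Fin 3) k ≃ₐ[k] MvPolynomial (Fin 3) k} (hf : IsB k f) :
    IsB k f⁻¹ := by
  obtain ⟨a, b, c, d, b', c', d', P, ha, hdet, hP, e0, e1, e2⟩ := hf
  have hC := C_mem_supported (k := k) ({1, 2} : Set (Fin 3))
  have hinv : ∀ p, f⁻¹ (f p) = p := fun p => f.symm_apply_apply p
  have g0 := hinv (X 0)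
  have g1 := hinv (X 1)
  have g2 := hinv (X 2)
  rw [e0, map_add, map_mul, map_C_eq] at g0
  rw [e1, map_add, map_add, map_mul, map_mul, map_C_eq, map_C_eq, map_C_eq] at g1
  rw [e2, map_add, map_add, map_mul, map_mul, map_C_eq, map_C_eq, map_C_eq] at g2
  obtain ⟨δ, hδ⟩ : ∃ δ, δ * (b * c' - b' * c) = 1 := ⟨_, inv_mul_cancel₀ hdet⟩
  have hδ' : (C δ * (C b * C c' - C b' * C c) : MvPolynomial (Fin 3) k) = 1 := by
    simp only [← C_mul, ← C_sub, hδ, C_1]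
  have haa : (C a⁻¹ * C a : MvPolynomial (Fin 3) k) = 1 := by
    rw [← C_mul, inv_mul_cancel₀ ha, C_1]
  have k1 : f⁻¹ (X 1) = C (δ * c') * X 1 + C (-(δ * c)) * X 2 + C (δ * (c * d' - c' * d)) := by
    simp only [C_mul, C_neg, C_sub]
    linear_combination C δ * C c' * g1 - C δ * C c * g2 - f⁻¹ (X 1) * hδ'
  have k2 : f⁻¹ (X 2) = C (-(δ * b')) * X 1 + C (δ * b) * X 2 + C (δ * (b' * d - b * d')) := by
    simp only [C_mul, C_neg, C_sub]
    linear_combination -C δ * C b' * g1 + C δ * C b * g2 - f⁻¹ (X 2) * hδ'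
  have k0 : f⁻¹ (X 0) = C a⁻¹ * X 0 + -C a⁻¹ * f⁻¹ P := by
    linear_combination C a⁻¹ * g0 - f⁻¹ (X 0) * haa
  refine ⟨a⁻¹, δ * c', -(δ * c), _, -(δ * b'), δ * b, _, _, inv_ne_zero ha, ?_, ?_, k0, k1, k2⟩
  · intro h0
    have : δ * (δ * (b * c' - b' * c)) = 0 := by linear_combination h0
    rw [hδ, mul_one] at this
    rw [this, zero_mul] at hδ
    exact zero_ne_one hδ
  · have h1 : (X 1 : MvPolynomial (Fin 3) k) ∈ supported k ({1, 2} : Set (Fin 3)) :=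
      X_mem_supported.2 (by simp)
    have h2 : (X 2 : MvPolynomial (Fin 3) k) ∈ supported k ({1, 2} : Set (Fin 3)) :=
      X_mem_supported.2 (by simp)
    refine mul_mem (neg_mem (hC _)) (map_mem_supported (fun i hi => ?_) hP)
    rcases hi with rfl | rfl
    · rw [k1]
      exact add_mem (add_mem (mul_mem (hC _) h1) (mul_mem (hC _) h2)) (hC _)
    · rw [k2]
      exact add_mem (add_mem (mul_mem (hC _) h1) (mul_mem (hC _) h2)) (hC _)

/-- The automorphisms satisfying `IsB` form a subgroup. -/
noncomputable def groupB (k : Type*) [Field k] :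
    Subgroup (MvPolynomial (Fin 3) k ≃ₐ[k] MvPolynomial (Fin 3) k) where
  carrier := {f | IsB k f}
  mul_mem' := IsB.mul
  one_mem' := ⟨1, 1, 0, 0, 0, 1, 0, 0, one_ne_zero, by simp, zero_mem _, by simp, by simp, by simp⟩
  inv_mem' := IsB.inv

/-- The linear part of the action on the last two variables. -/
noncomputable def linearPart (f : MvPolynomial (Fin 3) k ≃ₐ[k] MvPolynomial (Fin 3) k) :
    Matrix (Fin 2) (Fin 2) k :=
  Matrix.of fun i j => coeff (Finsupp.single i.succ 1) (f (X j.succ))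

theorem linearPart_eq {f : MvPolynomial (Fin 3) k ≃ₐ[k] MvPolynomial (Fin 3) k}
    {b c d b' c' d' : k} (e1 : f (X 1) = C b * X 1 + C c * X 2 + C d)
    (e2 : f (X 2) = C b' * X 1 + C c' * X 2 + C d') : linearPart f = !![b, b'; c, c'] := by
  have hs1 : (1 : Fin 2).succ = (2 : Fin 3) := rfl
  have h0 : ∀ i : Fin 3, (0 : Fin 3 →₀ ℕ) ≠ Finsupp.single i 1 := fun i h => by
    simpa using DFunLike.congr_fun h i
  ext i j
  fin_cases i <;> fin_cases j <;>
    simp [linearPart, hs1, e1, e2, coeff_C_mul, coeff_X, coeff_C, h0, Finsupp.single_left_inj]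

/-- The action of `B` on the linear forms in the last two variables. -/
noncomputable def groupBToGL (k : Type*) [Field k] :
    groupB k →* Matrix.GeneralLinearGroup (Fin 2) k :=
  MonoidHom.toHomUnits
    { toFun := fun f => linearPart f.1
      map_one' := by
        rw [linearPart_eq (b := 1) (c := 0) (d := 0) (b' := 0) (c' := 1) (d' := 0) (by simp)
          (by simp)]
        exact Matrix.one_fin_two.symm
      map_mul' := by
        rintro ⟨f, a, b, c, d, b', c', d', P, ha, hdet, hP, e0, e1, e2⟩
          ⟨g, s, t, u, v, t', u', v', Q, hs, hdet', hQ, f0, f1, f2⟩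
        change linearPart (f * g) = linearPart f * linearPart g
        rw [linearPart_eq e1 e2, linearPart_eq f1 f2,
          linearPart_eq (f := f * g) (b := t * b + u * b') (c := t * c + u * c')
            (d := t * d + u * d' + v) (b' := t' * b + u' * b') (c' := t' * c + u' * c')
            (d' := t' * d + u' * d' + v'), Matrix.mul_fin_two]
        · congr 4 <;> ring_nf
        all_goals
          simp only [AlgEquiv.mul_apply, f1, f2, map_add, map_mul, map_C_eq, e1, e2]
          ring }

theorem strongTitsAlternative_groupB (k : Type*) [Field k] [CharZero k] :
    StrongTitsAlternative (groupB k) := by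
  refine StrongTitsAlternative.of_isSolvable_ker (groupBToGL k) ?_ (strongTitsAlternative_GL k)
  have hmem : ∀ f : (groupBToGL k).ker, (f : groupB k).1 ∈ triangular 3 k := by
    rintro ⟨⟨f, a, b, c, d, b', c', d', P, ha, hdet, hP, e0, e1, e2⟩, hf⟩
    have h1 : linearPart f = 1 := congrArg Units.val (MonoidHom.mem_ker.1 hf)
    rw [linearPart_eq e1 e2, Matrix.one_fin_two] at h1
    have hb : b = 1 := congrFun (congrFun h1 0) 0
    have hb' : b' = 0 := congrFun (congrFun h1 0) 1
    have hc : c = 0 := congrFun (congrFun h1 1) 0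
    have hc' : c' = 1 := congrFun (congrFun h1 1) 1
    subst hb hb' hc hc'
    refine isH_iff_mem_triangular.1 ⟨a, 1, 1, d', P, C d, ha, one_ne_zero, one_ne_zero, hP,
      C_mem_supported _ _, e0, ?_, ?_⟩
    · simpa using e1
    · simpa using e2
  have := isSolvable_triangular 3 k
  refine Group.isSolvable_of_isSolvable_injective
    (f := ((groupB k).subtype.comp (groupBToGL k).ker.subtype).codRestrict (triangular 3 k) hmem) ?_
  intro x y hxy
  exact Subtype.ext (Subtype.ext (congrArg (fun z : triangular 3 k => z.1) hxy))

end Affine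

theorem isDescent_Bprime (k : Type*) [Field k] :
    IsDescent ((groupB k).subgroupOf (Bprime k)) ((triangular 3 k).subgroupOf (Bprime k))
      (fun g => max (g.1 (X 1)).totalDegree (g.1 (X 2)).totalDegree)
      (fun g => (g.1 (X 2)).totalDegree) := by
  have hD : ∀ g : MvPolynomial (Fin 3) k ≃ₐ[k] MvPolynomial (Fin 3) k, ∀ a ∈ groupB k,
      max ((g * a) (X 1)).totalDegree ((g * a) (X 2)).totalDegree ≤
        max (g (X 1)).totalDegree (g (X 2)).totalDegree := by
    rintro g a ⟨_, b, c, d, b', c', d', P, -, -, -, -, e1, e2⟩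
    simp only [AlgEquiv.mul_apply, e1, e2, map_add, map_mul, map_C_eq]
    exact max_le (totalDegree_affine_le _ _ _ _ _) (totalDegree_affine_le _ _ _ _ _)
  have hE : ∀ g : MvPolynomial (Fin 3) k ≃ₐ[k] MvPolynomial (Fin 3) k, ∀ t ∈ triangular 3 k,
      ((g * t) (X 2)).totalDegree ≤ (g (X 2)).totalDegree := by
    intro g t ht
    obtain ⟨a, b, c, d, P₁, P₂, -, -, -, -, -, -, -, e2⟩ := isH_iff_mem_triangular.2 ht
    have := totalDegree_affine_le c 0 d (g (X 2)) (g (X 2))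
    simpa only [AlgEquiv.mul_apply, e2, map_add, map_mul, map_C_eq, C_0, zero_mul, add_zero,
      max_self] using this
  have hD' : ∀ g : MvPolynomial (Fin 3) k ≃ₐ[k] MvPolynomial (Fin 3) k, ∀ a ∈ groupB k,
      max ((g * a) (X 1)).totalDegree ((g * a) (X 2)).totalDegree =
        max (g (X 1)).totalDegree (g (X 2)).totalDegree := by
    intro g a ha
    refine le_antisymm (hD g a ha) ?_
    have := hD (g * a) a⁻¹ (inv_mem ha)
    rwa [mul_inv_cancel_right] at this
  refine ⟨?_, ?_, ?_, ?_, ?_, ?_, ?_⟩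
  · intro g a ha
    exact hD' g.1 a.1 ha
  · intro g t ht
    refine le_antisymm (hE g.1 t.1 ht) ?_
    have := hE (g.1 * t.1) t.1⁻¹ (inv_mem ht)
    rwa [mul_inv_cancel_right] at this
  · intro g
    exact le_max_right _ _
  · intro a ha
    have h1 := hD' 1 a.1 ha
    simp only [one_mul, AlgEquiv.one_apply, totalDegree_X, max_self] at h1
    rw [h1]
    exact totalDegree_map_X_pos _ _
  · rintro g ⟨a, haG⟩ ⟨α, b, c, d, b', c', d', P, hα, hdet, hP, e0, e1, e2⟩ h1 h2
    replace e0 : a (X 0) = C α * X 0 + P := e0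
    replace e1 : a (X 1) = C b * X 1 + C c * X 2 + C d := e1
    replace e2 : a (X 2) = C b' * X 1 + C c' * X 2 + C d' := e2
    replace h2 : ((g.1 * a) (X 2)).totalDegree <
      max (g.1 (X 1)).totalDegree (g.1 (X 2)).totalDegree := h2
    have hb' : b' = 0 := by
      by_contra hb'
      have h3 : g.1 (X 1) = C b'⁻¹ * (g.1 * a) (X 2) + C (-(b'⁻¹ * c')) * g.1 (X 2) +
          C (-(b'⁻¹ * d')) := by
        have h4 : (C b'⁻¹ * C b' : MvPolynomial (Fin 3) k) = 1 := by
          rw [← C_mul, inv_mul_cancel₀ hb', C_1]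
        simp only [AlgEquiv.mul_apply, e2, map_add, map_mul, map_C_eq, C_neg]
        linear_combination -g.1 (X 1) * h4
      have h5 := totalDegree_affine_le b'⁻¹ (-(b'⁻¹ * c')) (-(b'⁻¹ * d')) ((g.1 * a) (X 2))
        (g.1 (X 2))
      rw [← h3] at h5
      omega
    subst hb'
    have hbc : b * c' ≠ 0 := by simpa using hdet
    refine isH_iff_mem_triangular.1 ⟨α, b, c', d', P, C c * X 2 + C d, hα,
      left_ne_zero_of_mul hbc, right_ne_zero_of_mul hbc, hP, ?_, e0, ?_, ?_⟩
    · exact add_mem (mul_mem (C_mem_supported _ _) (X_mem_supported.2 rfl)) (C_mem_supported _ _)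
    · exact e1.trans (add_assoc _ _ _)
    · exact e2.trans (by simp)
  · rintro g ⟨t, htG⟩ ht h1 h2
    obtain ⟨a, b, c, d, P₁, P₂, ha, hb, hc, hP₁, hP₂, e0, e1, e2⟩ := isH_iff_mem_triangular.2 ht
    replace e0 : t (X 0) = C a * X 0 + P₁ := e0
    replace e1 : t (X 1) = C b * X 1 + P₂ := e1
    replace e2 : t (X 2) = C c * X 2 + C d := e2
    obtain ⟨p, rfl⟩ := exists_aeval_of_mem_supported_singleton hP₂
    replace h2 : max ((g.1 * t) (X 1)).totalDegree ((g.1 * t) (X 2)).totalDegree =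
      (g.1 (X 2)).totalDegree := h2
    have hpos := totalDegree_map_X_pos g.1 2
    have h3 : Polynomial.aeval (g.1 (X 2)) p =
        C 1 * (g.1 * t) (X 1) + C (-b) * g.1 (X 1) + C 0 := by
      have h4 : g.1 (Polynomial.aeval (X 2) p) = Polynomial.aeval (g.1 (X 2)) p :=
        (Polynomial.aeval_algHom_apply g.1 (X 2) p).symm
      simp only [AlgEquiv.mul_apply, e1, map_add, map_mul, map_C_eq, C_neg, C_1, C_0, h4]
      ring
    have h5 := totalDegree_affine_le 1 (-b) 0 ((g.1 * t) (X 1)) (g.1 (X 1))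
    rw [← h3, totalDegree_aeval hpos] at h5
    have h6 : p.natDegree * (g.1 (X 2)).totalDegree ≤ 1 * (g.1 (X 2)).totalDegree := by omega
    have h7 := Nat.le_of_mul_le_mul_right h6 hpos
    obtain ⟨x, y, rfl⟩ := Polynomial.exists_eq_X_add_C_of_natDegree_le_one h7
    refine ⟨a, b, x, y, 0, c, d, P₁, ha, ?_, hP₁, e0, ?_, ?_⟩
    · simpa using ⟨hb, hc⟩
    · refine e1.trans ?_
      simp [← algebraMap_eq, add_assoc]
    · exact e2.trans (by simp)
  · rw [eq_top_iff]
    have htop : (⊤ : Subgroup (Bprime k)) = Subgroup.closure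
        ((fun x : Bprime k => x.1) ⁻¹' {f | IsB k f ∨ IsH k f}) :=
      (Subgroup.closure_closure_coe_preimage).symm
    rw [htop, Subgroup.closure_le]
    rintro f (hf | hf)
    · exact Subgroup.mem_sup_left (S := (groupB k).subgroupOf (Bprime k)) hf
    · exact Subgroup.mem_sup_right (isH_iff_mem_triangular.1 hf)

/-- `B' = ⟨B ∪ H⟩`, for `k` of characteristic zero, satisfies the strong Tits
alternative. -/
theorem Bprime_strongTitsAlternative (k : Type*) [Field k] [CharZero k] :
    StrongTitsAlternative ↥(Bprime k) := by
  have hinj : ∀ S : Subgroup (MvPolynomial (Fin 3) k ≃ₐ[k] MvPolynomial (Fin 3) k),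
      Function.Injective ((Bprime k).subtype.subgroupComap S) := fun S x y hxy =>
    Subtype.ext (Subtype.ext (congrArg (fun z : S => z.1) hxy))
  refine (isDescent_Bprime k).strongTitsAlternative
    ((strongTitsAlternative_groupB k).of_injective _ (hinj _)) ?_
  have := isSolvable_triangular 3 k
  exact Group.isSolvable_of_isSolvable_injective (hinj (triangular 3 k))
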